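/- arXiv:1612.08237 — 5 statements merged into one kernel-verified Lean document; each statement's English description precedes it below -/
import Mathlib

section
/- Let Ω ⊆ ℝ^n be a bounded open set with Lipschitz boundary, s ∈ (0,1), and let E ⊆ ℝ^n be measurable. The following are equivalent: (i) E is s-minimal in Ω; (ii) P_s(E,Ω) < ∞ and P_s(E,Ω) ≤ P_s(F,Ω) for every measurable F ⊆ ℝ^n with E Δ F ⊂⊂ Ω; (iii) E is locally s-minimal in Ω, i.e. E is s-minimal in every open Ω' ⊂⊂ Ω. -/
open MeasureTheory Set Filter Topology Metric Bornology
open scoped ENNReal NNReal symmDiff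

noncomputable def Ls (n : ℕ) (s : ℝ) (A B : Set (EuclideanSpace ℝ (Fin n))) : ℝ≥0∞ :=
  ∫⁻ x in A, ∫⁻ y in B, ENNReal.ofReal (dist x y ^ (-((n : ℝ) + s)))

noncomputable def Ps (n : ℕ) (s : ℝ) (E Ω : Set (EuclideanSpace ℝ (Fin n))) : ℝ≥0∞ :=
  Ls n s (E ∩ Ω) (Eᶜ ∩ Ω) + Ls n s (E ∩ Ω) (Eᶜ \ Ω) + Ls n s (E \ Ω) (Eᶜ ∩ Ω)

def SMinimal (n : ℕ) (s : ℝ) (E Ω : Set (EuclideanSpace ℝ (Fin n))) : Prop :=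
  Ps n s E Ω < ⊤ ∧ ∀ F : Set (EuclideanSpace ℝ (Fin n)), MeasurableSet F →
    volume ((F \ Ω) ∆ (E \ Ω)) = 0 → Ps n s E Ω ≤ Ps n s F Ω

def LocSMinimal (n : ℕ) (s : ℝ) (E Ω : Set (EuclideanSpace ℝ (Fin n))) : Prop :=
  ∀ Ω' : Set (EuclideanSpace ℝ (Fin n)), IsOpen Ω' → IsCompact (closure Ω') →
    closure Ω' ⊆ Ω → SMinimal n s E Ω'

def HasLipschitzBoundary {n : ℕ} (Ω : Set (EuclideanSpace ℝ (Fin n))) : Prop :=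
  ∀ x ∈ frontier Ω, ∃ (U : Set (EuclideanSpace ℝ (Fin n)))
    (_ : IsOpen U) (_ : x ∈ U)
    (L : EuclideanSpace ℝ (Fin n) ≃ₗᵢ[ℝ] WithLp 2 (EuclideanSpace ℝ (Fin (n - 1)) × ℝ))
    (φ : EuclideanSpace ℝ (Fin (n - 1)) → ℝ) (K : NNReal),
    LipschitzWith K φ ∧
    Ω ∩ U = {y ∈ U | φ (WithLp.equiv 2 _ (L y)).1 < (WithLp.equiv 2 _ (L y)).2} ∧
    frontier Ω ∩ U = {y ∈ U | φ (WithLp.equiv 2 _ (L y)).1 = (WithLp.equiv 2 _ (L y)).2}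

/-!
For a bounded open `Ω` with Lipschitz boundary the weight `d(x, Ωᶜ)^{-s}` is integrable over `Ω`,
because `s < 1`. Hence `L_s(Ω, Ωᶜ) < ∞`. Moreover, as `d(·, Ωᶜ)` is `1`-Lipschitz, the levels
`0 < t < ε` of this function that separate two points `x`, `y` form a set of measure at most
`min(ε, |x - y|)`. Averaging over the levels therefore yields `t_k → 0` for which the interaction of
`Ω \ A_k` with `A_k = {x | t_k < d(x, Ωᶜ)}` tends to zero.

A competitor `F` that agrees with `E` outside `Ω` may thus be replaced, at a vanishing cost, by `F`
inside `A_k` and `E` outside, which is a compactly supported perturbation of `E`. If `E` is only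
locally minimal, comparing it with `E \ A_k` in `A_k` bounds `P_s(E, A_k)`, and Fatou's lemma gives
`P_s(E, Ω) ≤ L_s(Ω, Ωᶜ) < ∞`.
-/

section CrossPairs

variable {X : Type*} {A E F Ω Ω' : Set X}

/-- The ordered pairs `(x, y)` with `x ∈ E`, `y ∉ E` that are seen from `Ω`, i.e. at least one of
whose entries lies in `Ω`. The fractional perimeter `P_s(E, Ω)` is the mass of this set under the
measure `|x - y|^{-(n+s)} dx dy`. -/
def crossPairs (E Ω : Set X) : Set (X × X) :=
  (E ×ˢ Eᶜ) \ (Ωᶜ ×ˢ Ωᶜ)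

lemma mem_crossPairs {p : X × X} :
    p ∈ crossPairs E Ω ↔ (p.1 ∈ E ∧ p.2 ∉ E) ∧ (p.1 ∈ Ω ∨ p.2 ∈ Ω) := by
  simp only [crossPairs, Set.mem_sdiff, mem_prod, mem_compl_iff]
  tauto

lemma crossPairs_mono (h : Ω' ⊆ Ω) : crossPairs E Ω' ⊆ crossPairs E Ω :=
  sdiff_subset_sdiff_right (prod_mono (compl_subset_compl.2 h) (compl_subset_compl.2 h))

lemma crossPairs_sdiff_self_subset (hA : A ⊆ Ω) :
    crossPairs (E \ A) A ⊆ Ωᶜ ×ˢ Ω ∪ (Ω \ A) ×ˢ A := by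
  rintro ⟨x, y⟩
  have hy := @hA y
  simp only [mem_crossPairs, mem_union, mem_prod, Set.mem_sdiff, mem_compl_iff]
  tauto

variable [MeasurableSpace X]

lemma measurableSet_crossPairs (hE : MeasurableSet E) (hΩ : MeasurableSet Ω) :
    MeasurableSet (crossPairs E Ω) :=
  (hE.prod hE.compl).diff (hΩ.compl.prod hΩ.compl)

variable {μ : Measure X} {κ : Measure (X × X)}

lemma ae_fst_and_snd_of_ae [SFinite μ] (hκ : κ ≪ μ.prod μ) {P : X → Prop}
    (h : ∀ᵐ x ∂μ, P x) : ∀ᵐ p ∂κ, P p.1 ∧ P p.2 :=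
  hκ.ae_le ((Measure.quasiMeasurePreserving_fst.ae h).and
    (Measure.quasiMeasurePreserving_snd.ae h))

lemma crossPairs_sdiff_crossPairs_ae_eq [SFinite μ] (hκ : κ ≪ μ.prod μ)
    (hEF : (F \ Ω' : Set X) =ᵐ[μ] (E \ Ω' : Set X)) :
    (crossPairs F Ω \ crossPairs F Ω' : Set (X × X)) =ᵐ[κ]
      (crossPairs E Ω \ crossPairs E Ω' : Set (X × X)) := by
  filter_upwards [ae_fst_and_snd_of_ae hκ hEF.mem_iff] with ⟨x, y⟩ ⟨hx, hy⟩
  apply propext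
  change (x, y) ∈ crossPairs F Ω \ crossPairs F Ω' ↔ (x, y) ∈ crossPairs E Ω \ crossPairs E Ω'
  grind [mem_crossPairs]

lemma measure_crossPairs_le_iff_of_subset [SFinite μ] (hκ : κ ≪ μ.prod μ)
    (hE : MeasurableSet E) (hF : MeasurableSet F) (hΩ' : MeasurableSet Ω') (h : Ω' ⊆ Ω)
    (hEF : (F \ Ω' : Set X) =ᵐ[μ] (E \ Ω' : Set X)) (hfin : κ (crossPairs E Ω) ≠ ⊤) :
    κ (crossPairs E Ω) ≤ κ (crossPairs F Ω) ↔ κ (crossPairs E Ω') ≤ κ (crossPairs F Ω') := by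
  rw [← measure_inter_add_sdiff (crossPairs E Ω) (measurableSet_crossPairs hE hΩ'),
    ← measure_inter_add_sdiff (crossPairs F Ω) (measurableSet_crossPairs hF hΩ'),
    inter_eq_right.2 (crossPairs_mono h), inter_eq_right.2 (crossPairs_mono h),
    measure_congr (crossPairs_sdiff_crossPairs_ae_eq hκ hEF),
    ENNReal.add_le_add_iff_right (measure_ne_top_of_subset sdiff_subset hfin)]

lemma measure_crossPairs_ite_le [SFinite μ] (hκ : κ ≪ μ.prod μ)
    (hswap : MeasurePreserving Prod.swap κ κ) (hA : MeasurableSet A) (hΩ : MeasurableSet Ω)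
    (hAΩ : A ⊆ Ω) (hEF : (F \ Ω : Set X) =ᵐ[μ] (E \ Ω : Set X)) :
    κ (crossPairs (A.ite F E) Ω) ≤
      κ (crossPairs F Ω) + κ (crossPairs E (Ω \ A)) + 2 * κ ((Ω \ A) ×ˢ A) := by
  have hsub : crossPairs (A.ite F E) Ω ≤ᵐ[κ]
      (crossPairs F Ω ∪ crossPairs E (Ω \ A) ∪ ((Ω \ A) ×ˢ A ∪ A ×ˢ (Ω \ A)) : Set (X × X)) := by
    filter_upwards [ae_fst_and_snd_of_ae hκ hEF.mem_iff] with ⟨x, y⟩ ⟨hx, hy⟩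
    change (x, y) ∈ crossPairs (A.ite F E) Ω →
      (x, y) ∈ crossPairs F Ω ∪ crossPairs E (Ω \ A) ∪ ((Ω \ A) ×ˢ A ∪ A ×ˢ (Ω \ A))
    grind [mem_crossPairs, Set.ite]
  have hsymm : κ (A ×ˢ (Ω \ A)) = κ ((Ω \ A) ×ˢ A) := by
    rw [← preimage_swap_prod, hswap.measure_preimage ((hΩ.diff hA).prod hA).nullMeasurableSet]
  calc κ (crossPairs (A.ite F E) Ω)
      ≤ κ (crossPairs F Ω ∪ crossPairs E (Ω \ A) ∪ ((Ω \ A) ×ˢ A ∪ A ×ˢ (Ω \ A))) :=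
        measure_mono_ae hsub
    _ ≤ κ (crossPairs F Ω) + κ (crossPairs E (Ω \ A)) +
          (κ ((Ω \ A) ×ˢ A) + κ (A ×ˢ (Ω \ A))) := by
        refine (measure_union_le _ _).trans ?_
        gcongr <;> exact measure_union_le _ _
    _ = _ := by rw [hsymm, two_mul]

end CrossPairs

lemma measure_le_of_tendsto_of_eventually_mem {X : Type*} [MeasurableSpace X] {μ : Measure X}
    {s : Set X} {t : ℕ → Set X} (hst : ∀ x ∈ s, ∀ᶠ k in atTop, x ∈ t k)
    {u : ℕ → ℝ≥0∞} {c : ℝ≥0∞} (hu : ∀ k, μ (t k) ≤ u k) (hc : Tendsto u atTop (𝓝 c)) :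
    μ s ≤ c := by
  have hmono : Monotone fun N : ℕ => ⋂ k ≥ N, t k := fun M N hMN =>
    biInter_subset_biInter_left fun k hk => hMN.trans hk
  calc μ s ≤ μ (⋃ N, ⋂ k ≥ N, t k) := measure_mono fun x hx => by
        simpa only [mem_iUnion, mem_iInter] using eventually_atTop.1 (hst x hx)
    _ = ⨆ N, μ (⋂ k ≥ N, t k) := hmono.measure_iUnion
    _ ≤ c := iSup_le fun N => ge_of_tendsto hc <| (eventually_ge_atTop N).mono fun k hk =>
        (measure_mono (biInter_subset_of_mem hk)).trans (hu k)

/-- A sequence of open sets compactly contained in `Ω` and exhausting it, whose nonlocal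
interaction, measured by `κ`, with the remaining layer `Ω \ A k` tends to zero. -/
structure IsVanishingExhaustion {X : Type*} [TopologicalSpace X] [MeasurableSpace X]
    (κ : Measure (X × X)) (Ω : Set X) (A : ℕ → Set X) : Prop where
  isOpen (k : ℕ) : IsOpen (A k)
  isCompact_closure (k : ℕ) : IsCompact (closure (A k))
  closure_subset (k : ℕ) : closure (A k) ⊆ Ω
  eventually_mem : ∀ x ∈ Ω, ∀ᶠ k in atTop, x ∈ A k
  tendsto_layer : Tendsto (fun k => κ ((Ω \ A k) ×ˢ A k)) atTop (𝓝 0)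

namespace IsVanishingExhaustion

variable {X : Type*} [TopologicalSpace X] [MeasurableSpace X] {κ : Measure (X × X)}
  {E Ω : Set X} {A : ℕ → Set X}

lemma subset (hA : IsVanishingExhaustion κ Ω A) (k : ℕ) : A k ⊆ Ω :=
  subset_closure.trans (hA.closure_subset k)

lemma tendsto_measure_crossPairs_sdiff [OpensMeasurableSpace X]
    (hA : IsVanishingExhaustion κ Ω A) (hE : MeasurableSet E) (hΩ : MeasurableSet Ω)
    (hfin : κ (crossPairs E Ω) ≠ ⊤) :
    Tendsto (fun k => κ (crossPairs E (Ω \ A k))) atTop (𝓝 0) := by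
  have hout (x : X) : ∀ᶠ k in atTop, x ∉ Ω \ A k := by
    by_cases hx : x ∈ Ω
    · exact (hA.eventually_mem x hx).mono fun k hk h => h.2 hk
    · exact Eventually.of_forall fun k h => hx h.1
  rw [← measure_empty (μ := κ)]
  refine tendsto_measure_of_tendsto_indicator atTop
    (fun k => measurableSet_crossPairs hE (hΩ.diff (hA.isOpen k).measurableSet))
    (measurableSet_crossPairs hE hΩ) hfin
    (Eventually.of_forall fun k => crossPairs_mono sdiff_subset) fun p => ?_
  filter_upwards [hout p.1, hout p.2] with k h₁ h₂
  simp only [mem_crossPairs, h₁, h₂, or_self, and_false, mem_empty_iff_false]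

end IsVanishingExhaustion

section FractionalInteraction

variable {V : Type*} [NormedAddCommGroup V] [NormedSpace ℝ V]

/-- The fractional kernel `|x - y|^{-(n+s)}`, where `n` is the dimension of the space. -/
noncomputable def fracKernel (s : ℝ) (x y : V) : ℝ≥0∞ :=
  ENNReal.ofReal (dist x y ^ (-((Module.finrank ℝ V : ℝ) + s)))

lemma fracKernel_comm (s : ℝ) (x y : V) : fracKernel s x y = fracKernel s y x := by
  rw [fracKernel, dist_comm, fracKernel]

lemma fracKernel_add_left_self (s : ℝ) (x z : V) : fracKernel s x (x + z) = fracKernel s 0 z := by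
  simp only [fracKernel, dist_self_add_right, dist_zero_left]

lemma fracKernel_zero_smul {s ε : ℝ} (hε : 0 < ε) (z : V) :
    fracKernel s 0 (ε • z) =
      ENNReal.ofReal (ε ^ (-((Module.finrank ℝ V : ℝ) + s))) * fracKernel s 0 z := by
  simp only [fracKernel, dist_zero_left, norm_smul, Real.norm_of_nonneg hε.le]
  rw [Real.mul_rpow hε.le (norm_nonneg z), ENNReal.ofReal_mul (by positivity)]

variable [MeasurableSpace V]

/-- The measure `|x - y|^{-(n+s)} dμ(x) dμ(y)` on pairs of points, whose value on `A ×ˢ B` is the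
interaction `L_s(A, B)`. -/
noncomputable def fracInteraction (μ : Measure V) (s : ℝ) : Measure (V × V) :=
  (μ.prod μ).withDensity fun p => fracKernel s p.1 p.2

/-- The truncated kernel mass `∫ min(1, |z|) |z|^{-(n+s)} dμ(z)`; it is finite for `0 < s < 1`, and
by scaling it controls all the truncated kernels `min(ε, |x - y|) |x - y|^{-(n+s)}`. -/
noncomputable def truncKernelMass (μ : Measure V) (s : ℝ) : ℝ≥0∞ :=
  ∫⁻ z, ENNReal.ofReal (min 1 ‖z‖) * fracKernel s 0 z ∂μ

variable (μ : Measure V) {s : ℝ}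

lemma fracInteraction_absolutelyContinuous : fracInteraction μ s ≪ μ.prod μ :=
  withDensity_absolutelyContinuous _ _

instance [SFinite μ] : SFinite (fracInteraction μ s) := by
  unfold fracInteraction
  infer_instance

variable [BorelSpace V]

variable (s) in
lemma measurable_fracKernel_right (x : V) : Measurable (fracKernel s x) :=
  ((continuous_const.dist continuous_id).measurable.pow_const _).ennreal_ofReal

variable (s) in
lemma measurable_fracKernel [SecondCountableTopology V] :
    Measurable fun p : V × V => fracKernel s p.1 p.2 :=
  ((measurable_fst.dist measurable_snd).pow_const _).ennreal_ofReal

section SecondCountable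

variable [SecondCountableTopology V] [SFinite μ]

lemma setLIntegral_fracInteraction_prod {f : V × V → ℝ≥0∞} (hf : Measurable f) {A B : Set V}
    (hA : MeasurableSet A) (hB : MeasurableSet B) :
    ∫⁻ p in A ×ˢ B, f p ∂fracInteraction μ s =
      ∫⁻ x in A, ∫⁻ y in B, f (x, y) * fracKernel s x y ∂μ ∂μ := by
  have hk := measurable_fracKernel (V := V) s
  rw [fracInteraction, restrict_withDensity (hA.prod hB),
    lintegral_withDensity_eq_lintegral_mul _ hk hf, ← Measure.prod_restrict,
    lintegral_prod _ (hk.mul hf).aemeasurable]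
  simp only [Pi.mul_apply, mul_comm]

lemma fracInteraction_prod {A B : Set V} (hA : MeasurableSet A) (hB : MeasurableSet B) :
    fracInteraction μ s (A ×ˢ B) = ∫⁻ x in A, ∫⁻ y in B, fracKernel s x y ∂μ ∂μ := by
  simpa only [setLIntegral_one, one_mul] using
    setLIntegral_fracInteraction_prod μ measurable_const (f := fun _ => 1) hA hB

lemma measurePreserving_swap_fracInteraction :
    MeasurePreserving Prod.swap (fracInteraction μ s) (fracInteraction μ s) := by
  refine ⟨measurable_swap, Measure.ext fun t ht => ?_⟩
  rw [Measure.map_apply measurable_swap ht, fracInteraction,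
    withDensity_apply _ (measurable_swap ht), withDensity_apply _ ht,
    ← (Measure.measurePreserving_swap (μ := μ) (ν := μ)).setLIntegral_comp_preimage ht
      (measurable_fracKernel s)]
  simp only [Prod.fst_swap, Prod.snd_swap, fracKernel_comm s]

end SecondCountable

variable [FiniteDimensional ℝ V] [μ.IsAddHaarMeasure]

lemma integrable_min_one_norm_mul_norm_rpow (hs : s ∈ Ioo (0 : ℝ) 1) :
    Integrable (fun z : V => min 1 ‖z‖ * ‖z‖ ^ (-((Module.finrank ℝ V : ℝ) + s))) μ := by
  rcases subsingleton_or_nontrivial V with hV | hV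
  · refine (integrable_zero V ℝ μ).congr (Eventually.of_forall fun z => ?_)
    simp only [Subsingleton.elim z 0, norm_zero, zero_le_one, min_eq_right, zero_mul,
      Pi.zero_apply]
  set n := Module.finrank ℝ V with hn
  have hpow (r : ℝ) : r ^ (n - 1) = r ^ ((n : ℝ) - 1) := by
    rw [← Real.rpow_natCast, Nat.cast_sub Module.finrank_pos, Nat.cast_one]
  rw [integrable_fun_norm_addHaar μ (f := fun r : ℝ => min 1 r * r ^ (-((n : ℝ) + s))),
    ← Ioc_union_Ioi_eq_Ioi zero_le_one]
  refine IntegrableOn.union ?near_zero ?near_infinity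
  case near_zero =>
    have hint : IntegrableOn (fun r : ℝ => r ^ (-s)) (Ioc 0 1) := by
      rw [integrableOn_Ioc_iff_integrableOn_Ioo,
        intervalIntegral.integrableOn_Ioo_rpow_iff zero_lt_one]
      linarith [hs.2]
    refine hint.congr_fun (fun r hr01 => ?_) measurableSet_Ioc
    obtain ⟨hr, hr1⟩ := hr01
    dsimp only
    rw [← hn, hpow, min_eq_right hr1, smul_eq_mul, mul_comm r, ← Real.rpow_add_one hr.ne',
      ← Real.rpow_add hr]
    congr 1
    ring
  case near_infinity =>
    have hint : IntegrableOn (fun r : ℝ => r ^ (-1 - s)) (Ioi 1) :=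
      integrableOn_Ioi_rpow_of_lt (by linarith [hs.1]) zero_lt_one
    refine hint.congr_fun (fun r (hr1 : 1 < r) => ?_) measurableSet_Ioi
    have hr : 0 < r := zero_lt_one.trans hr1
    dsimp only
    rw [← hn, hpow, min_eq_left hr1.le, one_mul, smul_eq_mul, ← Real.rpow_add hr]
    congr 1
    ring

lemma truncKernelMass_lt_top (hs : s ∈ Ioo (0 : ℝ) 1) : truncKernelMass μ s < ⊤ := by
  refine lt_of_eq_of_lt (lintegral_congr fun z => ?_)
    (integrable_min_one_norm_mul_norm_rpow μ hs).lintegral_lt_top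
  rw [fracKernel, dist_zero_left, ENNReal.ofReal_mul (by positivity)]

lemma lintegral_min_norm_mul_fracKernel {ε : ℝ} (hε : 0 < ε) :
    ∫⁻ z, ENNReal.ofReal (min ε ‖z‖) * fracKernel s 0 z ∂μ =
      ENNReal.ofReal (ε ^ (1 - s)) * truncKernelMass μ s := by
  set n := Module.finrank ℝ V
  have hmin (z : V) : ENNReal.ofReal (min ε ‖ε • z‖) =
      ENNReal.ofReal ε * ENNReal.ofReal (min 1 ‖z‖) := by
    rw [← ENNReal.ofReal_mul hε.le, mul_min_of_nonneg _ _ hε.le, mul_one, norm_smul,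
      Real.norm_of_nonneg hε.le]
  have hpow : ε ^ n * (ε * ε ^ (-((n : ℝ) + s))) = ε ^ (1 - s) := by
    rw [mul_comm ε, ← Real.rpow_add_one hε.ne', ← Real.rpow_natCast, ← Real.rpow_add hε]
    congr 1
    ring
  have hμ : μ = ENNReal.ofReal (ε ^ n) • Measure.map (ε • ·) μ := by
    rw [Measure.map_addHaar_smul μ hε.ne', smul_smul, ← ENNReal.ofReal_mul (by positivity),
      abs_of_pos (by positivity), mul_inv_cancel₀ (by positivity), ENNReal.ofReal_one, one_smul]
  have hker (z : V) : ENNReal.ofReal (min ε ‖ε • z‖) * fracKernel s 0 (ε • z) =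
      ENNReal.ofReal (ε * ε ^ (-((n : ℝ) + s))) *
        (ENNReal.ofReal (min 1 ‖z‖) * fracKernel s 0 z) := by
    rw [hmin, fracKernel_zero_smul hε, ENNReal.ofReal_mul hε.le]
    ring
  have hmeas : Measurable fun z : V => ENNReal.ofReal (min ε ‖z‖) * fracKernel s 0 z :=
    (measurable_const.min measurable_norm).ennreal_ofReal.mul (measurable_fracKernel_right s 0)
  calc ∫⁻ z, ENNReal.ofReal (min ε ‖z‖) * fracKernel s 0 z ∂μ
      = ENNReal.ofReal (ε ^ n) *
          ∫⁻ z, ENNReal.ofReal (min ε ‖ε • z‖) * fracKernel s 0 (ε • z) ∂μ := by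
        conv_lhs => rw [hμ]
        rw [lintegral_smul_measure, smul_eq_mul,
          lintegral_map hmeas (measurable_const_smul ε)]
    _ = ENNReal.ofReal (ε ^ (1 - s)) * truncKernelMass μ s := by
        simp_rw [hker]
        rw [lintegral_const_mul' _ _ ENNReal.ofReal_ne_top, ← mul_assoc,
          ← ENNReal.ofReal_mul (by positivity), hpow, truncKernelMass]

lemma lintegral_min_dist_mul_fracKernel {ε : ℝ} (hε : 0 < ε) (x : V) :
    ∫⁻ y, ENNReal.ofReal (min ε (dist x y)) * fracKernel s x y ∂μ =
      ENNReal.ofReal (ε ^ (1 - s)) * truncKernelMass μ s := by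
  rw [← lintegral_min_norm_mul_fracKernel μ hε, ← lintegral_add_left_eq_self _ x]
  simp only [dist_self_add_right, fracKernel_add_left_self]

lemma setLIntegral_fracKernel_le {d : ℝ} (hd : 0 < d) {x : V} {B : Set V}
    (hB : ∀ y ∈ B, d ≤ dist x y) (hBm : MeasurableSet B) :
    ∫⁻ y in B, fracKernel s x y ∂μ ≤ ENNReal.ofReal (d ^ (-s)) * truncKernelMass μ s := by
  have hdinv : ENNReal.ofReal d⁻¹ * ENNReal.ofReal d = 1 := by
    rw [← ENNReal.ofReal_mul (by positivity), inv_mul_cancel₀ hd.ne', ENNReal.ofReal_one]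
  calc ∫⁻ y in B, fracKernel s x y ∂μ
      = ∫⁻ y in B, ENNReal.ofReal d⁻¹ *
          (ENNReal.ofReal (min d (dist x y)) * fracKernel s x y) ∂μ :=
        setLIntegral_congr_fun hBm fun y hy => by
          rw [min_eq_left (hB y hy), ← mul_assoc, hdinv, one_mul]
    _ ≤ ENNReal.ofReal d⁻¹ *
          ∫⁻ y, ENNReal.ofReal (min d (dist x y)) * fracKernel s x y ∂μ := by
        rw [lintegral_const_mul' _ _ ENNReal.ofReal_ne_top]
        gcongr
        exact Measure.restrict_le_self
    _ = ENNReal.ofReal (d ^ (-s)) * truncKernelMass μ s := by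
        rw [lintegral_min_dist_mul_fracKernel μ hd, ← mul_assoc,
          ← ENNReal.ofReal_mul (by positivity), ← Real.rpow_neg_one, ← Real.rpow_add hd,
          neg_add_eq_sub, sub_sub_cancel_left]

end FractionalInteraction

section Coarea

variable {X : Type*} {f : X → ℝ} {Ω : Set X} {ε : ℝ}

/-- The triples `(t, x, y)` such that the level `t` of `f` separates `x ∈ Ω` from the higher
point `y`. -/
def separatingTriples (f : X → ℝ) (Ω : Set X) : Set (ℝ × (X × X)) :=
  {q | q.2 ∈ (Ω \ {x | q.1 < f x}) ×ˢ {x | q.1 < f x}}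

lemma measurableSet_separatingTriples [MeasurableSpace X] (hf : Measurable f)
    (hΩ : MeasurableSet Ω) :
    MeasurableSet (separatingTriples f Ω) :=
  ((measurable_snd.fst hΩ).diff
    (measurableSet_lt measurable_fst (hf.comp measurable_snd.fst))).inter
    (measurableSet_lt measurable_fst (hf.comp measurable_snd.snd))

variable [PseudoMetricSpace X]

lemma volume_Ioo_inter_separatingTriples_le (hf : LipschitzWith 1 f) (p : X × X) :
    volume (Ioo 0 ε ∩ {t | (t, p) ∈ separatingTriples f Ω}) ≤
      ((Ω ∩ {x | f x < ε}) ×ˢ univ).indicator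
        (fun p => ENNReal.ofReal (min ε (dist p.1 p.2))) p := by
  obtain ⟨x, y⟩ := p
  by_cases hx : x ∈ Ω ∩ {x | f x < ε}
  · have hsub : Ioo 0 ε ∩ {t | (t, x, y) ∈ separatingTriples f Ω} ⊆
        Ioo 0 ε ∩ Ico (f x) (f y) :=
      fun t ht => ⟨ht.1, not_lt.1 ht.2.1.2, ht.2.2⟩
    have hdist : f y - f x ≤ dist x y := by
      simpa only [NNReal.coe_one, one_mul, dist_comm y x] using
        (le_abs_self _).trans (hf.dist_le_mul y x)
    rw [indicator_of_mem (mem_prod.2 ⟨hx, mem_univ y⟩), ENNReal.ofReal_min]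
    refine (measure_mono hsub).trans (le_min ?_ ?_)
    · refine (measure_mono inter_subset_left).trans ?_
      rw [Real.volume_Ioo, sub_zero]
    · refine (measure_mono inter_subset_right).trans ?_
      rw [Real.volume_Ico]
      exact ENNReal.ofReal_le_ofReal hdist
  · have hempty : Ioo 0 ε ∩ {t | (t, x, y) ∈ separatingTriples f Ω} = ∅ :=
      eq_empty_of_forall_notMem fun t ht =>
        hx ⟨ht.2.1.1, (not_lt.1 ht.2.1.2).trans_lt ht.1.2⟩
    rw [hempty, measure_empty]
    exact zero_le

variable [MeasurableSpace X] [OpensMeasurableSpace X]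

variable {κ : Measure (X × X)} [SFinite κ]

lemma setLIntegral_measure_layer_le (hf : LipschitzWith 1 f) (hΩ : MeasurableSet Ω) :
    ∫⁻ t in Ioo 0 ε, κ ((Ω \ {x | t < f x}) ×ˢ {x | t < f x}) ≤
      ∫⁻ p in (Ω ∩ {x | f x < ε}) ×ˢ univ, ENNReal.ofReal (min ε (dist p.1 p.2)) ∂κ := by
  have hfm : Measurable f := hf.continuous.measurable
  have hQ := measurableSet_separatingTriples hfm hΩ
  calc ∫⁻ t in Ioo 0 ε, κ (Prod.mk t ⁻¹' separatingTriples f Ω)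
      = ∫⁻ p, volume.restrict (Ioo 0 ε) ((·, p) ⁻¹' separatingTriples f Ω) ∂κ := by
        rw [← Measure.prod_apply hQ, Measure.prod_apply_symm hQ]
    _ ≤ ∫⁻ p, ((Ω ∩ {x | f x < ε}) ×ˢ univ).indicator
          (fun p => ENNReal.ofReal (min ε (dist p.1 p.2))) p ∂κ := by
        refine lintegral_mono fun p => ?_
        rw [Measure.restrict_apply (measurable_prodMk_right hQ), inter_comm]
        exact volume_Ioo_inter_separatingTriples_le hf p
    _ = _ := lintegral_indicator
        ((hΩ.inter (measurableSet_lt hfm measurable_const)).prod MeasurableSet.univ) _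

lemma exists_measure_layer_le (hf : LipschitzWith 1 f) (hΩ : MeasurableSet Ω) (hε : 0 < ε) :
    ∃ t ∈ Ioo 0 ε, ENNReal.ofReal ε * κ ((Ω \ {x | t < f x}) ×ˢ {x | t < f x}) ≤
      ∫⁻ p in (Ω ∩ {x | f x < ε}) ×ˢ univ, ENNReal.ofReal (min ε (dist p.1 p.2)) ∂κ := by
  have hvol : volume (Ioo 0 ε) = ENNReal.ofReal ε := by rw [Real.volume_Ioo, sub_zero]
  have hε0 : ENNReal.ofReal ε ≠ 0 := (ENNReal.ofReal_pos.2 hε).ne'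
  obtain ⟨t, ht, hle⟩ := exists_le_setLAverage (μ := volume) (s := Ioo 0 ε)
    (f := fun t => κ (Prod.mk t ⁻¹' separatingTriples f Ω)) (hvol ▸ hε0)
    (hvol ▸ ENNReal.ofReal_ne_top)
    (measurable_measure_prodMk_left
      (measurableSet_separatingTriples hf.continuous.measurable hΩ)).aemeasurable
  rw [setLAverage_eq, hvol, ENNReal.le_div_iff_mul_le (.inl hε0) (.inl ENNReal.ofReal_ne_top),
    mul_comm] at hle
  exact ⟨t, ht, hle.trans (setLIntegral_measure_layer_le hf hΩ)⟩

end Coarea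

section BoundaryWeight

variable {X : Type*} [PseudoMetricSpace X] {Ω : Set X}

/-- The weight `d(x, Ωᶜ)^{-s}`. Its integral over `Ω` controls the interaction of `Ω` with its
complement and the interactions across the level sets of the distance function. -/
noncomputable def boundaryWeight (s : ℝ) (Ω : Set X) (x : X) : ℝ≥0∞ :=
  ENNReal.ofReal (infDist x Ωᶜ ^ (-s))

/-- The points of `Ω` at distance greater than `t ≥ 0` from the complement of `Ω`. -/
def innerLevel (Ω : Set X) (t : ℝ) : Set X :=
  {x | t < infDist x Ωᶜ}

lemma infDist_compl_pos (hΩ : IsOpen Ω) (hne : Ωᶜ.Nonempty) {x : X} (hx : x ∈ Ω) :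
    0 < infDist x Ωᶜ :=
  (hΩ.isClosed_compl.notMem_iff_infDist_pos hne).1 (notMem_compl_iff.2 hx)

lemma boundaryWeight_le_of_le_infDist {s d : ℝ} {x : X} (hs : 0 ≤ s) (hd : 0 < d)
    (hdx : d ≤ infDist x Ωᶜ) : boundaryWeight s Ω x ≤ ENNReal.ofReal (d ^ (-s)) :=
  ENNReal.ofReal_le_ofReal (Real.rpow_le_rpow_of_nonpos hd hdx (neg_nonpos.2 hs))

lemma le_boundaryWeight_of_infDist_le {s d : ℝ} {x : X} (hs : 0 ≤ s) (hx : 0 < infDist x Ωᶜ)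
    (hdx : infDist x Ωᶜ ≤ d) : ENNReal.ofReal (d ^ (-s)) ≤ boundaryWeight s Ω x :=
  ENNReal.ofReal_le_ofReal (Real.rpow_le_rpow_of_nonpos hx hdx (neg_nonpos.2 hs))

lemma isOpen_innerLevel (Ω : Set X) (t : ℝ) : IsOpen (innerLevel Ω t) :=
  isOpen_lt continuous_const (continuous_infDist_pt _)

lemma closure_innerLevel_subset {t : ℝ} (ht : 0 < t) : closure (innerLevel Ω t) ⊆ Ω := by
  have hcl : closure (innerLevel Ω t) ⊆ {x | t ≤ infDist x Ωᶜ} :=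
    closure_lt_subset_le continuous_const (continuous_infDist_pt _)
  refine hcl.trans fun x (hx : t ≤ infDist x Ωᶜ) => of_not_not fun hxΩ => ?_
  exact (ht.trans_le hx).ne' (infDist_zero_of_mem hxΩ)

lemma isCompact_closure_innerLevel [ProperSpace X] (hΩ : IsBounded Ω) {t : ℝ} (ht : 0 < t) :
    IsCompact (closure (innerLevel Ω t)) :=
  (hΩ.subset (subset_closure.trans (closure_innerLevel_subset ht))).isCompact_closure

lemma min_le_infDist_compl_of_lipschitzWith {h : X → ℝ} {K : ℝ≥0} {r : ℝ} {x y : X}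
    (hne : Ωᶜ.Nonempty) (hK : 0 < K) (hh : LipschitzWith K h)
    (hΩ : ∀ z ∈ ball x (2 * r), z ∈ Ω ↔ 0 < h z) (hy : y ∈ ball x r) :
    min r (h y / K) ≤ infDist y Ωᶜ := by
  refine (le_infDist hne).2 fun z hz => ?_
  by_cases hzx : z ∈ ball x (2 * r)
  · have hz0 : h z ≤ 0 := not_lt.1 fun hpos => hz ((hΩ z hzx).2 hpos)
    refine min_le_of_right_le ((div_le_iff₀' (NNReal.coe_pos.2 hK)).2 ?_)
    linarith [(le_abs_self _).trans (hh.dist_le_mul y z)]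
  · refine min_le_of_left_le ?_
    rw [mem_ball] at hy hzx
    linarith [dist_triangle_left z x y]

lemma boundaryWeight_le_of_min_le_infDist {s r t : ℝ} {K : ℝ≥0} {x : X} (hs : 0 ≤ s)
    (hr : 0 < r) (hK : 0 < K) (ht : 0 < t) (h : min r (t / K) ≤ infDist x Ωᶜ) :
    boundaryWeight s Ω x ≤ ENNReal.ofReal (r ^ (-s)) + ENNReal.ofReal (K ^ s) *
      (Ioo 0 (K * r)).indicator (fun t => ENNReal.ofReal (t ^ (-s))) t := by
  have hK' : (0 : ℝ) < K := hK
  rcases le_or_gt r (t / K) with hrt | htr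
  · rw [min_eq_left hrt] at h
    exact (boundaryWeight_le_of_le_infDist hs hr h).trans le_self_add
  · rw [min_eq_right htr.le] at h
    have hmem : t ∈ Ioo 0 (K * r) := ⟨ht, (div_lt_iff₀' hK').1 htr⟩
    have hpow : (t / K) ^ (-s) = K ^ s * t ^ (-s) := by
      rw [Real.div_rpow ht.le hK'.le, Real.rpow_neg hK'.le, div_inv_eq_mul, mul_comm]
    rw [indicator_of_mem hmem, ← ENNReal.ofReal_mul (by positivity), ← hpow]
    exact (boundaryWeight_le_of_le_infDist hs (div_pos ht hK') h).trans le_add_self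

variable [MeasurableSpace X]

lemma exists_setLIntegral_ball_boundaryWeight_lt_top_of_mem [ProperSpace X]
    {μ : Measure X} [IsFiniteMeasureOnCompacts μ] {s : ℝ} {x : X} (hs : 0 ≤ s) (hΩ : IsOpen Ω)
    (hne : Ωᶜ.Nonempty) (hx : x ∈ Ω) :
    ∃ r > 0, ∫⁻ y in ball x r ∩ Ω, boundaryWeight s Ω y ∂μ < ⊤ := by
  set d := infDist x Ωᶜ / 2
  have hd : 0 < d := half_pos (infDist_compl_pos hΩ hne hx)
  have hdd : d + d = infDist x Ωᶜ := add_halves _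
  refine ⟨d, hd, ?_⟩
  calc ∫⁻ y in ball x d ∩ Ω, boundaryWeight s Ω y ∂μ
      ≤ ∫⁻ y in ball x d, boundaryWeight s Ω y ∂μ := lintegral_mono_set inter_subset_left
    _ ≤ ∫⁻ _ in ball x d, ENNReal.ofReal (d ^ (-s)) ∂μ :=
        setLIntegral_mono measurable_const fun y hy => by
          refine boundaryWeight_le_of_le_infDist hs hd ?_
          have hxy := infDist_le_infDist_add_dist (s := Ωᶜ) (x := x) (y := y)
          rw [mem_ball, dist_comm] at hy
          linarith
    _ < ⊤ := by
        rw [setLIntegral_const]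
        exact ENNReal.mul_lt_top ENNReal.ofReal_lt_top measure_ball_lt_top

variable [OpensMeasurableSpace X]

lemma measurable_boundaryWeight (s : ℝ) (Ω : Set X) : Measurable (boundaryWeight s Ω) :=
  ((continuous_infDist_pt _).measurable.pow_const _).ennreal_ofReal

lemma tendsto_setLIntegral_infDist_lt {μ : Measure X} {g : X → ℝ≥0∞} {ε : ℕ → ℝ}
    (hΩ : IsOpen Ω) (hne : Ωᶜ.Nonempty) (hg : ∫⁻ x in Ω, g x ∂μ ≠ ⊤)
    (hε : Tendsto ε atTop (𝓝 0)) :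
    Tendsto (fun k => ∫⁻ x in Ω ∩ {x | infDist x Ωᶜ < ε k}, g x ∂μ) atTop (𝓝 0) := by
  have hSm (k : ℕ) : MeasurableSet (Ω ∩ {x | infDist x Ωᶜ < ε k}) :=
    (hΩ.inter (isOpen_lt (continuous_infDist_pt _) continuous_const)).measurableSet
  have hlim : Tendsto (fun k => μ.withDensity g (Ω ∩ {x | infDist x Ωᶜ < ε k})) atTop
      (𝓝 (μ.withDensity g ∅)) := by
    refine tendsto_measure_of_tendsto_indicator atTop hSm hΩ.measurableSet
      (by rwa [withDensity_apply _ hΩ.measurableSet])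
      (Eventually.of_forall fun k => inter_subset_left) fun x => ?_
    by_cases hx : x ∈ Ω
    · filter_upwards [hε.eventually_lt_const (infDist_compl_pos hΩ hne hx)] with k hk
      simp only [mem_inter_iff, mem_ofPred_eq, hk.not_gt, and_false, mem_empty_iff_false]
    · exact Eventually.of_forall fun k => by simp only [mem_inter_iff, hx, false_and,
        mem_empty_iff_false]
  simpa only [measure_empty, withDensity_apply _ (hSm _)] using hlim

end BoundaryWeight

section LayerInteraction

variable {V : Type*} [NormedAddCommGroup V] [NormedSpace ℝ V] [MeasurableSpace V] [BorelSpace V]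
  [FiniteDimensional ℝ V] (μ : Measure V) [μ.IsAddHaarMeasure] {s : ℝ} {Ω : Set V}

lemma fracInteraction_prod_compl_le (hΩ : IsOpen Ω) (hne : Ωᶜ.Nonempty) :
    fracInteraction μ s (Ω ×ˢ Ωᶜ) ≤
      (∫⁻ x in Ω, boundaryWeight s Ω x ∂μ) * truncKernelMass μ s := by
  rw [fracInteraction_prod μ hΩ.measurableSet hΩ.measurableSet.compl,
    ← lintegral_mul_const _ (measurable_boundaryWeight s Ω)]
  exact setLIntegral_mono' hΩ.measurableSet fun x hx =>
    setLIntegral_fracKernel_le μ (infDist_compl_pos hΩ hne hx)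
      (fun y hy => infDist_le_dist_of_mem hy) hΩ.measurableSet.compl

lemma exists_fracInteraction_layer_le {f : V → ℝ} (hf : LipschitzWith 1 f)
    (hΩ : MeasurableSet Ω) {ε : ℝ} (hε : 0 < ε) :
    ∃ t ∈ Ioo 0 ε, fracInteraction μ s ((Ω \ {x | t < f x}) ×ˢ {x | t < f x}) ≤
      ENNReal.ofReal (ε ^ (-s)) * truncKernelMass μ s * μ (Ω ∩ {x | f x < ε}) := by
  have hSm : MeasurableSet (Ω ∩ {x | f x < ε}) :=
    hΩ.inter (measurableSet_lt hf.continuous.measurable measurable_const)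
  have hmin : Measurable fun p : V × V => ENNReal.ofReal (min ε (dist p.1 p.2)) :=
    (measurable_const.min (measurable_fst.dist measurable_snd)).ennreal_ofReal
  have hpow : ε ^ (1 - s) = ε * ε ^ (-s) := by
    rw [sub_eq_add_neg, Real.rpow_add hε, Real.rpow_one]
  obtain ⟨t, ht, hle⟩ := exists_measure_layer_le (κ := fracInteraction μ s) hf hΩ hε
  simp only [setLIntegral_fracInteraction_prod μ hmin hSm MeasurableSet.univ,
    Measure.restrict_univ, lintegral_min_dist_mul_fracKernel μ hε, setLIntegral_const, hpow,
    ENNReal.ofReal_mul hε.le, mul_assoc] at hle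
  refine ⟨t, ht, ?_⟩
  rw [mul_assoc]
  exact (ENNReal.mul_le_mul_iff_right (ENNReal.ofReal_pos.2 hε).ne' ENNReal.ofReal_ne_top).1 hle

lemma exists_fracInteraction_innerLevel_le (hs : 0 ≤ s) (hΩ : IsOpen Ω) (hne : Ωᶜ.Nonempty)
    {ε : ℝ} (hε : 0 < ε) :
    ∃ t ∈ Ioo 0 ε, fracInteraction μ s ((Ω \ innerLevel Ω t) ×ˢ innerLevel Ω t) ≤
      truncKernelMass μ s * ∫⁻ x in Ω ∩ {x | infDist x Ωᶜ < ε}, boundaryWeight s Ω x ∂μ := by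
  obtain ⟨t, ht, hle⟩ :=
    exists_fracInteraction_layer_le μ (s := s) (lipschitz_infDist_pt Ωᶜ) hΩ.measurableSet hε
  refine ⟨t, ht, hle.trans ?_⟩
  rw [mul_comm (ENNReal.ofReal _), mul_assoc, ← setLIntegral_const]
  gcongr truncKernelMass μ s * ?_
  exact setLIntegral_mono (measurable_boundaryWeight s Ω)
    fun x (hx : x ∈ Ω ∩ {x | infDist x Ωᶜ < ε}) =>
      le_boundaryWeight_of_infDist_le hs (infDist_compl_pos hΩ hne hx.1) hx.2.le

lemma exists_isVanishingExhaustion (hs : s ∈ Ioo (0 : ℝ) 1) (hΩ : IsOpen Ω)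
    (hΩb : IsBounded Ω) (hne : Ωᶜ.Nonempty) (hw : ∫⁻ x in Ω, boundaryWeight s Ω x ∂μ < ⊤) :
    ∃ A : ℕ → Set V, IsVanishingExhaustion (fracInteraction μ s) Ω A := by
  choose t ht hle using fun k : ℕ =>
    exists_fracInteraction_innerLevel_le μ hs.1.le hΩ hne (Nat.one_div_pos_of_nat (n := k))
  have ht0 : Tendsto t atTop (𝓝 0) :=
    squeeze_zero (fun k => (ht k).1.le) (fun k => (ht k).2.le)
      tendsto_one_div_add_atTop_nhds_zero_nat
  have hlim := ENNReal.Tendsto.const_mul (a := truncKernelMass μ s)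
    (tendsto_setLIntegral_infDist_lt hΩ hne hw.ne tendsto_one_div_add_atTop_nhds_zero_nat)
    (.inr (truncKernelMass_lt_top μ hs).ne)
  rw [mul_zero] at hlim
  exact ⟨fun k => innerLevel Ω (t k),
    { isOpen := fun k => isOpen_innerLevel Ω (t k)
      isCompact_closure := fun k => isCompact_closure_innerLevel hΩb (ht k).1
      closure_subset := fun k => closure_innerLevel_subset (ht k).1
      eventually_mem := fun x hx => ht0.eventually_lt_const (infDist_compl_pos hΩ hne hx)
      tendsto_layer := tendsto_of_tendsto_of_tendsto_of_le_of_le tendsto_const_nhds hlim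
        (fun _ => zero_le) hle }⟩

end LayerInteraction

section LipschitzEpigraph

variable {V : Type*} [NormedAddCommGroup V] [NormedSpace ℝ V]

/-- Near `x`, the set `Ω` is the positivity set of a Lipschitz function `h` that grows at unit
speed in some direction `e`. This is a coordinate-free way of saying that, near `x`, `Ω` lies on
one side of a Lipschitz graph. -/
def IsLipschitzEpigraphNear (Ω : Set V) (x : V) : Prop :=
  ∃ (h : V → ℝ) (e : V) (K : ℝ≥0), LipschitzWith K h ∧
    (∀ y (t : ℝ), h (y + t • e) = h y + t) ∧ ∀ᶠ y in 𝓝 x, y ∈ Ω ↔ 0 < h y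

variable [MeasurableSpace V] [BorelSpace V] {μ : Measure V}
  {h : V → ℝ} {e x : V} {g : ℝ → ℝ≥0∞}

lemma setLIntegral_ball_le_setLIntegral_ball_shift [μ.IsAddRightInvariant]
    (he : ∀ y (t : ℝ), h (y + t • e) = h y + t) {r t : ℝ} (ht : t ∈ Icc (0 : ℝ) 1) :
    ∫⁻ y in ball x r, g (h y) ∂μ ≤ ∫⁻ y in ball x (r + ‖e‖), g (h y + t) ∂μ := by
  have hte : ‖t • e‖ ≤ ‖e‖ := by
    rw [norm_smul, Real.norm_of_nonneg ht.1]
    exact mul_le_of_le_one_left (norm_nonneg e) ht.2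
  rw [← lintegral_indicator measurableSet_ball, ← lintegral_indicator measurableSet_ball,
    ← lintegral_add_right_eq_self _ (t • e)]
  refine lintegral_mono fun y => ?_
  by_cases hy : y + t • e ∈ ball x r
  · have hyB : y ∈ ball x (r + ‖e‖) := by
      have htri := dist_triangle y (y + t • e) x
      rw [dist_self_add_right] at htri
      rw [mem_ball] at hy ⊢
      linarith
    rw [indicator_of_mem hy, indicator_of_mem hyB, he]
  · rw [indicator_of_notMem hy]
    exact zero_le

variable [FiniteDimensional ℝ V] [μ.IsAddHaarMeasure]

/-- Averaging over the translations by `t • e`, `0 ≤ t ≤ 1`, turns the integral into one along the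
lines of direction `e`, on which `h` is an affine parameter. -/
lemma setLIntegral_ball_comp_lt_top (hg : Measurable g) (hgi : ∫⁻ t, g t < ⊤) (hh : Measurable h)
    (he : ∀ y (t : ℝ), h (y + t • e) = h y + t) (r : ℝ) :
    ∫⁻ y in ball x r, g (h y) ∂μ < ⊤ := by
  have hm : Measurable (fun p : ℝ × V => g (h p.2 + p.1)) :=
    hg.comp ((hh.comp measurable_snd).add measurable_fst)
  calc ∫⁻ y in ball x r, g (h y) ∂μ
      = ∫⁻ _ in Icc (0 : ℝ) 1, ∫⁻ y in ball x r, g (h y) ∂μ := by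
        rw [setLIntegral_const, Real.volume_Icc, sub_zero, ENNReal.ofReal_one, mul_one]
    _ ≤ ∫⁻ t in Icc (0 : ℝ) 1, ∫⁻ y in ball x (r + ‖e‖), g (h y + t) ∂μ :=
        setLIntegral_mono' measurableSet_Icc fun t ht =>
          setLIntegral_ball_le_setLIntegral_ball_shift he ht
    _ = ∫⁻ y in ball x (r + ‖e‖), (∫⁻ t in Icc (0 : ℝ) 1, g (h y + t)) ∂μ :=
        lintegral_lintegral_swap hm.aemeasurable
    _ ≤ ∫⁻ _ in ball x (r + ‖e‖), (∫⁻ t, g t) ∂μ :=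
        lintegral_mono fun y =>
          (setLIntegral_le_lintegral _ _).trans (lintegral_add_left_eq_self g (h y)).le
    _ < ⊤ := by
        rw [setLIntegral_const]
        exact ENNReal.mul_lt_top hgi measure_ball_lt_top

variable {s : ℝ} {Ω : Set V}

lemma lintegral_indicator_Ioo_rpow_lt_top (hs : s < 1) {b : ℝ} (hb : 0 < b) :
    ∫⁻ t, (Ioo 0 b).indicator (fun t => ENNReal.ofReal (t ^ (-s))) t < ⊤ := by
  rw [lintegral_indicator measurableSet_Ioo]
  exact ((intervalIntegral.integrableOn_Ioo_rpow_iff hb).2 (neg_lt_neg hs)).setLIntegral_lt_top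

lemma IsLipschitzEpigraphNear.exists_setLIntegral_ball_boundaryWeight_lt_top
    (hΩx : IsLipschitzEpigraphNear Ω x) (hs : s ∈ Ioo (0 : ℝ) 1) (hΩ : MeasurableSet Ω)
    (hne : Ωᶜ.Nonempty) :
    ∃ r > 0, ∫⁻ y in ball x r ∩ Ω, boundaryWeight s Ω y ∂μ < ⊤ := by
  obtain ⟨h, e, K₀, hh₀, he, hev⟩ := hΩx
  obtain ⟨R, hR, hball⟩ := Metric.eventually_nhds_iff_ball.1 hev
  obtain ⟨K, hK, hh⟩ : ∃ K : ℝ≥0, 0 < K ∧ LipschitzWith K h :=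
    ⟨K₀ + 1, by positivity, hh₀.weaken le_self_add⟩
  obtain ⟨r, hr, rfl⟩ : ∃ r > 0, R = 2 * r :=
    ⟨R / 2, half_pos hR, (mul_div_cancel₀ R two_ne_zero).symm⟩
  set g : ℝ → ℝ≥0∞ := (Ioo 0 (K * r)).indicator fun t => ENNReal.ofReal (t ^ (-s))
  have hgm : Measurable g := (measurable_id.pow_const _).ennreal_ofReal.indicator measurableSet_Ioo
  have hgi : ∫⁻ t, g t < ⊤ := lintegral_indicator_Ioo_rpow_lt_top hs.2 (by positivity)
  have hhm : Measurable h := hh.continuous.measurable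
  have hghm : Measurable fun y => g (h y) := hgm.comp hhm
  refine ⟨r, hr, ?_⟩
  calc ∫⁻ y in ball x r ∩ Ω, boundaryWeight s Ω y ∂μ
      ≤ ∫⁻ y in ball x r ∩ Ω,
          (ENNReal.ofReal (r ^ (-s)) + ENNReal.ofReal (K ^ s) * g (h y)) ∂μ :=
        setLIntegral_mono' (measurableSet_ball.inter hΩ) fun y hy =>
          boundaryWeight_le_of_min_le_infDist hs.1.le hr hK
            ((hball y (ball_subset_ball (by linarith) hy.1)).1 hy.2)
            (min_le_infDist_compl_of_lipschitzWith hne hK hh hball hy.1)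
    _ ≤ ∫⁻ y in ball x r, (ENNReal.ofReal (r ^ (-s)) + ENNReal.ofReal (K ^ s) * g (h y)) ∂μ :=
        lintegral_mono_set inter_subset_left
    _ = ENNReal.ofReal (r ^ (-s)) * μ (ball x r) +
          ENNReal.ofReal (K ^ s) * ∫⁻ y in ball x r, g (h y) ∂μ := by
        rw [lintegral_add_left measurable_const, setLIntegral_const,
          lintegral_const_mul _ hghm]
    _ < ⊤ := ENNReal.add_lt_top.2
        ⟨ENNReal.mul_lt_top ENNReal.ofReal_lt_top measure_ball_lt_top,
          ENNReal.mul_lt_top ENNReal.ofReal_lt_top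
            (setLIntegral_ball_comp_lt_top hgm hgi hhm he r)⟩

lemma lintegral_boundaryWeight_lt_top (hs : s ∈ Ioo (0 : ℝ) 1) (hΩ : IsOpen Ω)
    (hΩb : IsBounded Ω) (hne : Ωᶜ.Nonempty)
    (hfr : ∀ x ∈ frontier Ω, IsLipschitzEpigraphNear Ω x) :
    ∫⁻ x in Ω, boundaryWeight s Ω x ∂μ < ⊤ := by
  have hlocal (x : V) (hx : x ∈ closure Ω) :
      ∃ r > 0, ∫⁻ y in ball x r ∩ Ω, boundaryWeight s Ω y ∂μ < ⊤ := by
    by_cases hxΩ : x ∈ Ω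
    · exact exists_setLIntegral_ball_boundaryWeight_lt_top_of_mem hs.1.le hΩ hne hxΩ
    · exact (hfr x (hΩ.frontier_eq ▸ ⟨hx, hxΩ⟩)).exists_setLIntegral_ball_boundaryWeight_lt_top
        hs hΩ.measurableSet hne
  have hcl : (μ.restrict Ω).withDensity (boundaryWeight s Ω) (closure Ω) < ⊤ := by
    refine hΩb.isCompact_closure.measure_lt_top_of_nhdsWithin fun x hx => ?_
    obtain ⟨r, hr, hlt⟩ := hlocal x hx
    refine ⟨ball x r, mem_nhdsWithin_of_mem_nhds (ball_mem_nhds x hr), ?_⟩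
    rwa [withDensity_apply _ measurableSet_ball, Measure.restrict_restrict measurableSet_ball]
  rwa [withDensity_apply _ isClosed_closure.measurableSet,
    Measure.restrict_restrict isClosed_closure.measurableSet,
    inter_eq_right.2 subset_closure] at hcl

end LipschitzEpigraph

section EuclideanSpace

variable {n : ℕ} {s : ℝ} {E F Ω Ω' : Set (EuclideanSpace ℝ (Fin n))}

lemma HasLipschitzBoundary.isLipschitzEpigraphNear (hΩ : HasLipschitzBoundary Ω)
    {x : EuclideanSpace ℝ (Fin n)} (hx : x ∈ frontier Ω) : IsLipschitzEpigraphNear Ω x := by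
  obtain ⟨U, hU, hxU, L, φ, K, hφ, hΩU, -⟩ := hΩ x hx
  have hL : LipschitzWith 1 fun y => WithLp.ofLp (L y) :=
    ((WithLp.prod_lipschitzWith_ofLp 2 _ _).comp L.lipschitz).weaken (mul_one 1).le
  have hfst : LipschitzWith 1 fun y => (L y).fst :=
    (LipschitzWith.prod_fst.comp hL).weaken (mul_one 1).le
  have hsnd : LipschitzWith 1 fun y => (L y).snd :=
    (LipschitzWith.prod_snd.comp hL).weaken (mul_one 1).le
  refine ⟨fun y => (L y).snd - φ (L y).fst, L.symm (WithLp.toLp 2 (0, 1)), _,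
    hsnd.sub (hφ.comp hfst), fun y t => ?_, ?_⟩
  · simp only [map_add, map_smul, LinearIsometryEquiv.apply_symm_apply, WithLp.add_fst,
      WithLp.add_snd, WithLp.smul_fst, WithLp.smul_snd, WithLp.toLp_fst, WithLp.toLp_snd,
      smul_zero, add_zero, smul_eq_mul, mul_one]
    ring
  · filter_upwards [hU.mem_nhds hxU] with y hy
    have hmem : y ∈ Ω ∩ U ↔ y ∈ U ∧ φ (L y).fst < (L y).snd := Set.ext_iff.1 hΩU y
    rw [sub_pos]
    exact ⟨fun h => (hmem.1 ⟨h, hy⟩).2, fun h => (hmem.2 ⟨hy, h⟩).1⟩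

lemma Ls_eq_fracInteraction {A B : Set (EuclideanSpace ℝ (Fin n))} (hA : MeasurableSet A)
    (hB : MeasurableSet B) : Ls n s A B = fracInteraction volume s (A ×ˢ B) := by
  rw [fracInteraction_prod volume hA hB]
  simp only [Ls, fracKernel, finrank_euclideanSpace_fin]

lemma Ps_eq_fracInteraction_crossPairs (hE : MeasurableSet E) (hΩ : MeasurableSet Ω) :
    Ps n s E Ω = fracInteraction volume s (crossPairs E Ω) := by
  have hunion : crossPairs E Ω =
      (E ∩ Ω) ×ˢ (Eᶜ ∩ Ω) ∪ (E ∩ Ω) ×ˢ (Eᶜ \ Ω) ∪ (E \ Ω) ×ˢ (Eᶜ ∩ Ω) := by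
    ext ⟨x, y⟩
    simp only [mem_crossPairs, mem_union, mem_prod, mem_inter_iff, Set.mem_sdiff, mem_compl_iff]
    tauto
  have hd₁ : Disjoint ((E ∩ Ω) ×ˢ (Eᶜ ∩ Ω)) ((E ∩ Ω) ×ˢ (Eᶜ \ Ω)) :=
    disjoint_prod.2 (.inr (disjoint_sdiff_right.mono_left inter_subset_right))
  have hd₂ : Disjoint ((E ∩ Ω) ×ˢ (Eᶜ ∩ Ω) ∪ (E ∩ Ω) ×ˢ (Eᶜ \ Ω)) ((E \ Ω) ×ˢ (Eᶜ ∩ Ω)) := by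
    have hd : Disjoint (E ∩ Ω) (E \ Ω) := disjoint_sdiff_right.mono_left inter_subset_right
    exact disjoint_union_left.2 ⟨disjoint_prod.2 (.inl hd), disjoint_prod.2 (.inl hd)⟩
  have hin := hE.inter hΩ
  have hout := hE.diff hΩ
  have hcin := hE.compl.inter hΩ
  have hcout := hE.compl.diff hΩ
  rw [hunion, measure_union hd₂ (hout.prod hcin), measure_union hd₁ (hin.prod hcout), Ps,
    Ls_eq_fracInteraction hin hcin, Ls_eq_fracInteraction hin hcout,
    Ls_eq_fracInteraction hout hcin]

lemma Ps_le_Ps_iff_of_subset (hE : MeasurableSet E) (hF : MeasurableSet F)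
    (hΩ : MeasurableSet Ω) (hΩ' : MeasurableSet Ω') (h : Ω' ⊆ Ω)
    (hEF : (F \ Ω' : Set (EuclideanSpace ℝ (Fin n))) =ᵐ[volume] (E \ Ω' : Set _))
    (hfin : Ps n s E Ω < ⊤) : Ps n s E Ω ≤ Ps n s F Ω ↔ Ps n s E Ω' ≤ Ps n s F Ω' := by
  simp only [Ps_eq_fracInteraction_crossPairs, hE, hF, hΩ, hΩ'] at hfin ⊢
  exact measure_crossPairs_le_iff_of_subset (fracInteraction_absolutelyContinuous volume) hE hF hΩ'
    h hEF hfin.ne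

lemma volume_symmDiff_sdiff_eq_zero_of_symmDiff_subset (h : E ∆ F ⊆ Ω) :
    volume ((F \ Ω) ∆ (E \ Ω)) = 0 := by
  have hEF : F \ Ω = E \ Ω := by
    ext x
    have hx := @h x
    simp only [mem_symmDiff, Set.mem_sdiff] at hx ⊢
    tauto
  rw [hEF, symmDiff_self, bot_eq_empty, measure_empty]

/-- Minimality of the fractional perimeter with respect to compactly supported perturbations:
condition (ii) of the theorem. -/
def CompactSMinimal (n : ℕ) (s : ℝ) (E Ω : Set (EuclideanSpace ℝ (Fin n))) : Prop :=
  Ps n s E Ω < ⊤ ∧ ∀ F : Set (EuclideanSpace ℝ (Fin n)), MeasurableSet F →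
    IsCompact (closure (E ∆ F)) → closure (E ∆ F) ⊆ Ω → Ps n s E Ω ≤ Ps n s F Ω

lemma SMinimal.compactSMinimal (h : SMinimal n s E Ω) : CompactSMinimal n s E Ω :=
  ⟨h.1, fun F hF _ hsub => h.2 F hF
    (volume_symmDiff_sdiff_eq_zero_of_symmDiff_subset (subset_closure.trans hsub))⟩

lemma SMinimal.mono (h : SMinimal n s E Ω) (hE : MeasurableSet E) (hΩ : MeasurableSet Ω)
    (hΩ' : MeasurableSet Ω') (hsub : Ω' ⊆ Ω) : SMinimal n s E Ω' := by
  have hfin : Ps n s E Ω' < ⊤ := by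
    refine lt_of_le_of_lt ?_ h.1
    simp only [Ps_eq_fracInteraction_crossPairs, hE, hΩ, hΩ']
    exact measure_mono (crossPairs_mono hsub)
  refine ⟨hfin, fun F hF hFE => ?_⟩
  have hFE' : (F \ Ω' : Set (EuclideanSpace ℝ (Fin n))) =ᵐ[volume] (E \ Ω' : Set _) :=
    measure_symmDiff_eq_zero_iff.1 hFE
  have hFEΩ : volume ((F \ Ω) ∆ (E \ Ω)) = 0 := by
    refine measure_mono_null (fun x hx => ?_) hFE
    have hx' := @hsub x
    simp only [mem_symmDiff, Set.mem_sdiff] at hx ⊢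
    tauto
  exact (Ps_le_Ps_iff_of_subset hE hF hΩ hΩ' hsub hFE' h.1).1 (h.2 F hF hFEΩ)

lemma SMinimal.locSMinimal (h : SMinimal n s E Ω) (hE : MeasurableSet E)
    (hΩ : MeasurableSet Ω) : LocSMinimal n s E Ω := fun _ hΩ' _ hsub =>
  h.mono hE hΩ hΩ'.measurableSet (subset_closure.trans hsub)

lemma CompactSMinimal.sMinimal (h : CompactSMinimal n s E Ω) (hE : MeasurableSet E)
    (hΩ : MeasurableSet Ω) {A : ℕ → Set (EuclideanSpace ℝ (Fin n))}
    (hA : IsVanishingExhaustion (fracInteraction volume s) Ω A) : SMinimal n s E Ω := by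
  refine ⟨h.1, fun F hF hFE => ?_⟩
  have hAm (k : ℕ) : MeasurableSet (A k) := (hA.isOpen k).measurableSet
  have hfin := h.1.ne
  rw [Ps_eq_fracInteraction_crossPairs hE hΩ] at hfin
  have hbound (k : ℕ) : Ps n s E Ω ≤ Ps n s F Ω +
      fracInteraction volume s (crossPairs E (Ω \ A k)) +
        2 * fracInteraction volume s ((Ω \ A k) ×ˢ A k) := by
    have hite : MeasurableSet ((A k).ite F E) := (hAm k).ite hF hE
    have hsub : closure (E ∆ (A k).ite F E) ⊆ closure (A k) := closure_mono fun x => by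
      simp only [Set.ite, mem_symmDiff, mem_union, mem_inter_iff, Set.mem_sdiff]
      tauto
    refine (h.2 _ hite ((hA.isCompact_closure k).of_isClosed_subset isClosed_closure hsub)
      (hsub.trans (hA.closure_subset k))).trans ?_
    rw [Ps_eq_fracInteraction_crossPairs hite hΩ, Ps_eq_fracInteraction_crossPairs hF hΩ]
    exact measure_crossPairs_ite_le (fracInteraction_absolutelyContinuous volume)
      (measurePreserving_swap_fracInteraction volume) (hAm k) hΩ (hA.subset k)
      (measure_symmDiff_eq_zero_iff.1 hFE)
  have hlim : Tendsto (fun k => Ps n s F Ω + fracInteraction volume s (crossPairs E (Ω \ A k)) +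
      2 * fracInteraction volume s ((Ω \ A k) ×ˢ A k)) atTop (𝓝 (Ps n s F Ω)) := by
    simpa only [add_zero, mul_zero] using
      (tendsto_const_nhds.add (hA.tendsto_measure_crossPairs_sdiff hE hΩ hfin)).add
        (ENNReal.Tendsto.const_mul hA.tendsto_layer (.inr ENNReal.ofNat_ne_top))
  exact ge_of_tendsto' hlim hbound

lemma LocSMinimal.Ps_le (h : LocSMinimal n s E Ω) (hE : MeasurableSet E) (hΩ : MeasurableSet Ω)
    {A : ℕ → Set (EuclideanSpace ℝ (Fin n))}
    (hA : IsVanishingExhaustion (fracInteraction volume s) Ω A) :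
    Ps n s E Ω ≤ fracInteraction volume s (Ω ×ˢ Ωᶜ) := by
  have hAm (k : ℕ) : MeasurableSet (A k) := (hA.isOpen k).measurableSet
  have hbound (k : ℕ) : fracInteraction volume s (crossPairs E (A k)) ≤
      fracInteraction volume s (Ω ×ˢ Ωᶜ) + fracInteraction volume s ((Ω \ A k) ×ˢ A k) := by
    have hmin : Ps n s E (A k) ≤ Ps n s (E \ A k) (A k) :=
      (h (A k) (hA.isOpen k) (hA.isCompact_closure k) (hA.closure_subset k)).2 _
        (hE.diff (hAm k)) (volume_symmDiff_sdiff_eq_zero_of_symmDiff_subset fun x hx => by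
          simp only [mem_symmDiff, Set.mem_sdiff] at hx
          tauto)
    have hswap : fracInteraction volume s (Ωᶜ ×ˢ Ω) = fracInteraction volume s (Ω ×ˢ Ωᶜ) := by
      rw [← preimage_swap_prod, (measurePreserving_swap_fracInteraction volume).measure_preimage
        (hΩ.prod hΩ.compl).nullMeasurableSet]
    rw [Ps_eq_fracInteraction_crossPairs hE (hAm k),
      Ps_eq_fracInteraction_crossPairs (hE.diff (hAm k)) (hAm k)] at hmin
    rw [← hswap]
    exact hmin.trans ((measure_mono (crossPairs_sdiff_self_subset (hA.subset k))).trans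
      (measure_union_le _ _))
  rw [Ps_eq_fracInteraction_crossPairs hE hΩ]
  refine measure_le_of_tendsto_of_eventually_mem (fun p hp => ?_) hbound
    (by simpa only [add_zero] using tendsto_const_nhds.add hA.tendsto_layer)
  rw [mem_crossPairs] at hp
  simp only [mem_crossPairs, hp.1.1, hp.1.2, not_false_eq_true, true_and, and_self]
  exact hp.2.elim (fun h₁ => (hA.eventually_mem _ h₁).mono fun _ => Or.inl)
    fun h₂ => (hA.eventually_mem _ h₂).mono fun _ => Or.inr

lemma LocSMinimal.compactSMinimal (h : LocSMinimal n s E Ω) (hE : MeasurableSet E)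
    (hΩ : IsOpen Ω) (hfin : Ps n s E Ω < ⊤) : CompactSMinimal n s E Ω := by
  refine ⟨hfin, fun F hF hcomp hsub => ?_⟩
  obtain ⟨Ω', hΩ', hEF, hΩ'Ω, hcl⟩ := exists_open_between_and_isCompact_closure hcomp hΩ hsub
  have hFE := volume_symmDiff_sdiff_eq_zero_of_symmDiff_subset (subset_closure.trans hEF)
  exact (Ps_le_Ps_iff_of_subset hE hF hΩ.measurableSet hΩ'.measurableSet
    (subset_closure.trans hΩ'Ω) (measure_symmDiff_eq_zero_iff.1 hFE) hfin).2
    ((h Ω' hΩ' hcl hΩ'Ω).2 F hF hFE)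

lemma nonempty_compl_of_isBounded {V : Type*} [NormedAddCommGroup V] [NormedSpace ℝ V]
    [Nontrivial V] {Ω : Set V} (hΩ : IsBounded Ω) : Ωᶜ.Nonempty := by
  rw [nonempty_compl]
  rintro rfl
  exact NormedSpace.unbounded_univ ℝ V hΩ

theorem sMinimal_iff_locSMinimal_general (hs : s ∈ Ioo (0 : ℝ) 1) (hΩo : IsOpen Ω)
    (hΩb : IsBounded Ω) (hne : Ωᶜ.Nonempty) (hw : ∫⁻ x in Ω, boundaryWeight s Ω x < ⊤)
    (hE : MeasurableSet E) :
    (SMinimal n s E Ω ↔ CompactSMinimal n s E Ω) ∧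
      (SMinimal n s E Ω ↔ LocSMinimal n s E Ω) := by
  have hΩ := hΩo.measurableSet
  obtain ⟨A, hA⟩ := exists_isVanishingExhaustion volume hs hΩo hΩb hne hw
  have hfin : fracInteraction volume s (Ω ×ˢ Ωᶜ) < ⊤ :=
    (fracInteraction_prod_compl_le volume hΩo hne).trans_lt
      (ENNReal.mul_lt_top hw (truncKernelMass_lt_top volume hs))
  refine ⟨⟨SMinimal.compactSMinimal, fun h => h.sMinimal hE hΩ hA⟩,
    fun h => h.locSMinimal hE hΩ, fun h => ?_⟩
  exact (h.compactSMinimal hE hΩo ((h.Ps_le hE hΩ hA).trans_lt hfin)).sMinimal hE hΩ hA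

end EuclideanSpace

/-- Theorem 1.7: in a bounded open set with Lipschitz boundary, the notions of
`s`-minimal set, local minimizer with respect to compactly supported perturbations, and locally
`s`-minimal set all coincide. -/
theorem sMinimal_iff_locSMinimal
    (n : ℕ) (hn : 1 ≤ n) (s : ℝ) (hs : s ∈ Set.Ioo (0 : ℝ) 1)
    (Ω : Set (EuclideanSpace ℝ (Fin n))) (hΩo : IsOpen Ω) (hΩb : IsBounded Ω)
    (hΩlip : HasLipschitzBoundary Ω)
    (E : Set (EuclideanSpace ℝ (Fin n))) (hE : MeasurableSet E) :
    (SMinimal n s E Ω ↔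
      (Ps n s E Ω < ⊤ ∧ ∀ F : Set (EuclideanSpace ℝ (Fin n)), MeasurableSet F →
        IsCompact (closure (E ∆ F)) → closure (E ∆ F) ⊆ Ω → Ps n s E Ω ≤ Ps n s F Ω))
    ∧ (SMinimal n s E Ω ↔ LocSMinimal n s E Ω) := by
  have : NeZero n := ⟨by lia⟩
  have hne : Ωᶜ.Nonempty := nonempty_compl_of_isBounded hΩb
  exact sMinimal_iff_locSMinimal_general hs hΩo hΩb hne
    (lintegral_boundaryWeight_lt_top hs hΩo hΩb hne fun _ => hΩlip.isLipschitzEpigraphNear) hE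
end

section
/- Let Ω ⊆ ℝ^n be an open set, s ∈ (0,1), and let E₀ ⊆ ℝ^n be measurable. There exists a measurable set E ⊆ ℝ^n that is s-minimal in Ω with |(E∖Ω) Δ (E₀∖Ω)| = 0 if and only if there exists a measurable set F ⊆ ℝ^n with |(F∖Ω) Δ (E₀∖Ω)| = 0 and P_s(F,Ω) < ∞. -/
open MeasureTheory Set Filter Topology Metric Bornology
open scoped ENNReal NNReal symmDiff

/-!
For measurable `E`, the perimeter `Ps n s E Ω` is the mass `ν (E ×ˢ Eᶜ)` of a fixed measure `ν`,
namely the interaction kernel restricted to the pairs with at least one point in `Ω`. Such a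
functional is submodular under `∪` and `∩`, and by Fatou it is lower semicontinuous along pointwise
convergent sequences of sets. These two properties give minimizers without any compactness: let `m`
be the infimum and `Q (f k) ≤ m + ε k` with `∑ ε k < ∞`. As intersections of competitors have energy
at least `m`, submodularity makes the errors of unions add up, so `⋃ k ≥ N, f k` has energy at most
`m + ∑ k ≥ N, ε k`. These unions decrease to `limsup f`, which is therefore a minimizer.
-/

lemma partialSups_mem_of_supClosed {α ι : Type*} [SemilatticeSup α] [Preorder ι]
    [LocallyFiniteOrderBot ι] {s : Set α} (hs : SupClosed s) {f : ι → α} (hf : ∀ i, f i ∈ s)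
    (i : ι) : partialSups f i ∈ s :=
  hs.finsetSup'_mem Finset.nonempty_Iic fun j _ ↦ hf j

/-- Submodularity of a function on a set, which is meant to be a sublattice: there, it replaces
compactness in the construction of minimizers. -/
def SubmodularOn {α β : Type*} [Lattice α] [Add β] [LE β] (f : α → β) (s : Set α) : Prop :=
  ∀ ⦃a⦄, a ∈ s → ∀ ⦃b⦄, b ∈ s → f (a ⊔ b) + f (a ⊓ b) ≤ f a + f b

namespace SubmodularOn

variable {α : Type*} {Q : α → ℝ≥0∞} {m : ℝ≥0∞} {f : ℕ → α} {ε : ℕ → ℝ≥0∞}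

lemma map_sup_le_add [Lattice α] {s : Set α} (hQ : SubmodularOn Q s) {a b : α} (ha : a ∈ s)
    (hb : b ∈ s) (hm : m ≤ Q (a ⊓ b)) (hm_top : m ≠ ⊤) {δ η : ℝ≥0∞}
    (haQ : Q a ≤ m + δ) (hbQ : Q b ≤ m + η) : Q (a ⊔ b) ≤ m + (δ + η) := by
  refine (ENNReal.add_le_add_iff_right hm_top).1 ?_
  calc Q (a ⊔ b) + m ≤ Q (a ⊔ b) + Q (a ⊓ b) := by gcongr
    _ ≤ Q a + Q b := hQ ha hb
    _ ≤ (m + δ) + (m + η) := add_le_add haQ hbQ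
    _ = m + (δ + η) + m := by ring

lemma map_partialSups_le_add_sum [Lattice α] {L : Sublattice α} (hQ : SubmodularOn Q L)
    (hm : ∀ a ∈ L, m ≤ Q a) (hm_top : m ≠ ⊤) (hf : ∀ k, f k ∈ L)
    (hfQ : ∀ k, Q (f k) ≤ m + ε k) (j : ℕ) :
    Q (partialSups f j) ≤ m + ∑ k ∈ Finset.range (j + 1), ε k := by
  induction j with
  | zero => simpa using hfQ 0
  | succ j ih =>
    rw [partialSups_add_one, Finset.sum_range_succ]
    have hmem : partialSups f j ∈ L := partialSups_mem_of_supClosed L.supClosed hf j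
    exact hQ.map_sup_le_add hmem (hf _) (hm _ (L.inf_mem hmem (hf _))) hm_top ih (hfQ _)

variable [CompleteLattice α] {L : Sublattice α}

lemma map_iSup_le_add_tsum (hQ : SubmodularOn Q L)
    (hQ_mono : ∀ g : ℕ → α, Monotone g → (∀ k, g k ∈ L) → Q (⨆ k, g k) ≤ liminf (Q ∘ g) atTop)
    (hm : ∀ a ∈ L, m ≤ Q a) (hm_top : m ≠ ⊤) (hf : ∀ k, f k ∈ L)
    (hfQ : ∀ k, Q (f k) ≤ m + ε k) :
    Q (⨆ k, f k) ≤ m + ∑' k, ε k := by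
  have hpartial (j : ℕ) : Q (partialSups f j) ≤ m + ∑' k, ε k :=
    (hQ.map_partialSups_le_add_sum hm hm_top hf hfQ j).trans
      (by gcongr; exact ENNReal.sum_le_tsum _)
  rw [← iSup_partialSups_eq]
  exact (hQ_mono _ (partialSups f).monotone (partialSups_mem_of_supClosed L.supClosed hf)).trans
    (liminf_le_of_frequently_le' (Frequently.of_forall hpartial))

lemma map_limsup_le (hQ : SubmodularOn Q L)
    (hL_iSup : ∀ g : ℕ → α, (∀ k, g k ∈ L) → ⨆ k, g k ∈ L)
    (hQ_mono : ∀ g : ℕ → α, Monotone g → (∀ k, g k ∈ L) → Q (⨆ k, g k) ≤ liminf (Q ∘ g) atTop)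
    (hQ_anti : ∀ g : ℕ → α, Antitone g → (∀ k, g k ∈ L) → Q (⨅ k, g k) ≤ liminf (Q ∘ g) atTop)
    (hm : ∀ a ∈ L, m ≤ Q a) (hm_top : m ≠ ⊤) (hf : ∀ k, f k ∈ L)
    (hfQ : ∀ k, Q (f k) ≤ m + ε k) (hε : ∑' k, ε k ≠ ⊤) :
    Q (limsup f atTop) ≤ m := by
  have htail_anti : Antitone fun N ↦ ⨆ k, f (k + N) := antitone_nat_of_succ_le fun N ↦
    iSup_le fun k ↦ le_iSup_of_le (k + 1) (by rw [add_right_comm, add_assoc])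
  have htail_le (N : ℕ) : Q (⨆ k, f (k + N)) ≤ m + ∑' k, ε (k + N) :=
    hQ.map_iSup_le_add_tsum hQ_mono hm hm_top (fun k ↦ hf _) fun k ↦ hfQ _
  have hlim : Tendsto (fun N ↦ m + ∑' k, ε (k + N)) atTop (𝓝 m) := by
    simpa using (ENNReal.tendsto_sum_nat_add ε hε).const_add m
  rw [limsup_eq_iInf_iSup_of_nat']
  calc Q (⨅ N, ⨆ k, f (k + N))
      ≤ liminf (fun N ↦ Q (⨆ k, f (k + N))) atTop :=
        hQ_anti _ htail_anti fun N ↦ hL_iSup _ fun k ↦ hf _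
    _ ≤ liminf (fun N ↦ m + ∑' k, ε (k + N)) atTop :=
        liminf_le_liminf (Eventually.of_forall htail_le)
    _ = m := hlim.liminf_eq

theorem exists_isMinOn (hQ : SubmodularOn Q L) (hL : (L : Set α).Nonempty)
    (hL_iSup : ∀ g : ℕ → α, (∀ k, g k ∈ L) → ⨆ k, g k ∈ L)
    (hL_iInf : ∀ g : ℕ → α, (∀ k, g k ∈ L) → ⨅ k, g k ∈ L)
    (hQ_mono : ∀ g : ℕ → α, Monotone g → (∀ k, g k ∈ L) → Q (⨆ k, g k) ≤ liminf (Q ∘ g) atTop)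
    (hQ_anti : ∀ g : ℕ → α, Antitone g → (∀ k, g k ∈ L) → Q (⨅ k, g k) ≤ liminf (Q ∘ g) atTop) :
    ∃ a ∈ L, IsMinOn Q L a := by
  have hm (a : α) (ha : a ∈ L) : sInf (Q '' L) ≤ Q a := sInf_le (mem_image_of_mem Q ha)
  suffices h : ∃ a ∈ L, Q a ≤ sInf (Q '' L) from
    h.imp fun a ⟨ha, haQ⟩ ↦ ⟨ha, fun b hb ↦ haQ.trans (hm b hb)⟩
  by_cases hm_top : sInf (Q '' L) = ⊤
  · obtain ⟨a, ha⟩ := hL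
    exact ⟨a, ha, hm_top ▸ le_top⟩
  · have hmin (k : ℕ) : ∃ a ∈ L, Q a ≤ sInf (Q '' L) + 2⁻¹ ^ k := by
      have hlt : sInf (Q '' L) < sInf (Q '' L) + 2⁻¹ ^ k := ENNReal.lt_add_right hm_top (by simp)
      obtain ⟨_, ⟨a, ha, rfl⟩, haQ⟩ := sInf_lt_iff.1 hlt
      exact ⟨a, ha, haQ.le⟩
    choose f hf hfQ using hmin
    refine ⟨limsup f atTop, ?_, hQ.map_limsup_le hL_iSup hQ_mono hQ_anti hm hm_top hf hfQ
      (by simp [ENNReal.tsum_geometric])⟩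
    rw [limsup_eq_iInf_iSup_of_nat']
    exact hL_iInf _ fun N ↦ hL_iSup _ fun k ↦ hf _

end SubmodularOn

section NonlocalPerimeter

variable {X : Type*}

lemma eventually_mem_iff_mem_iUnion {f : ℕ → Set X} (hf : Monotone f) (x : X) :
    ∀ᶠ k in atTop, x ∈ f k ↔ x ∈ ⋃ k, f k := by
  by_cases hx : x ∈ ⋃ k, f k
  · obtain ⟨N, hN⟩ := mem_iUnion.1 hx
    filter_upwards [eventually_ge_atTop N] with k hk
    exact iff_of_true (hf hk hN) hx
  · exact Eventually.of_forall fun k ↦ iff_of_false (fun h ↦ hx (mem_iUnion_of_mem k h)) hx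

lemma eventually_mem_iff_mem_iInter {f : ℕ → Set X} (hf : Antitone f) (x : X) :
    ∀ᶠ k in atTop, x ∈ f k ↔ x ∈ ⋂ k, f k := by
  filter_upwards [eventually_mem_iff_mem_iUnion (f := fun k ↦ (f k)ᶜ)
    (fun _ _ h ↦ compl_subset_compl.2 (hf h)) x] with k hk
  simpa only [← compl_iInter, mem_compl_iff, not_iff_not] using hk

variable [MeasurableSpace X]

lemma measure_liminf_le_liminf_measure (μ : Measure X) (s : ℕ → Set X) :
    μ (liminf s atTop) ≤ liminf (fun k ↦ μ (s k)) atTop := by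
  have hmono : Monotone fun N ↦ ⨅ k ≥ N, s k := fun _ _ h ↦ biInf_mono fun _ hk ↦ h.trans hk
  rw [liminf_eq_iSup_iInf_of_nat, liminf_eq_iSup_iInf_of_nat, iSup_eq_iUnion, hmono.measure_iUnion]
  exact iSup_mono fun N ↦ le_iInf₂ fun k hk ↦ measure_mono (iInf₂_le k hk)

/-- The perimeter of `E` for the nonlocal interaction `ν`: the interaction of `E` with its
complement. The interaction is an arbitrary measure on pairs, so that a kernel as well as a
restriction to some of the pairs can be encoded in it. -/
def nonlocalPerimeter (ν : Measure (X × X)) (E : Set X) : ℝ≥0∞ :=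
  ν (E ×ˢ Eᶜ)

variable (ν : Measure (X × X)) {E F : Set X}

lemma nonlocalPerimeter_union_add_inter_le (hE : MeasurableSet E) (hF : MeasurableSet F) :
    nonlocalPerimeter ν (E ∪ F) + nonlocalPerimeter ν (E ∩ F) ≤
      nonlocalPerimeter ν E + nonlocalPerimeter ν F := by
  unfold nonlocalPerimeter
  rw [← measure_union_add_inter _ ((hE.inter hF).prod (hE.inter hF).compl),
    ← measure_union_add_inter _ (hF.prod hF.compl)]
  refine add_le_add (measure_mono ?_) (measure_mono ?_) <;>
  · rintro ⟨x, y⟩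
    simp only [mem_union, mem_inter_iff, mem_prod, mem_compl_iff]
    tauto

lemma nonlocalPerimeter_le_liminf {f : ℕ → Set X}
    (hf : ∀ x, ∀ᶠ k in atTop, x ∈ f k ↔ x ∈ E) :
    nonlocalPerimeter ν E ≤ liminf (nonlocalPerimeter ν ∘ f) atTop := by
  refine (measure_mono ?_).trans (measure_liminf_le_liminf_measure ν fun k ↦ f k ×ˢ (f k)ᶜ)
  rintro ⟨x, y⟩ ⟨hx, hy⟩
  rw [mem_liminf_iff_eventually_mem]
  filter_upwards [hf x, hf y] with k hxk hyk
  exact ⟨hxk.2 hx, mt hyk.1 hy⟩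

theorem exists_isMinOn_nonlocalPerimeter {L : Sublattice (Set X)} (hL : (L : Set (Set X)).Nonempty)
    (hL_meas : ∀ E ∈ L, MeasurableSet E)
    (hL_iUnion : ∀ f : ℕ → Set X, (∀ k, f k ∈ L) → ⋃ k, f k ∈ L)
    (hL_iInter : ∀ f : ℕ → Set X, (∀ k, f k ∈ L) → ⋂ k, f k ∈ L) :
    ∃ E ∈ L, IsMinOn (nonlocalPerimeter ν) L E :=
  have hsub : SubmodularOn (nonlocalPerimeter ν) L := fun E hE F hF ↦
    nonlocalPerimeter_union_add_inter_le ν (hL_meas E hE) (hL_meas F hF)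
  hsub.exists_isMinOn hL hL_iUnion hL_iInter
    (fun _ hf _ ↦ nonlocalPerimeter_le_liminf ν (eventually_mem_iff_mem_iUnion hf))
    (fun _ hf _ ↦ nonlocalPerimeter_le_liminf ν (eventually_mem_iff_mem_iInter hf))

end NonlocalPerimeter

section Competitors

variable {X : Type*} [MeasurableSpace X]

/-- The competitors in `Ω` with exterior data `E₀`: the measurable sets that agree with `E₀`
almost everywhere outside `Ω`. -/
def competitors (μ : Measure X) (Ω E₀ : Set X) : Sublattice (Set X) where
  carrier := {E | MeasurableSet E ∧ (E \ Ω : Set X) =ᵐ[μ] (E₀ \ Ω : Set X)}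
  supClosed' := fun E hE F hF ↦ ⟨hE.1.union hF.1, by
    rw [sup_sdiff]
    simpa only [sup_eq_union, union_self] using ae_eq_set_union hE.2 hF.2⟩
  infClosed' := fun E hE F hF ↦ ⟨hE.1.inter hF.1, by
    rw [inf_sdiff]
    simpa only [inf_eq_inter, inter_self] using ae_eq_set_inter hE.2 hF.2⟩

variable {μ : Measure X} {Ω E₀ E : Set X}

lemma mem_competitors :
    E ∈ competitors μ Ω E₀ ↔ MeasurableSet E ∧ μ ((E \ Ω) ∆ (E₀ \ Ω)) = 0 := by
  rw [measure_symmDiff_eq_zero_iff]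
  rfl

lemma iUnion_mem_competitors {ι : Type*} [Countable ι] [Nonempty ι] {f : ι → Set X}
    (hf : ∀ k, f k ∈ competitors μ Ω E₀) : ⋃ k, f k ∈ competitors μ Ω E₀ := by
  refine ⟨MeasurableSet.iUnion fun k ↦ (hf k).1, ?_⟩
  simpa only [iUnion_sdiff, iUnion_const] using
    Filter.EventuallyEq.countable_iUnion fun k ↦ (hf k).2

lemma iInter_mem_competitors {ι : Type*} [Countable ι] [Nonempty ι] {f : ι → Set X}
    (hf : ∀ k, f k ∈ competitors μ Ω E₀) : ⋂ k, f k ∈ competitors μ Ω E₀ := by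
  refine ⟨MeasurableSet.iInter fun k ↦ (hf k).1, ?_⟩
  simpa only [sdiff_eq, ← iInter_inter, iInter_const] using
    Filter.EventuallyEq.countable_iInter fun k ↦ (hf k).2

end Competitors

section FractionalPerimeter

variable {n : ℕ} (s : ℝ)

/-- The `s`-fractional interaction measure `|x - y| ^ (-(n + s)) dx dy` on pairs of points. -/
noncomputable def fractionalInteraction (n : ℕ) (s : ℝ) :
    Measure (EuclideanSpace ℝ (Fin n) × EuclideanSpace ℝ (Fin n)) :=
  (volume.prod volume).withDensity fun p ↦ ENNReal.ofReal (dist p.1 p.2 ^ (-((n : ℝ) + s)))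

variable {A B E Ω : Set (EuclideanSpace ℝ (Fin n))}

lemma Ls_eq_fractionalInteraction (hA : MeasurableSet A) (hB : MeasurableSet B) :
    Ls n s A B = fractionalInteraction n s (A ×ˢ B) := by
  rw [fractionalInteraction, withDensity_apply _ (hA.prod hB), ← Measure.prod_restrict,
    lintegral_prod _ (by fun_prop)]
  rfl

lemma Ps_eq_nonlocalPerimeter (hE : MeasurableSet E) (hΩ : MeasurableSet Ω) :
    Ps n s E Ω = nonlocalPerimeter ((fractionalInteraction n s).restrict (Ωᶜ ×ˢ Ωᶜ)ᶜ) E := by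
  have hEi := hE.inter hΩ
  have hEo := hE.diff hΩ
  have hCi := hE.compl.inter hΩ
  have hCo := hE.compl.diff hΩ
  have hdecomp : E ×ˢ Eᶜ ∩ (Ωᶜ ×ˢ Ωᶜ)ᶜ =
      (E ∩ Ω) ×ˢ (Eᶜ ∩ Ω) ∪ (E ∩ Ω) ×ˢ (Eᶜ \ Ω) ∪ (E \ Ω) ×ˢ (Eᶜ ∩ Ω) := by
    ext ⟨x, y⟩
    simp only [mem_union, mem_inter_iff, mem_prod, mem_compl_iff, Set.mem_sdiff]
    tauto
  have hdisj : Disjoint (Eᶜ ∩ Ω) (Eᶜ \ Ω) := disjoint_sdiff_right.mono_left inter_subset_right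
  have hdisj' : Disjoint (E ∩ Ω) (E \ Ω) := disjoint_sdiff_right.mono_left inter_subset_right
  rw [Ps, Ls_eq_fractionalInteraction s hEi hCi, Ls_eq_fractionalInteraction s hEi hCo,
    Ls_eq_fractionalInteraction s hEo hCi, nonlocalPerimeter,
    Measure.restrict_apply (hE.prod hE.compl), hdecomp,
    measure_union (disjoint_union_left.2 ⟨hdisj'.set_prod_left _ _, hdisj'.set_prod_left _ _⟩)
      (hEo.prod hCi),
    measure_union (hdisj.set_prod_right _ _) (hEi.prod hCo)]

theorem exists_sMinimal_iff_exists_finite_competitor_general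
    (hΩ : MeasurableSet Ω) (E₀ : Set (EuclideanSpace ℝ (Fin n))) :
    (∃ E : Set (EuclideanSpace ℝ (Fin n)), MeasurableSet E ∧
        SMinimal n s E Ω ∧ volume ((E \ Ω) ∆ (E₀ \ Ω)) = 0)
      ↔ (∃ F : Set (EuclideanSpace ℝ (Fin n)), MeasurableSet F ∧
          volume ((F \ Ω) ∆ (E₀ \ Ω)) = 0 ∧ Ps n s F Ω < ⊤) := by
  refine ⟨fun ⟨E, hE, hmin, hE₀⟩ ↦ ⟨E, hE, hE₀, hmin.1⟩, fun ⟨F, hF, hF₀, hF_fin⟩ ↦ ?_⟩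
  obtain ⟨E, hE_mem, hE_min⟩ := exists_isMinOn_nonlocalPerimeter
    ((fractionalInteraction n s).restrict (Ωᶜ ×ˢ Ωᶜ)ᶜ) (L := competitors volume Ω E₀)
    ⟨F, mem_competitors.2 ⟨hF, hF₀⟩⟩ (fun _ hE ↦ hE.1)
    (fun _ ↦ iUnion_mem_competitors) (fun _ ↦ iInter_mem_competitors)
  obtain ⟨hE, hE₀⟩ := mem_competitors.1 hE_mem
  have hle {G : Set (EuclideanSpace ℝ (Fin n))} (hG : MeasurableSet G)
      (hG₀ : volume ((G \ Ω) ∆ (E₀ \ Ω)) = 0) : Ps n s E Ω ≤ Ps n s G Ω := by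
    rw [Ps_eq_nonlocalPerimeter s hE hΩ, Ps_eq_nonlocalPerimeter s hG hΩ]
    exact hE_min (mem_competitors.2 ⟨hG, hG₀⟩)
  refine ⟨E, hE, ⟨(hle hF hF₀).trans_lt hF_fin, fun G hG hGE ↦ hle hG ?_⟩, hE₀⟩
  rw [measure_symmDiff_eq_zero_iff] at hGE hE₀ ⊢
  exact hGE.trans hE₀

end FractionalPerimeter

/-- Theorem 1.8: an `s`-minimal set in `Ω` with exterior data `E₀ ∖ Ω` exists
if and only if there is a competitor with finite `s`-perimeter in `Ω`. -/
theorem exists_sMinimal_iff_exists_finite_competitor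
    (n : ℕ) (hn : 1 ≤ n) (s : ℝ) (hs : s ∈ Set.Ioo (0 : ℝ) 1)
    (Ω : Set (EuclideanSpace ℝ (Fin n))) (hΩ : IsOpen Ω)
    (E₀ : Set (EuclideanSpace ℝ (Fin n))) (hE₀ : MeasurableSet E₀) :
    (∃ E : Set (EuclideanSpace ℝ (Fin n)), MeasurableSet E ∧
        SMinimal n s E Ω ∧ volume ((E \ Ω) ∆ (E₀ \ Ω)) = 0)
      ↔ (∃ F : Set (EuclideanSpace ℝ (Fin n)), MeasurableSet F ∧
          volume ((F \ Ω) ∆ (E₀ \ Ω)) = 0 ∧ Ps n s F Ω < ⊤) :=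
  exists_sMinimal_iff_exists_finite_competitor_general s hΩ.measurableSet E₀
end

section
/- Let Ω ⊆ ℝ^n be any open set, s ∈ (0,1), and let E₀ ⊆ ℝ^n be any measurable set. Then there exists a measurable set E ⊆ ℝ^n that is locally s-minimal in Ω (i.e. s-minimal in every open Ω' ⊂⊂ Ω) and satisfies |(E∖Ω) Δ (E₀∖Ω)| = 0. -/
open MeasureTheory Set Filter Topology Metric Bornology
open scoped ENNReal NNReal symmDiff

/-! The fractional perimeter of `E` in `Ω` is the mass, for a measure on pairs of points, of the
pairs in `E ×ˢ Eᶜ` with an entry in `Ω`. As a function of `E` it is submodular and, by Fatou, lower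
semicontinuous under pointwise convergence. Submodularity alone turns a minimizing sequence into a
pointwise convergent one, so minimizers with given exterior datum exist as soon as the infimum is
finite, which holds when the datum is disjoint from a finite union of balls in which one minimizes.
Exhaust `Ω` by such unions `W k` and minimize in each, with exterior datum `E₀ \ Ω`: the successive
unions of the minimizers are still minimal, again by submodularity, and they increase. Their union
is minimal in every `W k`, because the perturbation of the exterior datum is controlled by dominated
convergence against the finite interaction between `W k` and its complement. -/

namespace Nonlocal

section PairMeasure

variable {X : Type*} {A E F Ω Ω' : Set X}

/-- The pairs of `E ×ˢ Eᶜ` with at least one entry in `Ω`, which are the pairs that interact in the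
perimeter of `E` in `Ω`. -/
def crossingPairs (E Ω : Set X) : Set (X × X) :=
  (E ×ˢ Eᶜ) \ (Ωᶜ ×ˢ Ωᶜ)

/-- The pairs with one entry in `A` and the other in `B`, in either order. -/
def pairsBetween (A B : Set X) : Set (X × X) :=
  A ×ˢ B ∪ B ×ˢ A

theorem mem_crossingPairs {p : X × X} :
    p ∈ crossingPairs E Ω ↔ (p.1 ∈ E ∧ p.2 ∉ E) ∧ (p.1 ∈ Ω ∨ p.2 ∈ Ω) := by
  simp only [crossingPairs, Set.mem_sdiff, mem_prod, mem_compl_iff]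
  tauto

theorem mem_pairsBetween {B : Set X} {p : X × X} :
    p ∈ pairsBetween A B ↔ (p.1 ∈ A ∧ p.2 ∈ B) ∨ (p.1 ∈ B ∧ p.2 ∈ A) :=
  Iff.rfl

theorem pairsBetween_mono_right {B C : Set X} (h : B ⊆ C) :
    pairsBetween A B ⊆ pairsBetween A C :=
  union_subset_union (prod_mono_right h) (prod_mono_left h)

theorem crossingPairs_inter_congr (h : F \ Ω' = E \ Ω') :
    crossingPairs F Ω ∩ Ω'ᶜ ×ˢ Ω'ᶜ = crossingPairs E Ω ∩ Ω'ᶜ ×ˢ Ω'ᶜ := by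
  ext p
  have h₁ := Set.ext_iff.1 h p.1
  have h₂ := Set.ext_iff.1 h p.2
  simp only [mem_inter_iff, Set.mem_sdiff, mem_crossingPairs, mem_prod, mem_compl_iff] at h₁ h₂ ⊢
  tauto

theorem crossingPairs_ite_subset {U : Set X} (hF : F \ Ω = E \ Ω) :
    crossingPairs (Ω.ite F U) Ω ⊆ crossingPairs F Ω ∪ pairsBetween Ω ((E ∆ U) \ Ω) := by
  intro p hp
  have h₁ := Set.ext_iff.1 hF p.1
  have h₂ := Set.ext_iff.1 hF p.2
  simp only [mem_crossingPairs, mem_pairsBetween, Set.ite, mem_symmDiff, mem_union, mem_inter_iff,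
    Set.mem_sdiff] at hp h₁ h₂ ⊢
  tauto

theorem eventually_mem_iff_mem_iUnion {ι : Type*} [Preorder ι] {U : ι → Set X} (hU : Monotone U)
    (x : X) : ∀ᶠ k in atTop, x ∈ U k ↔ x ∈ ⋃ k, U k := by
  by_cases hx : x ∈ ⋃ k, U k
  · obtain ⟨j, hj⟩ := mem_iUnion.1 hx
    filter_upwards [eventually_ge_atTop j] with k hk
    exact iff_of_true (hU hk hj) hx
  · exact .of_forall fun k => iff_of_false (fun hk => hx (mem_iUnion.2 ⟨k, hk⟩)) hx

theorem eventually_mem_iff_mem_iInter {ι : Type*} [Preorder ι] {U : ι → Set X} (hU : Antitone U)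
    (x : X) : ∀ᶠ k in atTop, x ∈ U k ↔ x ∈ ⋂ k, U k := by
  have hUc : Monotone fun k => (U k)ᶜ := fun _ _ hkl => compl_subset_compl.2 (hU hkl)
  filter_upwards [eventually_mem_iff_mem_iUnion hUc x] with k hk
  rwa [← compl_iInter, mem_compl_iff, mem_compl_iff, not_iff_not] at hk

variable [MeasurableSpace X] {ν : Measure (X × X)}

/-- The nonlocal perimeter of `E` in `Ω` associated with a measure `ν` on pairs of points. The
`s`-fractional perimeter is the case in which `ν` has density `|x - y| ^ (-(n + s))`. -/
noncomputable def perimeter (ν : Measure (X × X)) (E Ω : Set X) : ℝ≥0∞ :=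
  ν (crossingPairs E Ω)

/-- The measurable sets with the same exterior datum as `A` relative to `Ω`. Agreement outside `Ω`
is exact here, not merely almost everywhere. -/
def competitors (A Ω : Set X) : Set (Set X) :=
  {E | MeasurableSet E ∧ E \ Ω = A \ Ω}

/-- The infimum of the perimeter in `Ω` over all sets with the exterior datum of `A`. -/
noncomputable def minPerimeter (ν : Measure (X × X)) (A Ω : Set X) : ℝ≥0∞ :=
  ⨅ E ∈ competitors A Ω, perimeter ν E Ω

/-- Minimality of `E` in `Ω` for the nonlocal perimeter, among the sets with the exterior datum of
`E` itself. -/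
def IsMinimal (ν : Measure (X × X)) (E Ω : Set X) : Prop :=
  perimeter ν E Ω < ⊤ ∧ ∀ F ∈ competitors E Ω, perimeter ν E Ω ≤ perimeter ν F Ω

/-- Finiteness of the total interaction between `Ω` and its complement. As `ν` need not be
symmetric, both orders are included. -/
def HasFiniteCut (ν : Measure (X × X)) (Ω : Set X) : Prop :=
  ν (pairsBetween Ω Ωᶜ) < ⊤

theorem measurableSet_crossingPairs (hE : MeasurableSet E) (hΩ : MeasurableSet Ω) :
    MeasurableSet (crossingPairs E Ω) :=
  (hE.prod hE.compl).diff (hΩ.compl.prod hΩ.compl)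

theorem measurableSet_pairsBetween {B : Set X} (hA : MeasurableSet A) (hB : MeasurableSet B) :
    MeasurableSet (pairsBetween A B) :=
  (hA.prod hB).union (hB.prod hA)

theorem perimeter_union_add_perimeter_inter_le (hE : MeasurableSet E) (hF : MeasurableSet F)
    (hΩ : MeasurableSet Ω) :
    perimeter ν (E ∪ F) Ω + perimeter ν (E ∩ F) Ω ≤ perimeter ν E Ω + perimeter ν F Ω := by
  unfold perimeter
  rw [← measure_union_add_inter (crossingPairs (E ∪ F) Ω)
      (measurableSet_crossingPairs (hE.inter hF) hΩ),
    ← measure_union_add_inter (crossingPairs E Ω) (measurableSet_crossingPairs hF hΩ)]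
  refine add_le_add (measure_mono fun p hp => ?_) (measure_mono fun p hp => ?_) <;>
  · simp only [mem_union, mem_inter_iff, mem_crossingPairs] at hp ⊢
    tauto

theorem perimeter_lt_top_of_disjoint (hΩ : HasFiniteCut ν Ω) (h : Disjoint E Ω) :
    perimeter ν E Ω < ⊤ := by
  refine (measure_mono fun p hp => ?_).trans_lt hΩ
  have := disjoint_left.1 h
  simp only [mem_crossingPairs, mem_pairsBetween, mem_compl_iff] at hp ⊢
  tauto

theorem perimeter_congr_ae {μ : Measure X} (hν : ν ≪ μ.prod μ) (h : E =ᵐ[μ] F) :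
    perimeter ν E Ω = perimeter ν F Ω :=
  have h₁ := Measure.quasiMeasurePreserving_fst (ν := μ).preimage_ae_eq h
  have h₂ := Measure.quasiMeasurePreserving_snd (μ := μ).preimage_ae_eq h.compl
  measure_congr (hν.ae_eq ((h₁.inter h₂).diff ae_eq_rfl))

/-! ### Lower semicontinuity -/

theorem measure_le_liminf_of_forall_eventually_mem {α : Type*} [MeasurableSpace α] {μ : Measure α}
    {s : Set α} {t : ℕ → Set α} (h : ∀ x ∈ s, ∀ᶠ k in atTop, x ∈ t k) :
    μ s ≤ liminf (fun k => μ (t k)) atTop := by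
  have hsub : s ⊆ ⋃ k, ⋂ i ≥ k, t i := fun x hx => by
    simpa only [mem_iUnion, mem_iInter, eventually_atTop] using h x hx
  have hmono : Monotone fun k => ⋂ i ≥ k, t i := fun k l hkl =>
    biInter_mono (fun _ hi => hkl.trans hi) fun _ _ => subset_rfl
  rw [liminf_eq_iSup_iInf_of_nat]
  calc μ s ≤ μ (⋃ k, ⋂ i ≥ k, t i) := measure_mono hsub
    _ = ⨆ k, μ (⋂ i ≥ k, t i) := hmono.measure_iUnion
    _ ≤ ⨆ k, ⨅ i ≥ k, μ (t i) :=
      iSup_mono fun _ => le_iInf₂ fun i hi => measure_mono (iInter₂_subset i hi)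

theorem perimeter_le_of_tendsto {U : ℕ → Set X} {b : ℕ → ℝ≥0∞} {c : ℝ≥0∞}
    (hU : ∀ x, ∀ᶠ k in atTop, x ∈ U k ↔ x ∈ E) (hb : Tendsto b atTop (𝓝 c))
    (h : ∀ᶠ k in atTop, perimeter ν (U k) Ω ≤ b k) : perimeter ν E Ω ≤ c := by
  have hmem : ∀ p ∈ crossingPairs E Ω, ∀ᶠ k in atTop, p ∈ crossingPairs (U k) Ω := fun p hp => by
    filter_upwards [hU p.1, hU p.2] with k h₁ h₂
    rwa [mem_crossingPairs, h₁, h₂, ← mem_crossingPairs]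
  calc perimeter ν E Ω ≤ liminf (fun k => perimeter ν (U k) Ω) atTop :=
      measure_le_liminf_of_forall_eventually_mem hmem
    _ ≤ liminf b atTop := liminf_le_liminf h
    _ = c := hb.liminf_eq

/-! ### Existence of minimizers -/

theorem self_mem_competitors (hA : MeasurableSet A) : A ∈ competitors A Ω :=
  ⟨hA, rfl⟩

theorem competitors_mono (h : Ω' ⊆ Ω) : competitors A Ω' ⊆ competitors A Ω := fun E hE =>
  ⟨hE.1, by rw [← union_eq_self_of_subset_left h, ← sdiff_sdiff, ← sdiff_sdiff, hE.2]⟩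

theorem union_mem_competitors (hE : E ∈ competitors A Ω) (hF : F ∈ competitors A Ω) :
    E ∪ F ∈ competitors A Ω :=
  ⟨hE.1.union hF.1, by rw [union_sdiff_distrib, hE.2, hF.2, union_self]⟩

theorem inter_mem_competitors (hE : E ∈ competitors A Ω) (hF : F ∈ competitors A Ω) :
    E ∩ F ∈ competitors A Ω :=
  ⟨hE.1.inter hF.1, by rw [sdiff_inter_distrib_right, hE.2, hF.2, inter_self]⟩

theorem iUnion_mem_competitors {ι : Sort*} [Countable ι] [Nonempty ι] {G : ι → Set X}
    (hG : ∀ k, G k ∈ competitors A Ω) : ⋃ k, G k ∈ competitors A Ω :=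
  ⟨.iUnion fun k => (hG k).1, by simp only [iUnion_sdiff, (hG _).2, iUnion_const]⟩

theorem iInter_mem_competitors {ι : Sort*} [Countable ι] [Nonempty ι] {G : ι → Set X}
    (hG : ∀ k, G k ∈ competitors A Ω) : ⋂ k, G k ∈ competitors A Ω :=
  ⟨.iInter fun k => (hG k).1, by
    rw [Set.sdiff_eq, iInter_inter, ← iInter_const (ι := ι) (A \ Ω)]
    exact iInter_congr fun k => (hG k).2⟩

theorem accumulate_mem_competitors {G : ℕ → Set X} (hG : ∀ k, G k ∈ competitors A Ω) (j : ℕ) :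
    accumulate G j ∈ competitors A Ω := by
  induction j with
  | zero => simpa only [accumulate_zero_nat] using hG 0
  | succ j ih => simpa only [accumulate_succ] using union_mem_competitors ih (hG _)

theorem minPerimeter_le (hE : E ∈ competitors A Ω) : minPerimeter ν A Ω ≤ perimeter ν E Ω :=
  iInf₂_le E hE

theorem perimeter_union_le {a b : ℝ≥0∞} (hΩ : MeasurableSet Ω) (hfin : minPerimeter ν A Ω ≠ ⊤)
    (hE : E ∈ competitors A Ω) (hF : F ∈ competitors A Ω)
    (ha : perimeter ν E Ω ≤ minPerimeter ν A Ω + a)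
    (hb : perimeter ν F Ω ≤ minPerimeter ν A Ω + b) :
    perimeter ν (E ∪ F) Ω ≤ minPerimeter ν A Ω + (a + b) := by
  refine (ENNReal.add_le_add_iff_right hfin).1 ?_
  calc perimeter ν (E ∪ F) Ω + minPerimeter ν A Ω
      ≤ perimeter ν (E ∪ F) Ω + perimeter ν (E ∩ F) Ω := by
        gcongr; exact minPerimeter_le (inter_mem_competitors hE hF)
    _ ≤ perimeter ν E Ω + perimeter ν F Ω :=
        perimeter_union_add_perimeter_inter_le hE.1 hF.1 hΩ
    _ ≤ (minPerimeter ν A Ω + a) + (minPerimeter ν A Ω + b) := add_le_add ha hb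
    _ = minPerimeter ν A Ω + (a + b) + minPerimeter ν A Ω := by ring

theorem perimeter_accumulate_le {G : ℕ → Set X} {ε : ℕ → ℝ≥0∞} (hΩ : MeasurableSet Ω)
    (hfin : minPerimeter ν A Ω ≠ ⊤) (hG : ∀ k, G k ∈ competitors A Ω)
    (hε : ∀ k, perimeter ν (G k) Ω ≤ minPerimeter ν A Ω + ε k) (j : ℕ) :
    perimeter ν (accumulate G j) Ω ≤ minPerimeter ν A Ω + ∑ k ∈ Finset.range (j + 1), ε k := by
  induction j with
  | zero => simpa using hε 0
  | succ j ih =>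
    rw [accumulate_succ, Finset.sum_range_succ]
    exact perimeter_union_le hΩ hfin (accumulate_mem_competitors hG j) (hG _) ih (hε _)

theorem perimeter_iUnion_le {G : ℕ → Set X} {ε : ℕ → ℝ≥0∞} (hΩ : MeasurableSet Ω)
    (hfin : minPerimeter ν A Ω ≠ ⊤) (hG : ∀ k, G k ∈ competitors A Ω)
    (hε : ∀ k, perimeter ν (G k) Ω ≤ minPerimeter ν A Ω + ε k) :
    perimeter ν (⋃ k, G k) Ω ≤ minPerimeter ν A Ω + ∑' k, ε k := by
  have hlim := eventually_mem_iff_mem_iUnion (monotone_accumulate (s := G))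
  rw [iUnion_accumulate] at hlim
  refine perimeter_le_of_tendsto hlim tendsto_const_nhds (.of_forall fun j => ?_)
  exact (perimeter_accumulate_le hΩ hfin hG hε j).trans (by gcongr; exact ENNReal.sum_le_tsum _)

theorem exists_mem_competitors_perimeter_le {ε : ℝ≥0∞} (hfin : minPerimeter ν A Ω ≠ ⊤)
    (hε : ε ≠ 0) : ∃ E ∈ competitors A Ω, perimeter ν E Ω ≤ minPerimeter ν A Ω + ε := by
  have hlt : minPerimeter ν A Ω < minPerimeter ν A Ω + ε := ENNReal.lt_add_right hfin hε
  obtain ⟨E, hE, hEε⟩ := by simpa only [minPerimeter, iInf_lt_iff, exists_prop] using hlt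
  exact ⟨E, hE, hEε.le⟩

/-- By submodularity the excess over the infimum is countably subadditive under unions, so the
limit superior of a minimizing sequence with summable excess is a minimizer; no compactness is
involved. -/
theorem exists_mem_competitors_isMinimal (hA : MeasurableSet A) (hΩ : MeasurableSet Ω)
    (hAΩ : perimeter ν A Ω < ⊤) : ∃ E ∈ competitors A Ω, IsMinimal ν E Ω := by
  have hlt : minPerimeter ν A Ω < ⊤ := (minPerimeter_le (self_mem_competitors hA)).trans_lt hAΩ
  let ε : ℕ → ℝ≥0∞ := fun k => 2⁻¹ ^ k
  have hε : ∑' k, ε k ≠ ⊤ := by simp [ε]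
  choose G hG hGε using fun k =>
    exists_mem_competitors_perimeter_le hlt.ne (show ε k ≠ 0 by simp [ε])
  let V : ℕ → Set X := fun N => ⋃ k, G (k + N)
  have hVanti : Antitone V := antitone_nat_of_succ_le fun N => iUnion_subset fun k => by
    simpa only [add_assoc, add_comm 1 N] using subset_iUnion (fun k => G (k + N)) (k + 1)
  have hVε : ∀ N, perimeter ν (V N) Ω ≤ minPerimeter ν A Ω + ∑' k, ε (k + N) := fun N =>
    perimeter_iUnion_le hΩ hlt.ne (fun k => hG (k + N)) fun k => hGε (k + N)
  have hlim : Tendsto (fun N => minPerimeter ν A Ω + ∑' k, ε (k + N)) atTop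
      (𝓝 (minPerimeter ν A Ω)) := by
    simpa using (ENNReal.tendsto_sum_nat_add ε hε).const_add (minPerimeter ν A Ω)
  have hmin : perimeter ν (⋂ N, V N) Ω ≤ minPerimeter ν A Ω :=
    perimeter_le_of_tendsto (eventually_mem_iff_mem_iInter hVanti) hlim (.of_forall hVε)
  have hV : ⋂ N, V N ∈ competitors A Ω :=
    iInter_mem_competitors fun N => iUnion_mem_competitors fun k => hG (k + N)
  exact ⟨_, hV, hmin.trans_lt hlt, fun F hF => hmin.trans (minPerimeter_le ⟨hF.1, hF.2.trans hV.2⟩)⟩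

/-! ### Dependence on the domain -/

theorem perimeter_add_measure_inter (hΩ' : MeasurableSet Ω') (h : Ω' ⊆ Ω) :
    perimeter ν E Ω' + ν (crossingPairs E Ω ∩ Ω'ᶜ ×ˢ Ω'ᶜ) = perimeter ν E Ω := by
  have hsdiff : crossingPairs E Ω' = crossingPairs E Ω \ Ω'ᶜ ×ˢ Ω'ᶜ := by
    ext p
    have := @h p.1
    have := @h p.2
    simp only [Set.mem_sdiff, mem_crossingPairs, mem_prod, mem_compl_iff]
    tauto
  rw [perimeter, hsdiff, measure_sdiff_add_inter _ (hΩ'.compl.prod hΩ'.compl), perimeter]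

theorem perimeter_le_perimeter_of_subset (hΩ' : MeasurableSet Ω') (h : Ω' ⊆ Ω)
    (hFE : F \ Ω' = E \ Ω') (hle : perimeter ν F Ω' ≤ perimeter ν E Ω') :
    perimeter ν F Ω ≤ perimeter ν E Ω := by
  rw [← perimeter_add_measure_inter hΩ' h, ← perimeter_add_measure_inter hΩ' h,
    crossingPairs_inter_congr hFE]
  gcongr

theorem IsMinimal.mono (hE : IsMinimal ν E Ω) (hΩ' : MeasurableSet Ω') (h : Ω' ⊆ Ω) :
    IsMinimal ν E Ω' := by
  have hfin := hE.1
  rw [← perimeter_add_measure_inter hΩ' h, ENNReal.add_lt_top] at hfin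
  refine ⟨hfin.1, fun F hF => (ENNReal.add_le_add_iff_right hfin.2.ne).1 ?_⟩
  calc perimeter ν E Ω' + ν (crossingPairs E Ω ∩ Ω'ᶜ ×ˢ Ω'ᶜ)
      = perimeter ν E Ω := perimeter_add_measure_inter hΩ' h
    _ ≤ perimeter ν F Ω := hE.2 F (competitors_mono h hF)
    _ = perimeter ν F Ω' + ν (crossingPairs E Ω ∩ Ω'ᶜ ×ˢ Ω'ᶜ) := by
      rw [← perimeter_add_measure_inter hΩ' h, crossingPairs_inter_congr hF.2]

theorem IsMinimal.of_mem_competitors (hF : IsMinimal ν F Ω) (hE : E ∈ competitors F Ω)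
    (hle : perimeter ν E Ω ≤ perimeter ν F Ω) : IsMinimal ν E Ω :=
  ⟨hle.trans_lt hF.1, fun G hG => hle.trans (hF.2 G ⟨hG.1, hG.2.trans hE.2⟩)⟩

theorem union_mem_competitors_of_sdiff_subset (hE : MeasurableSet E) (hF : MeasurableSet F)
    (h : E \ Ω ⊆ F) : E ∪ F ∈ competitors F Ω :=
  ⟨hE.union hF, by rw [union_sdiff_distrib, union_eq_right]; exact fun x hx => ⟨h hx, hx.2⟩⟩

theorem inter_mem_competitors_of_sdiff_subset (hE : MeasurableSet E) (hF : MeasurableSet F)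
    (h : E \ Ω ⊆ F) : E ∩ F ∈ competitors E Ω :=
  ⟨hE.inter hF, by rw [← sdiff_inter_right_comm, inter_eq_left.2 h]⟩

theorem IsMinimal.union (hE : IsMinimal ν E Ω') (hF : IsMinimal ν F Ω) (hEm : MeasurableSet E)
    (hFm : MeasurableSet F) (hΩ' : MeasurableSet Ω') (h : Ω' ⊆ Ω) (hEF : E \ Ω' ⊆ F) :
    IsMinimal ν (E ∪ F) Ω := by
  have hunion : E ∪ F ∈ competitors F Ω' := union_mem_competitors_of_sdiff_subset hEm hFm hEF
  refine hF.of_mem_competitors (competitors_mono h hunion)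
    (perimeter_le_perimeter_of_subset hΩ' h hunion.2 ?_)
  refine (ENNReal.add_le_add_iff_right hE.1.ne).1 ?_
  calc perimeter ν (E ∪ F) Ω' + perimeter ν E Ω'
      ≤ perimeter ν (E ∪ F) Ω' + perimeter ν (E ∩ F) Ω' := by
        gcongr; exact hE.2 _ (inter_mem_competitors_of_sdiff_subset hEm hFm hEF)
    _ ≤ perimeter ν E Ω' + perimeter ν F Ω' := perimeter_union_add_perimeter_inter_le hEm hFm hΩ'
    _ = perimeter ν F Ω' + perimeter ν E Ω' := add_comm _ _

/-! ### Pointwise limits of minimizers -/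

theorem tendsto_measure_pairsBetween_symmDiff_sdiff {U : ℕ → Set X} (hΩ : MeasurableSet Ω)
    (hcut : HasFiniteCut ν Ω) (hE : MeasurableSet E) (hUm : ∀ k, MeasurableSet (U k))
    (hU : ∀ x, ∀ᶠ k in atTop, x ∈ U k ↔ x ∈ E) :
    Tendsto (fun k => ν (pairsBetween Ω ((E ∆ U k) \ Ω))) atTop (𝓝 0) := by
  rw [← measure_empty (μ := ν)]
  refine tendsto_measure_of_tendsto_indicator atTop
    (fun k => measurableSet_pairsBetween hΩ ((hE.symmDiff (hUm k)).diff hΩ))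
    (measurableSet_pairsBetween hΩ hΩ.compl) hcut.ne
    (.of_forall fun k => pairsBetween_mono_right fun x hx => hx.2) fun p => ?_
  filter_upwards [hU p.1, hU p.2] with k h₁ h₂
  simp only [mem_pairsBetween, mem_symmDiff, Set.mem_sdiff, mem_empty_iff_false]
  tauto

theorem isMinimal_of_forall_eventually_mem_iff {U : ℕ → Set X} (hΩ : MeasurableSet Ω)
    (hcut : HasFiniteCut ν Ω) (hE : MeasurableSet E) (hUm : ∀ k, MeasurableSet (U k))
    (hU : ∀ x, ∀ᶠ k in atTop, x ∈ U k ↔ x ∈ E) (hmin : ∀ᶠ k in atTop, IsMinimal ν (U k) Ω) :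
    IsMinimal ν E Ω := by
  have hle : ∀ F ∈ competitors E Ω, perimeter ν E Ω ≤ perimeter ν F Ω := fun F hF => by
    have hlim : Tendsto (fun k => perimeter ν F Ω + ν (pairsBetween Ω ((E ∆ U k) \ Ω))) atTop
        (𝓝 (perimeter ν F Ω)) := by
      simpa using (tendsto_measure_pairsBetween_symmDiff_sdiff hΩ hcut hE hUm hU).const_add
        (perimeter ν F Ω)
    refine perimeter_le_of_tendsto hU hlim ?_
    filter_upwards [hmin] with k hk
    calc perimeter ν (U k) Ω ≤ perimeter ν (Ω.ite F (U k)) Ω :=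
          hk.2 _ ⟨hΩ.ite hF.1 (hUm k), ite_sdiff_self _ _ _⟩
      _ ≤ perimeter ν F Ω + ν (pairsBetween Ω ((E ∆ U k) \ Ω)) :=
          (measure_mono (crossingPairs_ite_subset hF.2)).trans (measure_union_le _ _)
  refine ⟨(hle (E \ Ω) ⟨hE.diff hΩ, sdiff_idem⟩).trans_lt ?_, hle⟩
  exact perimeter_lt_top_of_disjoint hcut disjoint_sdiff_left

theorem accumulate_mem_competitors_and_isMinimal {W G : ℕ → Set X} (hW : ∀ k, MeasurableSet (W k))
    (hWm : Monotone W) (hAW : ∀ k, Disjoint A (W k)) (hG : ∀ k, G k ∈ competitors A (W k))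
    (hmin : ∀ k, IsMinimal ν (G k) (W k)) (k : ℕ) :
    accumulate G k ∈ competitors A (W k) ∧ IsMinimal ν (accumulate G k) (W k) := by
  induction k with
  | zero => simpa only [accumulate_zero_nat] using ⟨hG 0, hmin 0⟩
  | succ k ih =>
    have hsub : accumulate G k \ W k ⊆ G (k + 1) := by
      rw [ih.1.2, (hAW k).sdiff_eq_left, ← (hAW (k + 1)).sdiff_eq_left, ← (hG (k + 1)).2]
      exact sdiff_subset
    rw [accumulate_succ]
    exact ⟨union_mem_competitors (competitors_mono (hWm k.le_succ) ih.1) (hG _),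
      ih.2.union (hmin _) ih.1.1 (hG _).1 (hW k) (hWm k.le_succ) hsub⟩

theorem exists_mem_competitors_iUnion_forall_isMinimal {W : ℕ → Set X} (hA : MeasurableSet A)
    (hW : ∀ k, MeasurableSet (W k)) (hWm : Monotone W) (hcut : ∀ k, HasFiniteCut ν (W k)) :
    ∃ E ∈ competitors A (⋃ k, W k), ∀ k, IsMinimal ν E (W k) := by
  let B := A \ ⋃ k, W k
  have hBm : MeasurableSet B := hA.diff (.iUnion hW)
  have hBW : ∀ k, Disjoint B (W k) := fun k => disjoint_sdiff_left.mono_right (subset_iUnion W k)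
  choose G hG hGmin using fun k => exists_mem_competitors_isMinimal hBm (hW k)
    (perimeter_lt_top_of_disjoint (hcut k) (hBW k))
  have hacc := accumulate_mem_competitors_and_isMinimal hW hWm hBW hG hGmin
  have hGB : ⋃ k, G k ∈ competitors B (⋃ k, W k) :=
    iUnion_mem_competitors fun k => competitors_mono (subset_iUnion W k) (hG k)
  have hlim := eventually_mem_iff_mem_iUnion (monotone_accumulate (s := G))
  rw [iUnion_accumulate] at hlim
  refine ⟨⋃ k, G k, ⟨hGB.1, hGB.2.trans sdiff_idem⟩, fun j => ?_⟩
  refine isMinimal_of_forall_eventually_mem_iff (hW j) (hcut j) hGB.1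
    (fun k => (hacc k).1.1) hlim ?_
  filter_upwards [eventually_ge_atTop j] with k hk
  exact (hacc k).2.mono (hW j) (hWm hk)

/-! ### Exhaustion by sets with finite cut -/

theorem hasFiniteCut_empty : HasFiniteCut ν ∅ := by
  simp [HasFiniteCut, pairsBetween]

theorem HasFiniteCut.union (hE : HasFiniteCut ν E) (hF : HasFiniteCut ν F) :
    HasFiniteCut ν (E ∪ F) := by
  refine (measure_mono fun p hp => ?_).trans_lt
    ((measure_union_le _ _).trans_lt (ENNReal.add_lt_top.2 ⟨hE, hF⟩))
  simp only [mem_pairsBetween, mem_union, mem_compl_iff] at hp ⊢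
  tauto

theorem HasFiniteCut.accumulate {B : ℕ → Set X} (hB : ∀ k, HasFiniteCut ν (B k)) (k : ℕ) :
    HasFiniteCut ν (accumulate B k) := by
  induction k with
  | zero => simpa only [accumulate_zero_nat] using hB 0
  | succ k ih => simpa only [accumulate_succ] using ih.union (hB _)

end PairMeasure

theorem exists_monotone_isOpen_hasFiniteCut_iUnion_eq {X : Type*} [PseudoMetricSpace X]
    [SecondCountableTopology X] [MeasurableSpace X] {ν : Measure (X × X)}
    (hball : ∀ (c : X) (r : ℝ), 0 < r → HasFiniteCut ν (ball c r)) {Ω : Set X} (hΩ : IsOpen Ω) :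
    ∃ W : ℕ → Set X, Monotone W ∧ (∀ k, IsOpen (W k) ∧ HasFiniteCut ν (W k)) ∧ ⋃ k, W k = Ω := by
  have hbasis : TopologicalSpace.IsTopologicalBasis {U : Set X | IsOpen U ∧ HasFiniteCut ν U} := by
    refine TopologicalSpace.isTopologicalBasis_of_isOpen_of_nhds (fun U hU => hU.1)
      fun x U hx hU => ?_
    obtain ⟨r, hr, hrU⟩ := Metric.isOpen_iff.1 hU x hx
    exact ⟨ball x r, ⟨isOpen_ball, hball x r hr⟩, mem_ball_self hr, hrU⟩
  obtain ⟨S, hS, rfl⟩ := hbasis.open_eq_sUnion hΩ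
  obtain ⟨T, hTc, hTS, hT⟩ := TopologicalSpace.isOpen_sUnion_countable S fun U hU => (hS hU).1
  obtain ⟨B, hB⟩ := (hTc.insert ∅).exists_eq_range (insert_nonempty ∅ T)
  have hBfin : ∀ k, IsOpen (B k) ∧ HasFiniteCut ν (B k) := fun k => by
    rcases hB ▸ mem_range_self k with h | h
    · exact h ▸ ⟨isOpen_empty, hasFiniteCut_empty⟩
    · exact hS (hTS h)
  refine ⟨accumulate B, monotone_accumulate,
    fun k => ⟨isOpen_biUnion fun i _ => (hBfin i).1, .accumulate (fun i => (hBfin i).2) k⟩, ?_⟩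
  rw [iUnion_accumulate, ← sUnion_range, ← hB, sUnion_insert, empty_union, hT]

/-! ### The fractional interaction measure -/

section Interaction

variable {X : Type*} [PseudoMetricSpace X] [MeasurableSpace X]

/-- The measure on pairs of points with density `dist x y ^ (-a)`. For Lebesgue measure on `ℝ^n` and
`a = n + s` its nonlocal perimeter is the `s`-fractional perimeter. -/
noncomputable def interactionMeasure (μ : Measure X) (a : ℝ) : Measure (X × X) :=
  (μ.prod μ).withDensity fun p => ENNReal.ofReal (dist p.1 p.2 ^ (-a))

theorem interactionMeasure_absolutelyContinuous (μ : Measure X) (a : ℝ) :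
    interactionMeasure μ a ≪ μ.prod μ :=
  withDensity_absolutelyContinuous _ _

variable [OpensMeasurableSpace X] [SecondCountableTopology X] {μ : Measure X} [SFinite μ] {a : ℝ}
  {A B : Set X}

theorem interactionMeasure_prod (hA : MeasurableSet A) (hB : MeasurableSet B) :
    interactionMeasure μ a (A ×ˢ B) =
      ∫⁻ x in A, ∫⁻ y in B, ENNReal.ofReal (dist x y ^ (-a)) ∂μ ∂μ := by
  rw [interactionMeasure, withDensity_apply _ (hA.prod hB), ← Measure.prod_restrict,
    lintegral_prod _ (by fun_prop)]

theorem interactionMeasure_prod_comm (hA : MeasurableSet A) (hB : MeasurableSet B) :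
    interactionMeasure μ a (A ×ˢ B) = interactionMeasure μ a (B ×ˢ A) := by
  rw [interactionMeasure_prod hA hB, interactionMeasure_prod hB hA,
    lintegral_lintegral_swap (by fun_prop)]
  simp only [dist_comm]

theorem hasFiniteCut_interactionMeasure (hA : MeasurableSet A)
    (h : interactionMeasure μ a (A ×ˢ Aᶜ) < ⊤) : HasFiniteCut (interactionMeasure μ a) A :=
  (measure_union_le _ _).trans_lt
    (ENNReal.add_lt_top.2 ⟨h, by rwa [interactionMeasure_prod_comm hA.compl hA]⟩)

end Interaction

/-! ### Finiteness of the fractional perimeter of a ball -/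

theorem setLIntegral_setLIntegral_neg_add {G : Type*} [AddGroup G] [MeasurableSpace G]
    [MeasurableAdd₂ G] {μ : Measure G} [SFinite μ] [μ.IsAddLeftInvariant]
    {k : G → ℝ≥0∞} (hk : Measurable k) {A B : Set G} (hB : MeasurableSet B) :
    ∫⁻ x in A, ∫⁻ y in B, k (-x + y) ∂μ ∂μ = ∫⁻ h, k h * μ ((· + h) ⁻¹' B ∩ A) ∂μ := by
  have hinner : ∀ x, ∫⁻ y in B, k (-x + y) ∂μ = ∫⁻ h, B.indicator (fun _ => k h) (x + h) ∂μ := by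
    intro x
    rw [← lintegral_indicator hB, ← lintegral_add_left_eq_self _ x]
    simp only [indicator, neg_add_cancel_left]
  have hmeas : Measurable fun p : G × G => B.indicator (fun _ => k p.2) (p.1 + p.2) :=
    (hk.comp measurable_snd).indicator (measurable_add hB)
  simp only [hinner]
  rw [lintegral_lintegral_swap hmeas.aemeasurable]
  refine lintegral_congr fun h => ?_
  have hBh : MeasurableSet ((· + h) ⁻¹' B) := measurable_add_const h hB
  rw [← Measure.restrict_apply hBh, ← lintegral_indicator_const hBh]
  rfl

theorem preimage_add_compl_ball_inter_ball_subset {G : Type*} [SeminormedAddCommGroup G] (c h : G)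
    (r : ℝ) : (· + h) ⁻¹' (ball c r)ᶜ ∩ ball c r ⊆ ball c r \ ball c (r - ‖h‖) := by
  refine fun x hx => ⟨hx.2, fun hxc => hx.1 ?_⟩
  calc dist (x + h) c ≤ dist (x + h) x + dist x c := dist_triangle _ _ _
    _ < ‖h‖ + (r - ‖h‖) := by
      rw [dist_self_add_left]
      gcongr
      exact hxc
    _ = r := add_sub_cancel _ _

theorem integrableOn_Ioi_rpow_mul_min {s r : ℝ} (hs : s ∈ Ioo (0 : ℝ) 1) (hr : 0 < r) :
    IntegrableOn (fun t : ℝ => t ^ (-1 - s) * min 1 (t / r)) (Ioi 0) := by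
  rw [← Ioc_union_Ioi_eq_Ioi hr.le]
  refine IntegrableOn.union ?_ ?_
  · have hnear : IntegrableOn (fun t : ℝ => t ^ (-s) / r) (Ioc 0 r) := by
      rw [← intervalIntegrable_iff_integrableOn_Ioc_of_le hr.le]
      exact (intervalIntegral.intervalIntegrable_rpow' (by linarith [hs.2])).div_const r
    refine hnear.congr_fun (fun t ht => ?_) measurableSet_Ioc
    have ht_pow : t ^ (-s) = t ^ (-1 - s) * t := by
      rw [← Real.rpow_add_one ht.1.ne', sub_add_eq_add_sub, neg_add_cancel, zero_sub]
    simp only [min_eq_right ((div_le_one hr).2 ht.2), ht_pow, mul_div_assoc]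
  · have hfar : IntegrableOn (fun t : ℝ => t ^ (-1 - s)) (Ioi r) :=
      integrableOn_Ioi_rpow_of_lt (by linarith [hs.1]) hr
    refine hfar.congr_fun (fun t ht => ?_) measurableSet_Ioi
    simp only [min_eq_left ((one_le_div hr).2 (le_of_lt ht)), mul_one]

section NormedSpace

open Module (finrank)

variable {E : Type*} [NormedAddCommGroup E] [NormedSpace ℝ E] [FiniteDimensional ℝ E]
  [Nontrivial E] [MeasurableSpace E] [BorelSpace E] {μ : Measure E} [μ.IsAddHaarMeasure] {s r : ℝ}

theorem integrable_norm_rpow_mul_min (hs : s ∈ Ioo (0 : ℝ) 1) (hr : 0 < r) :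
    Integrable (fun h : E => ‖h‖ ^ (-(finrank ℝ E + s)) * min 1 (‖h‖ / r)) μ := by
  refine (integrable_fun_norm_addHaar μ
    (f := fun t : ℝ => t ^ (-(finrank ℝ E + s)) * min 1 (t / r))).2 ?_
  refine (integrableOn_Ioi_rpow_mul_min hs hr).congr_fun (fun t ht => ?_) measurableSet_Ioi
  have hexp : (-1 - s : ℝ) = (finrank ℝ E - 1 : ℕ) + -(finrank ℝ E + s) := by
    rw [Nat.cast_pred Module.finrank_pos]
    ring
  simp only [smul_eq_mul]
  rw [hexp, Real.rpow_add ht, Real.rpow_natCast, mul_assoc]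

theorem measure_ball_sdiff_ball_sub_le (c : E) (hr : 0 < r) {t : ℝ} (ht : 0 ≤ t) :
    μ (ball c r \ ball c (r - t)) ≤
      ENNReal.ofReal (finrank ℝ E * min 1 (t / r)) * μ (ball c r) := by
  rcases le_total t r with htr | hrt
  · let q := 1 - t / r
    have hq : 0 ≤ q := sub_nonneg.2 ((div_le_one hr).2 htr)
    have hrq : r - t = r * q := by
      simp only [q]
      field_simp
    have hinner : μ (ball c (r - t)) = ENNReal.ofReal (q ^ finrank ℝ E) * μ (ball c r) := by
      rw [hrq, Measure.addHaar_ball μ c (by positivity), Measure.addHaar_ball μ c hr.le, mul_pow,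
        mul_comm (r ^ _), ENNReal.ofReal_mul (by positivity), mul_assoc]
    have hbernoulli : 1 - q ^ finrank ℝ E ≤ finrank ℝ E * (t / r) := by
      have := one_add_mul_sub_le_pow (n := finrank ℝ E) (show -1 ≤ q by linarith)
      simp only [q] at this ⊢
      linarith
    rw [measure_sdiff (ball_subset_ball (sub_le_self r ht)) measurableSet_ball.nullMeasurableSet
      measure_ball_lt_top.ne, hinner, min_eq_right ((div_le_one hr).2 htr)]
    calc μ (ball c r) - ENNReal.ofReal (q ^ finrank ℝ E) * μ (ball c r)
        = ENNReal.ofReal (1 - q ^ finrank ℝ E) * μ (ball c r) := by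
          rw [ENNReal.ofReal_sub _ (by positivity), ENNReal.ofReal_one,
            ENNReal.sub_mul fun _ _ => measure_ball_lt_top.ne, one_mul]
      _ ≤ ENNReal.ofReal (finrank ℝ E * (t / r)) * μ (ball c r) := by gcongr
  · rw [min_eq_left ((one_le_div hr).2 hrt), mul_one, ENNReal.ofReal_natCast]
    calc μ (ball c r \ ball c (r - t)) ≤ μ (ball c r) := measure_mono sdiff_subset
      _ ≤ finrank ℝ E * μ (ball c r) :=
        le_mul_of_one_le_left' (Nat.one_le_cast.2 Module.finrank_pos)

theorem interactionMeasure_ball_prod_compl_lt_top (hs : s ∈ Ioo (0 : ℝ) 1) (c : E) (hr : 0 < r) :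
    interactionMeasure μ (finrank ℝ E + s) (ball c r ×ˢ (ball c r)ᶜ) < ⊤ := by
  let k : E → ℝ≥0∞ := fun h => ENNReal.ofReal (‖h‖ ^ (-(finrank ℝ E + s)))
  have hC : ENNReal.ofReal (finrank ℝ E) * μ (ball c r) < ⊤ :=
    ENNReal.mul_lt_top ENNReal.ofReal_lt_top measure_ball_lt_top
  calc interactionMeasure μ (finrank ℝ E + s) (ball c r ×ˢ (ball c r)ᶜ)
      = ∫⁻ x in ball c r, ∫⁻ y in (ball c r)ᶜ, k (-x + y) ∂μ ∂μ := by
        rw [interactionMeasure_prod measurableSet_ball measurableSet_ball.compl]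
        simp only [k, dist_eq_norm_neg_add]
    _ = ∫⁻ h, k h * μ ((· + h) ⁻¹' (ball c r)ᶜ ∩ ball c r) ∂μ :=
        setLIntegral_setLIntegral_neg_add (by fun_prop) measurableSet_ball.compl
    _ ≤ ∫⁻ h, ENNReal.ofReal (finrank ℝ E) * μ (ball c r) *
          ENNReal.ofReal (‖h‖ ^ (-(finrank ℝ E + s)) * min 1 (‖h‖ / r)) ∂μ := by
        refine lintegral_mono fun h => ?_
        grw [preimage_add_compl_ball_inter_ball_subset c h r,
          measure_ball_sdiff_ball_sub_le c hr (norm_nonneg h)]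
        rw [ENNReal.ofReal_mul (by positivity), ENNReal.ofReal_mul (by positivity)]
        exact le_of_eq (by ring)
    _ = ENNReal.ofReal (finrank ℝ E) * μ (ball c r) *
          ∫⁻ h, ENNReal.ofReal (‖h‖ ^ (-(finrank ℝ E + s)) * min 1 (‖h‖ / r)) ∂μ :=
        lintegral_const_mul' _ _ hC.ne
    _ < ⊤ := ENNReal.mul_lt_top hC (integrable_norm_rpow_mul_min hs hr).lintegral_lt_top

theorem hasFiniteCut_ball (hs : s ∈ Ioo (0 : ℝ) 1) (c : E) (hr : 0 < r) :
    HasFiniteCut (interactionMeasure μ (finrank ℝ E + s)) (ball c r) :=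
  hasFiniteCut_interactionMeasure measurableSet_ball
    (interactionMeasure_ball_prod_compl_lt_top hs c hr)

end NormedSpace

/-! ### The fractional perimeter in Euclidean space -/

section Euclidean

variable {n : ℕ} {s : ℝ} {E Ω : Set (EuclideanSpace ℝ (Fin n))}

theorem Ls_eq_interactionMeasure_prod {A B : Set (EuclideanSpace ℝ (Fin n))}
    (hA : MeasurableSet A) (hB : MeasurableSet B) :
    Ls n s A B = interactionMeasure volume (n + s) (A ×ˢ B) :=
  (interactionMeasure_prod hA hB).symm

theorem perimeter_interactionMeasure (hE : MeasurableSet E) (hΩ : MeasurableSet Ω) :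
    perimeter (interactionMeasure volume (n + s)) E Ω = Ps n s E Ω := by
  have hsplit : crossingPairs E Ω =
      ((E ∩ Ω) ×ˢ (Eᶜ ∩ Ω) ∪ (E ∩ Ω) ×ˢ (Eᶜ \ Ω)) ∪ (E \ Ω) ×ˢ (Eᶜ ∩ Ω) := by
    ext p
    simp only [mem_crossingPairs, mem_union, mem_prod, mem_inter_iff, Set.mem_sdiff, mem_compl_iff]
    tauto
  have hdisj : Disjoint ((E ∩ Ω) ×ˢ (Eᶜ ∩ Ω) ∪ (E ∩ Ω) ×ˢ (Eᶜ \ Ω)) ((E \ Ω) ×ˢ (Eᶜ ∩ Ω)) :=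
    disjoint_left.2 fun p hp hp' => hp'.1.2 (hp.elim (·.1.2) (·.1.2))
  have hdisj' : Disjoint ((E ∩ Ω) ×ˢ (Eᶜ ∩ Ω)) ((E ∩ Ω) ×ˢ (Eᶜ \ Ω)) :=
    disjoint_left.2 fun p hp hp' => hp'.2.2 hp.2.2
  rw [perimeter, hsplit, measure_union hdisj ((hE.diff hΩ).prod (hE.compl.inter hΩ)),
    measure_union hdisj' ((hE.inter hΩ).prod (hE.compl.diff hΩ)), Ps,
    Ls_eq_interactionMeasure_prod (hE.inter hΩ) (hE.compl.inter hΩ),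
    Ls_eq_interactionMeasure_prod (hE.inter hΩ) (hE.compl.diff hΩ),
    Ls_eq_interactionMeasure_prod (hE.diff hΩ) (hE.compl.inter hΩ)]

theorem IsMinimal.sMinimal (h : IsMinimal (interactionMeasure volume (n + s)) E Ω)
    (hE : MeasurableSet E) (hΩ : MeasurableSet Ω) : SMinimal n s E Ω := by
  rw [SMinimal, ← perimeter_interactionMeasure hE hΩ]
  refine ⟨h.1, fun F hF hFE => ?_⟩
  have hcomp : Ω.ite F E ∈ competitors E Ω := ⟨hΩ.ite hF hE, ite_sdiff_self _ _ _⟩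
  have hae : Ω.ite F E =ᵐ[volume] F := by
    rw [← measure_symmDiff_eq_zero_iff]
    refine measure_mono_null (fun x hx => ?_) hFE
    simp only [Set.ite, mem_symmDiff, mem_union, mem_inter_iff, Set.mem_sdiff] at hx ⊢
    tauto
  calc perimeter (interactionMeasure volume (n + s)) E Ω
      ≤ perimeter (interactionMeasure volume (n + s)) (Ω.ite F E) Ω := h.2 _ hcomp
    _ = perimeter (interactionMeasure volume (n + s)) F Ω :=
      perimeter_congr_ae (interactionMeasure_absolutelyContinuous _ _) hae
    _ = Ps n s F Ω := perimeter_interactionMeasure hF hΩ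

theorem exists_monotone_isOpen_hasFiniteCut_euclidean (hn : 1 ≤ n) (hs : s ∈ Ioo (0 : ℝ) 1)
    (hΩ : IsOpen Ω) : ∃ W : ℕ → Set (EuclideanSpace ℝ (Fin n)), Monotone W ∧
      (∀ k, IsOpen (W k) ∧ HasFiniteCut (interactionMeasure volume (n + s)) (W k)) ∧
      ⋃ k, W k = Ω := by
  have : Nonempty (Fin n) := ⟨⟨0, hn⟩⟩
  refine exists_monotone_isOpen_hasFiniteCut_iUnion_eq (fun c r hr => ?_) hΩ
  simpa only [finrank_euclideanSpace_fin] using hasFiniteCut_ball (μ := volume) hs c hr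

end Euclidean

end Nonlocal

/-- Corollary 1.10: in any open set `Ω` and for any exterior data `E₀ ∖ Ω`,
there exists a locally `s`-minimal set. -/
theorem exists_locSMinimal
    (n : ℕ) (hn : 1 ≤ n) (s : ℝ) (hs : s ∈ Set.Ioo (0 : ℝ) 1)
    (Ω : Set (EuclideanSpace ℝ (Fin n))) (hΩ : IsOpen Ω)
    (E₀ : Set (EuclideanSpace ℝ (Fin n))) (hE₀ : MeasurableSet E₀) :
    ∃ E : Set (EuclideanSpace ℝ (Fin n)), MeasurableSet E ∧
      LocSMinimal n s E Ω ∧ volume ((E \ Ω) ∆ (E₀ \ Ω)) = 0 := by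
  obtain ⟨W, hWm, hW, rfl⟩ := Nonlocal.exists_monotone_isOpen_hasFiniteCut_euclidean hn hs hΩ
  obtain ⟨E, ⟨hE, hext⟩, hmin⟩ := Nonlocal.exists_mem_competitors_iUnion_forall_isMinimal hE₀
    (fun k => (hW k).1.measurableSet) hWm fun k => (hW k).2
  refine ⟨E, hE, fun Ω' hΩ' hcpt hsub => ?_, by rw [hext, symmDiff_self]; exact measure_empty⟩
  obtain ⟨k, hk⟩ := hcpt.elim_directed_cover W (fun k => (hW k).1) hsub hWm.directed_le
  exact ((hmin k).mono hΩ'.measurableSet (subset_closure.trans hk)).sMinimal hE hΩ'.measurableSet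
end

section
/- Let Ω ⊆ ℝ^n be a bounded open set with Lipschitz boundary and s ∈ (0,1). Let (E_k) be a sequence of measurable sets, each s-minimal in Ω, with E_k →loc E for some measurable set E. Then E is s-minimal in Ω and P_s(E,Ω) = lim_{k→∞} P_s(E_k,Ω). -/
/-!
On pairs of points let `ν` be the measure with density `|x - y| ^ (-(n + s))`, so that
`P_s(E, Ω) = ν ((E × Eᶜ) ∩ {(x, y) | x ∈ Ω ∨ y ∈ Ω})`. If `ν W < ∞`, then `E_k → E` locally in
measure forces the part of `W` lying over `E_k ∆ E` to have vanishing `ν`-measure. Exhausting the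
space by sets `W` of finite measure makes `P_s(·, Ω)` lower semicontinuous. For the upper bound,
compare `E_k` with the set equal to a competitor `F` in `Ω` and to `E_k` outside: its perimeter
exceeds that of `F` only by pairs joining `Ω` to `Ωᶜ` and lying over `E_k ∆ F`, and these vanish in
the limit as soon as `L_s(Ω, Ωᶜ) < ∞`. Hence `limsup P_s(E_k, Ω) ≤ P_s(F, Ω)`.

For a bounded Lipschitz domain, `L_s(Ω, Ωᶜ) = ∫ |h| ^ (-(n + s)) |Ω \ (Ω - h)| dh`, where
`Ω \ (Ω - h)` lies in a neighbourhood of `∂Ω` of width comparable to `|h|`, so has measure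
`O(min |h| 1)`.
-/

open MeasureTheory Set Filter Topology Metric Bornology
open scoped ENNReal NNReal symmDiff

def LocConv (n : ℕ) (A : ℕ → Set (EuclideanSpace ℝ (Fin n)))
    (B : Set (EuclideanSpace ℝ (Fin n))) : Prop :=
  ∀ K : Set (EuclideanSpace ℝ (Fin n)), IsBounded K →
    Tendsto (fun h => volume ((A h ∆ B) ∩ K)) atTop (𝓝 0)

/-- Finiteness of the upper Minkowski content of codimension one of `S`: the open
`r`-neighbourhoods of `S` have measure `O(r)` as `r → 0⁺`. -/
def HasFiniteMinkowskiContent {X : Type*} [PseudoEMetricSpace X] [MeasurableSpace X]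
    (μ : Measure X) (S : Set X) : Prop :=
  ∃ C : ℝ≥0, ∀ᶠ r in 𝓝[>] (0 : ℝ), μ (thickening r S) ≤ C * ENNReal.ofReal r

namespace HasFiniteMinkowskiContent

variable {X Y : Type*} [PseudoEMetricSpace X] [PseudoEMetricSpace Y] [MeasurableSpace X]
  [MeasurableSpace Y] {μ : Measure X} {ν : Measure Y} {S T : Set X}

theorem empty : HasFiniteMinkowskiContent μ (∅ : Set X) :=
  ⟨0, Eventually.of_forall fun r => by simp⟩

theorem mono (hT : HasFiniteMinkowskiContent μ T) (hST : S ⊆ T) :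
    HasFiniteMinkowskiContent μ S := by
  obtain ⟨C, hC⟩ := hT
  refine ⟨C, hC.mono fun r hr => ?_⟩
  exact (measure_mono (thickening_subset_of_subset r hST)).trans hr

theorem union (hS : HasFiniteMinkowskiContent μ S) (hT : HasFiniteMinkowskiContent μ T) :
    HasFiniteMinkowskiContent μ (S ∪ T) := by
  obtain ⟨C, hC⟩ := hS
  obtain ⟨D, hD⟩ := hT
  refine ⟨C + D, ?_⟩
  filter_upwards [hC, hD] with r hCr hDr
  calc μ (thickening r (S ∪ T)) ≤ μ (thickening r S) + μ (thickening r T) := by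
        rw [thickening_union]
        exact measure_union_le _ _
    _ ≤ C * ENNReal.ofReal r + D * ENNReal.ofReal r := add_le_add hCr hDr
    _ = (C + D : ℝ≥0) * ENNReal.ofReal r := by rw [ENNReal.coe_add, add_mul]

theorem of_isCompact (hS : IsCompact S)
    (hloc : ∀ x ∈ S, ∃ T ∈ 𝓝[S] x, HasFiniteMinkowskiContent μ T) :
    HasFiniteMinkowskiContent μ S :=
  hS.induction_on empty (fun _ _ hST hT => hT.mono hST) (fun _ _ => union) hloc

theorem of_image {f : X → Y} (hf : MeasurePreserving f μ ν) (hf_lip : LipschitzWith 1 f)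
    (hS : HasFiniteMinkowskiContent ν (f '' S)) : HasFiniteMinkowskiContent μ S := by
  obtain ⟨C, hC⟩ := hS
  refine ⟨C, hC.mono fun r hr => ?_⟩
  have hsub : thickening r S ⊆ f ⁻¹' thickening r (f '' S) := by
    intro x hx
    obtain ⟨q, hq, hxq⟩ := (mem_thickening_iff_exists_edist_lt _ _).1 hx
    refine (mem_thickening_iff_exists_edist_lt _ _).2 ⟨f q, mem_image_of_mem f hq, ?_⟩
    calc edist (f x) (f q) ≤ edist x q := by simpa using hf_lip x q
      _ < ENNReal.ofReal r := hxq
  exact (measure_mono hsub).trans ((hf.measure_preimage_le _).trans hr)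

end HasFiniteMinkowskiContent

theorem thickening_graphOn_subset_regionBetween {X : Type*} [PseudoMetricSpace X] {K : ℝ≥0}
    {φ : X → ℝ} (hφ : LipschitzWith K φ) (S : Set X) (r : ℝ) :
    thickening r (S.graphOn φ) ⊆
      regionBetween (fun x => φ x - (1 + K) * r) (fun x => φ x + (1 + K) * r) (thickening r S) := by
  intro z hz
  obtain ⟨-, ⟨x, hx, rfl⟩, hzx⟩ := mem_thickening_iff.1 hz
  rw [Prod.dist_eq, max_lt_iff] at hzx
  obtain ⟨hfst, hsnd⟩ := hzx
  have hφzx : dist (φ x) (φ z.1) ≤ K * r :=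
    (hφ.dist_le_mul x z.1).trans (by rw [dist_comm]; gcongr)
  have hz2 : dist z.2 (φ z.1) < (1 + K) * r := by
    linarith [dist_triangle z.2 (φ x) (φ z.1)]
  refine ⟨mem_thickening_iff.2 ⟨x, hx, hfst⟩, ?_⟩
  rwa [← Real.ball_eq_Ioo]

theorem hasFiniteMinkowskiContent_graphOn {X : Type*} [PseudoMetricSpace X]
    [ProperSpace X] [MeasurableSpace X] [OpensMeasurableSpace X] {μ : Measure X}
    [IsFiniteMeasureOnCompacts μ] {K : ℝ≥0} {φ : X → ℝ} (hφ : LipschitzWith K φ) {S : Set X}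
    (hS : IsBounded S) : HasFiniteMinkowskiContent (μ.prod volume) (S.graphOn φ) := by
  have hfin : μ (thickening 1 S) ≠ ⊤ := hS.thickening.measure_lt_top.ne
  refine ⟨(μ (thickening 1 S)).toNNReal * (2 * (1 + K)), ?_⟩
  filter_upwards [Ioo_mem_nhdsGT one_pos] with r hr
  have hφm : Measurable φ := hφ.continuous.measurable
  calc (μ.prod volume) (thickening r (S.graphOn φ))
      ≤ (μ.prod volume) (regionBetween (fun x => φ x - (1 + K) * r)
          (fun x => φ x + (1 + K) * r) (thickening r S)) :=
        measure_mono (thickening_graphOn_subset_regionBetween hφ S r)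
    _ = ENNReal.ofReal (2 * (1 + K) * r) * μ (thickening r S) := by
        rw [volume_regionBetween_eq_lintegral' (hφm.sub_const _) (hφm.add_const _)
          isOpen_thickening.measurableSet, ← setLIntegral_const]
        congr! 3 with x
        simp only [Pi.sub_apply]
        ring
    _ ≤ ENNReal.ofReal (2 * (1 + K) * r) * μ (thickening 1 S) := by
        gcongr
        exact hr.2.le
    _ = ((μ (thickening 1 S)).toNNReal * (2 * (1 + K)) : ℝ≥0) * ENNReal.ofReal r := by
        rw [ENNReal.ofReal_mul (by positivity), ENNReal.coe_mul, ENNReal.coe_toNNReal hfin,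
          show (2 * (1 + K) : ℝ) = ((2 * (1 + K) : ℝ≥0) : ℝ) by push_cast; rfl,
          ENNReal.ofReal_coe_nnreal]
        ring

theorem HasLipschitzBoundary.hasFiniteMinkowskiContent_frontier {n : ℕ}
    {Ω : Set (EuclideanSpace ℝ (Fin n))} (hΩ : HasLipschitzBoundary Ω) (hΩb : IsBounded Ω) :
    HasFiniteMinkowskiContent volume (frontier Ω) := by
  have hfr : IsBounded (frontier Ω) := hΩb.closure.subset frontier_subset_closure
  refine .of_isCompact (isCompact_of_isClosed_isBounded isClosed_frontier hfr) fun p hp => ?_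
  obtain ⟨U, hUo, hpU, L, φ, K, hφ, -, hgraph⟩ := hΩ p hp
  refine ⟨frontier Ω ∩ U, inter_mem_nhdsWithin _ (hUo.mem_nhds hpU), ?_⟩
  have hchart : MeasurePreserving fun y => WithLp.ofLp (L y) :=
    (WithLp.volume_preserving_ofLp _ _).comp L.measurePreserving
  have hchart_lip : LipschitzWith 1 fun y => WithLp.ofLp (L y) := by
    rw [← one_mul (1 : ℝ≥0)]
    exact (WithLp.prod_lipschitzWith_ofLp 2 _ _).comp L.lipschitz
  have hbdd : IsBounded ((fun y => (WithLp.ofLp (L y)).1) '' (frontier Ω ∩ U)) :=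
    (LipschitzWith.prod_fst.comp hchart_lip).isBounded_image (hfr.subset inter_subset_left)
  refine .of_image hchart hchart_lip ((hasFiniteMinkowskiContent_graphOn hφ hbdd).mono ?_)
  rintro - ⟨q, hq, rfl⟩
  exact ⟨_, mem_image_of_mem _ hq, Prod.ext rfl (hgraph.subset hq).2⟩

section Translation

variable {V : Type*} [NormedAddCommGroup V] [NormedSpace ℝ V] [FiniteDimensional ℝ V] {Ω : Set V}

theorem inter_preimage_add_compl_subset_thickening_frontier {h : V} {r : ℝ} (hr : ‖h‖ < r) :
    Ω ∩ (· + h) ⁻¹' Ωᶜ ⊆ thickening r (frontier Ω) := by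
  rintro x ⟨hx, hxh⟩
  have hΩ : Ω ≠ univ := ne_univ_iff_exists_notMem Ω |>.2 ⟨x + h, hxh⟩
  obtain ⟨q, hq, hxq⟩ := exists_mem_frontier_infDist_compl_eq_dist hx hΩ
  refine mem_thickening_iff.2 ⟨q, hq, ?_⟩
  calc dist x q = infDist x Ωᶜ := hxq.symm
    _ ≤ dist x (x + h) := infDist_le_dist_of_mem hxh
    _ = ‖h‖ := dist_self_add_right h x
    _ < r := hr

theorem HasFiniteMinkowskiContent.exists_measure_inter_preimage_add_compl_le [MeasurableSpace V]
    {μ : Measure V} (hfr : HasFiniteMinkowskiContent μ (frontier Ω)) (hΩ : μ Ω ≠ ⊤) :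
    ∃ C : ℝ≥0∞, C ≠ ⊤ ∧
      ∀ h : V, μ (Ω ∩ (· + h) ⁻¹' Ωᶜ) ≤ C * ENNReal.ofReal (min ‖h‖ 1) := by
  obtain ⟨C, hC⟩ := hfr
  obtain ⟨δ, hδ : 0 < δ, hCδ⟩ := mem_nhdsGT_iff_exists_Ioo_subset.1 hC
  set ε := min (δ / 2) 1
  have hε : 0 < ε := by positivity
  have hε0 : ENNReal.ofReal ε ≠ 0 := by simpa using hε
  refine ⟨2 * C + μ Ω / ENNReal.ofReal ε, by finiteness, fun h => ?_⟩
  rw [add_mul]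
  rcases eq_or_ne h 0 with rfl | hh
  · simp
  rcases lt_or_ge ‖h‖ ε with hlt | hge
  · have hnorm : 0 < ‖h‖ := norm_pos_iff.2 hh
    obtain ⟨hlt_δ, hlt_one⟩ := lt_min_iff.1 hlt
    refine le_add_right ?_
    calc μ (Ω ∩ (· + h) ⁻¹' Ωᶜ) ≤ μ (thickening (2 * ‖h‖) (frontier Ω)) :=
          measure_mono (inter_preimage_add_compl_subset_thickening_frontier (by linarith))
      _ ≤ C * ENNReal.ofReal (2 * ‖h‖) := hCδ ⟨by positivity, by linarith⟩
      _ = 2 * C * ENNReal.ofReal (min ‖h‖ 1) := by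
          rw [min_eq_left hlt_one.le, ENNReal.ofReal_mul zero_le_two, ENNReal.ofReal_ofNat]
          ring
  · refine le_add_left ?_
    calc μ (Ω ∩ (· + h) ⁻¹' Ωᶜ) ≤ μ Ω := measure_mono inter_subset_left
      _ = μ Ω / ENNReal.ofReal ε * ENNReal.ofReal ε :=
          (ENNReal.div_mul_cancel hε0 ENNReal.ofReal_ne_top).symm
      _ ≤ μ Ω / ENNReal.ofReal ε * ENNReal.ofReal (min ‖h‖ 1) := by
          gcongr
          exact le_min hge (min_le_right _ _)

end Translation

section Kernel

theorem integrableOn_Ioi_rpow_mul_min {s : ℝ} (hs : s ∈ Ioo (0 : ℝ) 1) :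
    IntegrableOn (fun r : ℝ => r ^ (-1 - s) * min r 1) (Ioi 0) := by
  rw [← Ioc_union_Ioi_eq_Ioi (zero_le_one (α := ℝ))]
  refine IntegrableOn.union ?_ ?_
  · have hint : IntegrableOn (fun r : ℝ => r ^ (-s)) (Ioc 0 1) :=
      (intervalIntegrable_iff_integrableOn_Ioc_of_le zero_le_one).1
        (intervalIntegral.intervalIntegrable_rpow' (by linarith [hs.2]))
    refine hint.congr_fun (fun r hr => ?_) measurableSet_Ioc
    simp only [min_eq_left hr.2, ← Real.rpow_add_one hr.1.ne']
    congr 1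
    ring
  · have hint : IntegrableOn (fun r : ℝ => r ^ (-1 - s)) (Ioi 1) :=
      integrableOn_Ioi_rpow_of_lt (by linarith [hs.1]) one_pos
    refine hint.congr_fun (fun r hr => ?_) measurableSet_Ioi
    simp only [min_eq_right (mem_Ioi.1 hr).le, mul_one]

theorem integrable_norm_rpow_mul_min {V : Type*} [NormedAddCommGroup V] [NormedSpace ℝ V]
    [FiniteDimensional ℝ V] [Nontrivial V] [MeasurableSpace V] [BorelSpace V] (μ : Measure V)
    [μ.IsAddHaarMeasure] {s : ℝ} (hs : s ∈ Ioo (0 : ℝ) 1) :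
    Integrable (fun h : V => ‖h‖ ^ (-((Module.finrank ℝ V : ℝ) + s)) * min ‖h‖ 1) μ := by
  refine (integrable_fun_norm_addHaar μ
    (f := fun r : ℝ => r ^ (-((Module.finrank ℝ V : ℝ) + s)) * min r 1)).2 ?_
  refine (integrableOn_Ioi_rpow_mul_min hs).congr_fun (fun r hr => ?_) measurableSet_Ioi
  have hdim : ((Module.finrank ℝ V - 1 : ℕ) : ℝ) = Module.finrank ℝ V - 1 :=
    Nat.cast_pred Module.finrank_pos
  simp only [smul_eq_mul]
  rw [← Real.rpow_natCast, hdim, ← mul_assoc, ← Real.rpow_add hr]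
  congr 2
  ring

theorem setLIntegral_setLIntegral_sub {G : Type*} [AddCommGroup G] [MeasurableSpace G]
    [MeasurableAdd₂ G] {μ : Measure G} [SFinite μ] [μ.IsAddLeftInvariant] {k : G → ℝ≥0∞}
    (hk : Measurable k) {A B : Set G} (hB : MeasurableSet B) :
    ∫⁻ x in A, ∫⁻ y in B, k (y - x) ∂μ ∂μ = ∫⁻ h, k h * μ (A ∩ (· + h) ⁻¹' B) ∂μ := by
  have hshift : MeasurableSet {z : G × G | z.1 + z.2 ∈ B} := measurable_add hB
  calc ∫⁻ x in A, ∫⁻ y in B, k (y - x) ∂μ ∂μ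
      = ∫⁻ x in A, ∫⁻ h, {z : G × G | z.1 + z.2 ∈ B}.indicator (fun z => k z.2) (x, h) ∂μ ∂μ := by
        refine lintegral_congr fun x => ?_
        rw [← lintegral_indicator hB, ← lintegral_add_left_eq_self _ x]
        simp [indicator]
    _ = ∫⁻ h, ∫⁻ x in A, {z : G × G | z.1 + z.2 ∈ B}.indicator (fun z => k z.2) (x, h) ∂μ ∂μ :=
        lintegral_lintegral_swap ((hk.comp measurable_snd).indicator hshift).aemeasurable
    _ = ∫⁻ h, k h * μ (A ∩ (· + h) ⁻¹' B) ∂μ := by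
        refine lintegral_congr fun h => ?_
        have hBh : MeasurableSet ((· + h) ⁻¹' B) := measurable_add_const h hB
        rw [inter_comm, ← Measure.restrict_apply hBh, ← setLIntegral_const,
          ← lintegral_indicator hBh]
        rfl

theorem Ls_eq_lintegral_translates {n : ℕ} (s : ℝ) {A B : Set (EuclideanSpace ℝ (Fin n))}
    (hB : MeasurableSet B) :
    Ls n s A B = ∫⁻ h : EuclideanSpace ℝ (Fin n),
      ENNReal.ofReal (‖h‖ ^ (-((n : ℝ) + s))) * volume (A ∩ (· + h) ⁻¹' B) := by
  rw [← setLIntegral_setLIntegral_sub (by fun_prop) hB]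
  simp only [Ls, dist_eq_norm']

theorem Ls_compl_ne_top_of_hasFiniteMinkowskiContent {n : ℕ} (hn : 1 ≤ n) {s : ℝ}
    (hs : s ∈ Ioo (0 : ℝ) 1) {Ω : Set (EuclideanSpace ℝ (Fin n))} (hΩ : MeasurableSet Ω)
    (hΩvol : volume Ω ≠ ⊤) (hfr : HasFiniteMinkowskiContent volume (frontier Ω)) :
    Ls n s Ω Ωᶜ ≠ ⊤ := by
  have : Nonempty (Fin n) := ⟨⟨0, hn⟩⟩
  obtain ⟨C, hC, hCΩ⟩ := hfr.exists_measure_inter_preimage_add_compl_le hΩvol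
  have hint := integrable_norm_rpow_mul_min (volume : Measure (EuclideanSpace ℝ (Fin n))) hs
  rw [finrank_euclideanSpace_fin] at hint
  rw [Ls_eq_lintegral_translates s hΩ.compl]
  refine ne_top_of_le_ne_top (ENNReal.mul_ne_top hC hint.lintegral_lt_top.ne) ?_
  rw [← lintegral_const_mul' _ _ hC]
  refine lintegral_mono fun h => ?_
  rw [ENNReal.ofReal_mul (by positivity), mul_left_comm]
  exact mul_le_mul_right (hCΩ h) _

end Kernel

section PairMeasures

variable {X ι : Type*} {l : Filter ι}

/-- The pairs with at least one coordinate in `Ω`: the perimeter of `E` in `Ω` counts the pairs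
of `E ×ˢ Eᶜ` that meet `Ω`. -/
def pairsMeeting (Ω : Set X) : Set (X × X) := Prod.fst ⁻¹' Ω ∪ Prod.snd ⁻¹' Ω

theorem prod_compl_subset_union_pairsMeeting_symmDiff (E F : Set X) :
    E ×ˢ Eᶜ ⊆ F ×ˢ Fᶜ ∪ pairsMeeting (F ∆ E) := by
  rintro ⟨x, y⟩ ⟨hx, hy⟩
  simp only [pairsMeeting, mem_union, mem_prod, mem_preimage, mem_symmDiff, mem_compl_iff] at *
  tauto

theorem ite_prod_compl_inter_pairsMeeting_subset (Ω F E : Set X) :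
    Ω.ite F E ×ˢ (Ω.ite F E)ᶜ ∩ pairsMeeting Ω ⊆ F ×ˢ Fᶜ ∩ pairsMeeting Ω ∪
      (Ω ×ˢ Ωᶜ ∪ Ωᶜ ×ˢ Ω) ∩ pairsMeeting ((E \ Ω) ∆ (F \ Ω)) := by
  rintro ⟨x, y⟩
  simp only [pairsMeeting, Set.ite, mem_union, mem_inter_iff, mem_prod, mem_preimage,
    mem_symmDiff, mem_compl_iff, Set.mem_sdiff]
  tauto

variable [PseudoMetricSpace X] [MeasurableSpace X] [OpensMeasurableSpace X]

theorem tendsto_measure_compl_closedBall_nat (m : Measure X) [IsFiniteMeasure m] (x : X) :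
    Tendsto (fun j : ℕ => m (closedBall x j)ᶜ) atTop (𝓝 0) := by
  have hanti : Antitone fun j : ℕ => (closedBall x (j : ℝ))ᶜ := fun i j hij =>
    compl_subset_compl.2 (closedBall_subset_closedBall (Nat.cast_le.2 hij))
  have htend := tendsto_measure_iInter_atTop (μ := m)
    (fun j => isClosed_closedBall.measurableSet.compl.nullMeasurableSet) hanti
    ⟨0, measure_ne_top _ _⟩
  rwa [← compl_iUnion, iUnion_closedBall_nat, compl_univ, measure_empty] at htend

theorem tendsto_measure_of_absolutelyContinuous {m μ : Measure X} [IsFiniteMeasure m]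
    [SigmaFinite μ] (hm : m ≪ μ) {D : ι → Set X}
    (hD : ∀ K, IsBounded K → Tendsto (fun k => μ (D k ∩ K)) l (𝓝 0)) :
    Tendsto (fun k => m (D k)) l (𝓝 0) := by
  have hbdd : ∀ K, IsBounded K → Tendsto (fun k => m (D k ∩ K)) l (𝓝 0) := by
    intro K hK
    refine (tendsto_setLIntegral_zero (Measure.lintegral_rnDeriv_lt_top m μ).ne (hD K hK)).congr
      fun k => ?_
    rw [← withDensity_apply', Measure.withDensity_rnDeriv_eq m μ hm]
  rcases isEmpty_or_nonempty X with hX | ⟨⟨x⟩⟩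
  · simp [Set.eq_empty_of_isEmpty, tendsto_const_nhds]
  refine ENNReal.tendsto_nhds_zero.2 fun ε hε => ?_
  have hε2 : 0 < ε / 2 := ENNReal.half_pos hε.ne'
  obtain ⟨j, hj⟩ := ((ENNReal.tendsto_nhds_zero.1
    (tendsto_measure_compl_closedBall_nat m x)) _ hε2).exists
  filter_upwards [ENNReal.tendsto_nhds_zero.1 (hbdd (closedBall x j) isBounded_closedBall) _ hε2]
    with k hk
  calc m (D k) ≤ m (D k ∩ closedBall x j) + m (D k \ closedBall x j) :=
        measure_le_inter_add_sdiff _ _ _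
    _ ≤ ε / 2 + ε / 2 := add_le_add hk ((measure_mono (sdiff_subset_compl _ _)).trans hj)
    _ = ε := ENNReal.add_halves ε

variable {μ : Measure X} [SigmaFinite μ] {ν : Measure (X × X)}

theorem tendsto_measure_inter_pairsMeeting (hν : ν ≪ μ.prod μ) {W : Set (X × X)} (hW : ν W ≠ ⊤)
    {D : ι → Set X} (hDm : ∀ k, MeasurableSet (D k))
    (hD : ∀ K, IsBounded K → Tendsto (fun k => μ (D k ∩ K)) l (𝓝 0)) :
    Tendsto (fun k => ν (W ∩ pairsMeeting (D k))) l (𝓝 0) := by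
  have : IsFiniteMeasure (ν.restrict W) := isFiniteMeasure_restrict.2 hW
  have hac : ν.restrict W ≪ μ.prod μ := Measure.restrict_le_self.absolutelyContinuous.trans hν
  have hfst := tendsto_measure_of_absolutelyContinuous ((hac.map measurable_fst).trans
    Measure.quasiMeasurePreserving_fst.absolutelyContinuous) hD
  have hsnd := tendsto_measure_of_absolutelyContinuous ((hac.map measurable_snd).trans
    Measure.quasiMeasurePreserving_snd.absolutelyContinuous) hD
  refine tendsto_of_tendsto_of_tendsto_of_le_of_le tendsto_const_nhds
    (by simpa only [add_zero] using hfst.add hsnd) (fun _ => zero_le) fun k => ?_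
  rw [Measure.map_apply measurable_fst (hDm k), Measure.map_apply measurable_snd (hDm k),
    Measure.restrict_apply (measurable_fst (hDm k)),
    Measure.restrict_apply (measurable_snd (hDm k)), pairsMeeting, inter_comm,
    union_inter_distrib_right]
  exact measure_union_le _ _

theorem measure_prod_compl_inter_le_liminf [SigmaFinite ν] (hν : ν ≪ μ.prod μ) (U : Set (X × X))
    {E : ι → Set X} (hE : ∀ k, MeasurableSet (E k)) {E₀ : Set X} (hE₀ : MeasurableSet E₀)
    (hconv : ∀ K, IsBounded K → Tendsto (fun k => μ ((E k ∆ E₀) ∩ K)) l (𝓝 0)) :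
    ν (E₀ ×ˢ E₀ᶜ ∩ U) ≤ liminf (fun k => ν (E k ×ˢ (E k)ᶜ ∩ U)) l := by
  have hspan : ∀ j, ν (E₀ ×ˢ E₀ᶜ ∩ U ∩ spanningSets ν j) ≤
      liminf (fun k => ν (E k ×ˢ (E k)ᶜ ∩ U)) l := by
    intro j
    have hvanish := tendsto_measure_inter_pairsMeeting hν (measure_spanningSets_lt_top ν j).ne
      (fun k => (hE k).symmDiff hE₀) hconv
    rw [← ENNReal.liminf_add_of_right_tendsto_zero hvanish]
    refine le_liminf_of_le (by isBoundedDefault) (Eventually.of_forall fun k => ?_)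
    refine (measure_mono ?_).trans (measure_union_le _ _)
    rintro z ⟨⟨hz, hzU⟩, hzj⟩
    exact (prod_compl_subset_union_pairsMeeting_symmDiff E₀ (E k) hz).imp (⟨·, hzU⟩) (⟨hzj, ·⟩)
  calc ν (E₀ ×ˢ E₀ᶜ ∩ U) = ⨆ j, ν (E₀ ×ˢ E₀ᶜ ∩ U ∩ spanningSets ν j) := by
        rw [← Monotone.measure_iUnion fun i j hij =>
          inter_subset_inter_right _ (monotone_spanningSets ν hij),
          ← inter_iUnion, iUnion_spanningSets, inter_univ]
    _ ≤ liminf (fun k => ν (E k ×ˢ (E k)ᶜ ∩ U)) l := iSup_le hspan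

theorem limsup_measure_ite_prod_compl_le (hν : ν ≪ μ.prod μ) {Ω : Set X} (hΩ : MeasurableSet Ω)
    (hΩν : ν (Ω ×ˢ Ωᶜ ∪ Ωᶜ ×ˢ Ω) ≠ ⊤) {E : ι → Set X} (hE : ∀ k, MeasurableSet (E k))
    {F : Set X} (hF : MeasurableSet F)
    (hconv : ∀ K, IsBounded K → Tendsto (fun k => μ (((E k \ Ω) ∆ (F \ Ω)) ∩ K)) l (𝓝 0)) :
    limsup (fun k => ν (Ω.ite F (E k) ×ˢ (Ω.ite F (E k))ᶜ ∩ pairsMeeting Ω)) l ≤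
      ν (F ×ˢ Fᶜ ∩ pairsMeeting Ω) := by
  have hvanish := tendsto_measure_inter_pairsMeeting hν hΩν
    (fun k => ((hE k).diff hΩ).symmDiff (hF.diff hΩ)) hconv
  calc limsup (fun k => ν (Ω.ite F (E k) ×ˢ (Ω.ite F (E k))ᶜ ∩ pairsMeeting Ω)) l
      ≤ limsup ((fun _ => ν (F ×ˢ Fᶜ ∩ pairsMeeting Ω)) + fun k =>
          ν ((Ω ×ˢ Ωᶜ ∪ Ωᶜ ×ˢ Ω) ∩ pairsMeeting ((E k \ Ω) ∆ (F \ Ω)))) l := by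
        refine limsup_le_limsup (Eventually.of_forall fun k => ?_)
        exact (measure_mono (ite_prod_compl_inter_pairsMeeting_subset Ω F (E k))).trans
          (measure_union_le _ _)
    _ = limsup (fun _ => ν (F ×ˢ Fᶜ ∩ pairsMeeting Ω)) l :=
        ENNReal.limsup_add_of_right_tendsto_zero hvanish _
    _ ≤ ν (F ×ˢ Fᶜ ∩ pairsMeeting Ω) :=
        limsup_le_of_le (by isBoundedDefault) (Eventually.of_forall fun _ => le_rfl)

end PairMeasures

section FractionalPerimeter

variable {n : ℕ} {s : ℝ} {Ω E F : Set (EuclideanSpace ℝ (Fin n))}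
  {Ek : ℕ → Set (EuclideanSpace ℝ (Fin n))}

/-- The measure on pairs of points with density `|x - y| ^ (-(n + s))`, whose value on `A ×ˢ B`
is the interaction `Ls n s A B`. -/
noncomputable def kernelMeasure (n : ℕ) (s : ℝ) :
    Measure (EuclideanSpace ℝ (Fin n) × EuclideanSpace ℝ (Fin n)) :=
  (volume.prod volume).withDensity fun z => ENNReal.ofReal (dist z.1 z.2 ^ (-((n : ℝ) + s)))

instance : SigmaFinite (kernelMeasure n s) := by
  unfold kernelMeasure
  infer_instance

theorem kernelMeasure_absolutelyContinuous : kernelMeasure n s ≪ volume.prod volume :=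
  withDensity_absolutelyContinuous _ _

theorem kernelMeasure_prod {A B : Set (EuclideanSpace ℝ (Fin n))} (hA : MeasurableSet A)
    (hB : MeasurableSet B) : kernelMeasure n s (A ×ˢ B) = Ls n s A B := by
  rw [kernelMeasure, withDensity_apply _ (hA.prod hB), ← Measure.prod_restrict, Ls,
    lintegral_prod _ (by fun_prop)]

theorem Ls_comm (A B : Set (EuclideanSpace ℝ (Fin n))) : Ls n s A B = Ls n s B A := by
  rw [Ls, lintegral_lintegral_swap (by fun_prop), Ls]
  simp only [dist_comm]

theorem kernelMeasure_prod_compl_union_ne_top (hΩ : MeasurableSet Ω) (hΩs : Ls n s Ω Ωᶜ ≠ ⊤) :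
    kernelMeasure n s (Ω ×ˢ Ωᶜ ∪ Ωᶜ ×ˢ Ω) ≠ ⊤ := by
  refine measure_union_ne_top ?_ ?_
  · rwa [kernelMeasure_prod hΩ hΩ.compl]
  · rwa [kernelMeasure_prod hΩ.compl hΩ, Ls_comm]

theorem Ps_eq_kernelMeasure (hE : MeasurableSet E) (hΩ : MeasurableSet Ω) :
    Ps n s E Ω = kernelMeasure n s (E ×ˢ Eᶜ ∩ pairsMeeting Ω) := by
  have hsplit : E ×ˢ Eᶜ ∩ pairsMeeting Ω =
      (E ∩ Ω) ×ˢ (Eᶜ ∩ Ω) ∪ (E ∩ Ω) ×ˢ (Eᶜ \ Ω) ∪ (E \ Ω) ×ˢ (Eᶜ ∩ Ω) := by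
    ext ⟨x, y⟩
    simp only [pairsMeeting, mem_union, mem_prod, mem_inter_iff, Set.mem_sdiff, mem_preimage]
    tauto
  have hin := hE.inter hΩ
  have hcin := hE.compl.inter hΩ
  have hcout := hE.compl.diff hΩ
  have hout := hE.diff hΩ
  have hdisj : Disjoint ((E ∩ Ω) ×ˢ (Eᶜ ∩ Ω)) ((E ∩ Ω) ×ˢ (Eᶜ \ Ω)) :=
    disjoint_prod.2 (.inr (disjoint_sdiff_right.mono_left inter_subset_right))
  have hdisj' : Disjoint ((E ∩ Ω) ×ˢ (Eᶜ ∩ Ω) ∪ (E ∩ Ω) ×ˢ (Eᶜ \ Ω)) ((E \ Ω) ×ˢ (Eᶜ ∩ Ω)) := by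
    rw [← prod_union]
    exact disjoint_prod.2 (.inl (disjoint_sdiff_right.mono_left inter_subset_right))
  rw [hsplit, measure_union hdisj' (hout.prod hcin), measure_union hdisj (hin.prod hcout),
    kernelMeasure_prod hin hcin, kernelMeasure_prod hin hcout, kernelMeasure_prod hout hcin, Ps]

theorem Ps_diff_self_le_Ls_compl (hΩ : MeasurableSet Ω) (hE : MeasurableSet E) :
    Ps n s (E \ Ω) Ω ≤ Ls n s Ω Ωᶜ := by
  rw [Ls_comm, ← kernelMeasure_prod hΩ.compl hΩ, Ps_eq_kernelMeasure (hE.diff hΩ) hΩ]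
  refine measure_mono ?_
  rintro z ⟨⟨hz, -⟩, hzΩ⟩
  exact ⟨hz.2, hzΩ.resolve_left hz.2⟩

theorem LocConv.Ps_le_liminf (hconv : LocConv n Ek E) (hΩ : MeasurableSet Ω)
    (hEk : ∀ k, MeasurableSet (Ek k)) (hE : MeasurableSet E) :
    Ps n s E Ω ≤ liminf (fun k => Ps n s (Ek k) Ω) atTop := by
  simp only [Ps_eq_kernelMeasure, hΩ, hE, hEk]
  exact measure_prod_compl_inter_le_liminf kernelMeasure_absolutelyContinuous _ hEk hE hconv

theorem LocConv.tendsto_volume_diff_symmDiff_diff (hconv : LocConv n Ek E)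
    (hFE : volume ((F \ Ω) ∆ (E \ Ω)) = 0) (K : Set (EuclideanSpace ℝ (Fin n)))
    (hK : IsBounded K) :
    Tendsto (fun k => volume (((Ek k \ Ω) ∆ (F \ Ω)) ∩ K)) atTop (𝓝 0) := by
  refine tendsto_of_tendsto_of_tendsto_of_le_of_le tendsto_const_nhds (hconv K hK)
    (fun _ => zero_le) fun k => ?_
  have hsub : ((Ek k \ Ω) ∆ (F \ Ω)) ∩ K ⊆ (Ek k ∆ E) ∩ K ∪ (F \ Ω) ∆ (E \ Ω) := by
    intro x
    simp only [mem_union, mem_inter_iff, mem_symmDiff, Set.mem_sdiff]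
    tauto
  calc volume (((Ek k \ Ω) ∆ (F \ Ω)) ∩ K)
      ≤ volume ((Ek k ∆ E) ∩ K) + volume ((F \ Ω) ∆ (E \ Ω)) :=
        (measure_mono hsub).trans (measure_union_le _ _)
    _ = volume ((Ek k ∆ E) ∩ K) := by rw [hFE, add_zero]

theorem SMinimal.Ps_le_Ps_ite (hEmin : SMinimal n s E Ω) (hΩ : MeasurableSet Ω)
    (hE : MeasurableSet E) (hF : MeasurableSet F) : Ps n s E Ω ≤ Ps n s (Ω.ite F E) Ω :=
  hEmin.2 _ (hΩ.ite hF hE) (by simp)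

theorem LocConv.limsup_Ps_le (hconv : LocConv n Ek E) (hΩ : MeasurableSet Ω)
    (hΩs : Ls n s Ω Ωᶜ ≠ ⊤) (hEk : ∀ k, MeasurableSet (Ek k)) (hmin : ∀ k, SMinimal n s (Ek k) Ω)
    (hF : MeasurableSet F) (hFE : volume ((F \ Ω) ∆ (E \ Ω)) = 0) :
    limsup (fun k => Ps n s (Ek k) Ω) atTop ≤ Ps n s F Ω := by
  calc limsup (fun k => Ps n s (Ek k) Ω) atTop
      ≤ limsup (fun k => Ps n s (Ω.ite F (Ek k)) Ω) atTop :=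
        limsup_le_limsup (Eventually.of_forall fun k => (hmin k).Ps_le_Ps_ite hΩ (hEk k) hF)
    _ ≤ Ps n s F Ω := by
        simp only [Ps_eq_kernelMeasure, hΩ, hF, hEk, MeasurableSet.ite]
        exact limsup_measure_ite_prod_compl_le kernelMeasure_absolutelyContinuous hΩ
          (kernelMeasure_prod_compl_union_ne_top hΩ hΩs) hEk hF
          (hconv.tendsto_volume_diff_symmDiff_diff hFE)

theorem sMinimal_compactness_general (hΩ : MeasurableSet Ω) (hΩs : Ls n s Ω Ωᶜ ≠ ⊤)
    (hEk : ∀ k, MeasurableSet (Ek k)) (hmin : ∀ k, SMinimal n s (Ek k) Ω)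
    (hE : MeasurableSet E) (hconv : LocConv n Ek E) :
    SMinimal n s E Ω ∧ Tendsto (fun k => Ps n s (Ek k) Ω) atTop (𝓝 (Ps n s E Ω)) := by
  have hliminf : Ps n s E Ω ≤ liminf (fun k => Ps n s (Ek k) Ω) atTop :=
    hconv.Ps_le_liminf hΩ hEk hE
  have hlimsup : ∀ F, MeasurableSet F → volume ((F \ Ω) ∆ (E \ Ω)) = 0 →
      limsup (fun k => Ps n s (Ek k) Ω) atTop ≤ Ps n s F Ω := fun F hF hFE =>
    hconv.limsup_Ps_le hΩ hΩs hEk hmin hF hFE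
  have hle : ∀ F, MeasurableSet F → volume ((F \ Ω) ∆ (E \ Ω)) = 0 → Ps n s E Ω ≤ Ps n s F Ω :=
    fun F hF hFE => (hliminf.trans liminf_le_limsup).trans (hlimsup F hF hFE)
  refine ⟨⟨?_, hle⟩, tendsto_of_le_liminf_of_limsup_le hliminf (hlimsup E hE (by simp))⟩
  calc Ps n s E Ω ≤ Ps n s (E \ Ω) Ω := hle _ (hE.diff hΩ) (by simp)
    _ ≤ Ls n s Ω Ωᶜ := Ps_diff_self_le_Ls_compl hΩ hE
    _ < ⊤ := hΩs.lt_top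

end FractionalPerimeter

/-- Theorem 1.11: compactness of `s`-minimal sets in a bounded open set with
Lipschitz boundary: a local-in-measure limit of `s`-minimal sets is `s`-minimal, and the
`s`-perimeters converge. -/
theorem sMinimal_compactness
    (n : ℕ) (hn : 1 ≤ n) (s : ℝ) (hs : s ∈ Set.Ioo (0 : ℝ) 1)
    (Ω : Set (EuclideanSpace ℝ (Fin n))) (hΩo : IsOpen Ω) (hΩb : IsBounded Ω)
    (hΩlip : HasLipschitzBoundary Ω)
    (Ek : ℕ → Set (EuclideanSpace ℝ (Fin n))) (hEk : ∀ k, MeasurableSet (Ek k))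
    (hmin : ∀ k, SMinimal n s (Ek k) Ω)
    (E : Set (EuclideanSpace ℝ (Fin n))) (hE : MeasurableSet E)
    (hconv : LocConv n Ek E) :
    SMinimal n s E Ω ∧
      Tendsto (fun k => Ps n s (Ek k) Ω) atTop (𝓝 (Ps n s E Ω)) := by
  exact sMinimal_compactness_general hΩo.measurableSet
    (Ls_compl_ne_top_of_hasFiniteMinkowskiContent hn hs hΩo.measurableSet hΩb.measure_lt_top.ne
      (hΩlip.hasFiniteMinkowskiContent_frontier hΩb)) hEk hmin hE hconv
end

section
/- Let Ω ⊆ ℝ^n be an open set and s ∈ (0,1). Let (E_h) be a sequence of measurable sets, each locally s-minimal in Ω, with E_h →loc E for some measurable set E. Then E is locally s-minimal in Ω and P_s(E,Ω') = lim_{h→∞} P_s(E_h,Ω') for every open Ω' ⊂⊂ Ω. -/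
open MeasureTheory Set Filter Topology Metric Bornology
open scoped ENNReal NNReal symmDiff

/-!
The perimeter `Ps n s E U` is the mass, under the measure `|x - y| ^ (-(n + s)) dx dy`, of the
pairs in `E ×ˢ Eᶜ` touching `U`. Such masses are lower semicontinuous in `E`: on a piece `G` of
finite mass, replacing `E` by `F` costs at most the mass of the pairs in `G` touching `F ∆ E`, and
this tends to zero since the marginals of the piece are absolutely continuous.

If `F` agrees with the limit `E` outside `U`, then gluing `F` inside `U` to `E_h` outside `U` gives
a competitor for `E_h` whose perimeter exceeds that of `F` by at most the mass of the pairs crossing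
`∂U` and touching `E_h ∆ E`. When the crossing pairs of `U` have finite mass this error vanishes,
hence `limsup P(E_h, U) ≤ P(F, U)`; with semicontinuity, `E` is minimal in `U` and
`P(E_h, U) → P(E, U)`. A given `Ω' ⊂⊂ Ω` need not have finite perimeter, but almost every small
neighbourhood `U` of it does, by the coarea formula for the distance function and the integrability
of `min |z| 1 * |z| ^ (-(n + s))`. Finally minimality passes from `U` to `Ω'`, and so does the
convergence, because the pairs touching `U` split into those touching `Ω'` and the others, on both
of which the mass is lower semicontinuous while the total converges.
-/

theorem tendsto_of_tendsto_add_of_le_liminf {ι : Type*} {l : Filter ι} {a b : ι → ℝ≥0∞}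
    {A B : ℝ≥0∞} (hA : A ≠ ∞) (hB : B ≠ ∞) (hab : Tendsto (fun i => a i + b i) l (𝓝 (A + B)))
    (ha : A ≤ liminf a l) (hb : B ≤ liminf b l) : Tendsto a l (𝓝 A) := by
  rcases l.eq_or_neBot with rfl | _
  · exact tendsto_bot
  have hmin : Tendsto (fun i => min (b i) B) l (𝓝 B) :=
    tendsto_order.2 ⟨fun c hc => (eventually_lt_of_lt_liminf (hc.trans_le hb)).mono
      fun _ hi => lt_min hi hc, fun c hc => .of_forall fun _ => (min_le_right _ _).trans_lt hc⟩
  have hsub : Tendsto (fun i => a i + b i - min (b i) B) l (𝓝 A) := by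
    simpa only [ENNReal.add_sub_cancel_right hB] using
      ENNReal.Tendsto.sub hab hmin (.inl (ENNReal.add_ne_top.2 ⟨hA, hB⟩))
  have hle (i : ι) : a i ≤ a i + b i - min (b i) B :=
    ENNReal.le_sub_of_add_le_right (ne_top_of_le_ne_top hB (min_le_right _ _))
      (add_le_add_right (min_le_left _ _) _)
  exact tendsto_of_le_liminf_of_limsup_le ha
    ((limsup_le_limsup (.of_forall hle)).trans_eq hsub.limsup_eq)

theorem tendsto_measure_zero_of_absolutelyContinuous {ι X : Type*} [MeasurableSpace X]
    {l : Filter ι} {ρ μ : Measure X} [IsFiniteMeasure ρ] [SigmaFinite μ] (hρ : ρ ≪ μ)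
    {D : ι → Set X} (hD : Tendsto (fun i => μ (D i)) l (𝓝 0)) :
    Tendsto (fun i => ρ (D i)) l (𝓝 0) := by
  have hdensity : ∫⁻ x, ρ.rnDeriv μ x ∂μ ≠ ∞ := (Measure.lintegral_rnDeriv_lt_top ρ μ).ne
  simpa only [Measure.setLIntegral_rnDeriv hρ] using tendsto_setLIntegral_zero hdensity hD

section Pairs

variable {X : Type*} {U V E F : Set X}

/-- The pairs with at least one entry in `U`: the interactions counted by a nonlocal perimeter
in `U`. -/
def touchingPairs (U : Set X) : Set (X × X) := Prod.fst ⁻¹' U ∪ Prod.snd ⁻¹' U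

/-- The pairs with exactly one entry in `U`. -/
def crossingPairs (U : Set X) : Set (X × X) := U ×ˢ Uᶜ ∪ Uᶜ ×ˢ U

theorem touchingPairs_mono (h : V ⊆ U) : touchingPairs V ⊆ touchingPairs U :=
  union_subset_union (preimage_mono h) (preimage_mono h)

theorem prod_compl_subset_union_touchingPairs :
    E ×ˢ Eᶜ ⊆ F ×ˢ Fᶜ ∪ touchingPairs (F ∆ E) := by
  rintro ⟨x, y⟩
  simp only [touchingPairs, mem_union, mem_prod, mem_compl_iff, mem_preimage, mem_symmDiff]
  tauto

theorem touchingPairs_inter_ite_prod_compl_subset :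
    touchingPairs U ∩ U.ite F E ×ˢ (U.ite F E)ᶜ ⊆
      touchingPairs U ∩ F ×ˢ Fᶜ ∪ touchingPairs ((E ∆ F) \ U) ∩ crossingPairs U := by
  rintro ⟨x, y⟩
  simp only [touchingPairs, crossingPairs, Set.ite, mem_union, mem_inter_iff, mem_prod,
    mem_compl_iff, mem_preimage, Set.mem_sdiff, mem_symmDiff]
  by_cases hx : x ∈ U <;> by_cases hy : y ∈ U <;>
    simp only [hx, hy, not_true, not_false_iff, and_true, and_false, true_and, false_and,
      or_true, or_false, false_or] <;> tauto

theorem touchingPairs_inter_diff_prod_compl_subset :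
    touchingPairs U ∩ (E \ U) ×ˢ (E \ U)ᶜ ⊆ crossingPairs U := by
  rintro ⟨x, y⟩
  simp only [touchingPairs, crossingPairs, mem_union, mem_inter_iff, mem_prod, mem_compl_iff,
    mem_preimage, Set.mem_sdiff]
  tauto

variable [MeasurableSpace X]

theorem measurableSet_touchingPairs (hU : MeasurableSet U) : MeasurableSet (touchingPairs U) :=
  (measurable_fst hU).union (measurable_snd hU)

theorem measure_touchingPairs_eq_zero {μ : Measure X} {ν : Measure (X × X)}
    (hν : ν ≪ μ.prod μ) (hU : μ U = 0) : ν (touchingPairs U) = 0 :=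
  hν (measure_union_null (Measure.quasiMeasurePreserving_fst.preimage_null hU)
    (Measure.quasiMeasurePreserving_snd.preimage_null hU))

end Pairs

section LocalConvergence

variable {ι X : Type*} [PseudoMetricSpace X] [MeasurableSpace X] {μ : Measure X} {l : Filter ι}
  {D : ι → Set X}

/-- The sets `D i` vanish locally in measure along `l`. With `D i = F i ∆ E` this is the
convergence `F i → E` of `LocConv`. -/
def VanishesLocally (μ : Measure X) (l : Filter ι) (D : ι → Set X) : Prop :=
  ∀ K, IsBounded K → Tendsto (fun i => μ (D i ∩ K)) l (𝓝 0)

theorem VanishesLocally.mono_ae (hD : VanishesLocally μ l D) {D' : ι → Set X}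
    (h : ∀ i, D' i ≤ᵐ[μ] D i) : VanishesLocally μ l D' := fun K hK =>
  tendsto_of_tendsto_of_tendsto_of_le_of_le tendsto_const_nhds (hD K hK) (fun _ => zero_le)
    fun i => measure_mono_ae ((h i).inter (EventuallyLE.refl _ K))

theorem tendsto_measure_compl_ball_atTop [OpensMeasurableSpace X] (ρ : Measure X)
    [IsFiniteMeasure ρ] (x : X) : Tendsto (fun r : ℕ => ρ (ball x r)ᶜ) atTop (𝓝 0) := by
  have hanti : Antitone fun r : ℕ => (ball x (r : ℝ))ᶜ := fun r R hrR =>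
    compl_subset_compl.2 (ball_subset_ball (Nat.cast_le.2 hrR))
  have hlim := tendsto_measure_iInter_atTop (μ := ρ)
    (fun r : ℕ => (measurableSet_ball (x := x) (ε := r)).compl.nullMeasurableSet) hanti
    ⟨0, measure_ne_top _ _⟩
  rwa [← compl_iUnion, iUnion_ball_nat, compl_univ, measure_empty] at hlim

theorem VanishesLocally.tendsto_measure [OpensMeasurableSpace X] [SigmaFinite μ]
    (hD : VanishesLocally μ l D) {ρ : Measure X} [IsFiniteMeasure ρ] (hρ : ρ ≪ μ) :
    Tendsto (fun i => ρ (D i)) l (𝓝 0) := by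
  rcases isEmpty_or_nonempty X with _ | ⟨⟨x⟩⟩
  · simp only [eq_empty_of_isEmpty, measure_empty, tendsto_const_nhds]
  refine ENNReal.tendsto_nhds_zero.2 fun ε hε => ?_
  have hε2 : 0 < ε / 2 := ENNReal.half_pos hε.ne'
  obtain ⟨r, hr⟩ :=
    (ENNReal.tendsto_nhds_zero.1 (tendsto_measure_compl_ball_atTop ρ x) _ hε2).exists
  have hball := tendsto_measure_zero_of_absolutelyContinuous hρ (hD (ball x r) isBounded_ball)
  filter_upwards [ENNReal.tendsto_nhds_zero.1 hball _ hε2] with i hi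
  calc ρ (D i) ≤ ρ (D i ∩ ball x r) + ρ (D i \ ball x r) := measure_le_inter_add_sdiff _ _ _
    _ ≤ ε / 2 + ε / 2 := add_le_add hi ((measure_mono fun _ hy => hy.2).trans hr)
    _ = ε := ENNReal.add_halves ε

theorem VanishesLocally.tendsto_measure_touchingPairs_inter [OpensMeasurableSpace X]
    [SigmaFinite μ] (hD : VanishesLocally μ l D) {ν : Measure (X × X)} (hν : ν ≪ μ.prod μ)
    {G : Set (X × X)} (hG : ν G ≠ ∞) :
    Tendsto (fun i => ν (touchingPairs (D i) ∩ G)) l (𝓝 0) := by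
  have : Fact (ν G < ∞) := ⟨hG.lt_top⟩
  have hνG : ν.restrict G ≪ μ.prod μ := Measure.restrict_le_self.absolutelyContinuous.trans hν
  have hfst : (ν.restrict G).map Prod.fst ≪ μ :=
    (hνG.map measurable_fst).trans Measure.quasiMeasurePreserving_fst.absolutelyContinuous
  have hsnd : (ν.restrict G).map Prod.snd ≪ μ :=
    (hνG.map measurable_snd).trans Measure.quasiMeasurePreserving_snd.absolutelyContinuous
  have hsum := (hD.tendsto_measure hfst).add (hD.tendsto_measure hsnd)
  rw [add_zero] at hsum
  refine tendsto_of_tendsto_of_tendsto_of_le_of_le tendsto_const_nhds hsum (fun _ => zero_le)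
    fun i => ?_
  calc ν (touchingPairs (D i) ∩ G)
      ≤ ν.restrict G (touchingPairs (D i)) := Measure.le_restrict_apply _ _
    _ ≤ ν.restrict G (Prod.fst ⁻¹' D i) + ν.restrict G (Prod.snd ⁻¹' D i) :=
        measure_union_le _ _
    _ ≤ (ν.restrict G).map Prod.fst (D i) + (ν.restrict G).map Prod.snd (D i) :=
        add_le_add (Measure.le_map_apply measurable_fst.aemeasurable _)
          (Measure.le_map_apply measurable_snd.aemeasurable _)

end LocalConvergence

section CutMass

variable {X : Type*} [MeasurableSpace X] {μ : Measure X} {ν : Measure (X × X)}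
  {S T : Set (X × X)} {U V E F : Set X}

/-- The `ν`-mass of the pairs in `S` which go from `E` to its complement. For
`S = touchingPairs U` this is the nonlocal perimeter of `E` in `U` with interaction `ν`. -/
def cutMass (ν : Measure (X × X)) (S : Set (X × X)) (E : Set X) : ℝ≥0∞ := ν (S ∩ E ×ˢ Eᶜ)

theorem cutMass_mono (h : S ⊆ T) : cutMass ν S E ≤ cutMass ν T E :=
  measure_mono (inter_subset_inter_left _ h)

theorem cutMass_add_cutMass_diff (hS : MeasurableSet S) (hST : S ⊆ T) :
    cutMass ν S E + cutMass ν (T \ S) E = cutMass ν T E := by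
  have h := measure_inter_add_sdiff (μ := ν) (T ∩ E ×ˢ Eᶜ) hS
  rwa [inter_right_comm, inter_eq_right.2 hST, ← sdiff_inter_right_comm] at h

theorem cutMass_le_cutMass_add_measure :
    cutMass ν S E ≤ cutMass ν S F + ν (touchingPairs (F ∆ E) ∩ S) := by
  refine (measure_mono fun p hp => ?_).trans (measure_union_le _ _)
  exact (prod_compl_subset_union_touchingPairs hp.2).imp (⟨hp.1, ·⟩) (⟨·, hp.1⟩)

theorem cutMass_congr_ae (hν : ν ≪ μ.prod μ) (h : E =ᵐ[μ] F) : cutMass ν S E = cutMass ν S F := by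
  have hle {A B : Set X} (hAB : A =ᵐ[μ] B) : cutMass ν S A ≤ cutMass ν S B := by
    have hnull := measure_touchingPairs_eq_zero hν (measure_symmDiff_eq_zero_iff.2 hAB.symm)
    simpa only [measure_inter_null_of_null_left _ hnull, add_zero] using
      cutMass_le_cutMass_add_measure (ν := ν) (S := S) (E := A) (F := B)
  exact (hle h).antisymm (hle h.symm)

theorem cutMass_diff_touchingPairs :
    cutMass ν (S \ touchingPairs V) (E \ V) = cutMass ν (S \ touchingPairs V) E := by
  refine congrArg ν ?_
  ext ⟨x, y⟩
  simp only [touchingPairs, mem_inter_iff, Set.mem_sdiff, mem_union, mem_preimage, mem_prod,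
    mem_compl_iff]
  tauto

theorem cutMass_touchingPairs_ite_le :
    cutMass ν (touchingPairs U) (U.ite F E) ≤
      cutMass ν (touchingPairs U) F + ν (touchingPairs ((E ∆ F) \ U) ∩ crossingPairs U) :=
  (measure_mono touchingPairs_inter_ite_prod_compl_subset).trans (measure_union_le _ _)

end CutMass

section Minimizers

variable {X : Type*} [MeasurableSpace X] {μ : Measure X} {ν : Measure (X × X)} {U V E F : Set X}

/-- `E` minimizes the nonlocal perimeter in `U` with interaction `ν` among the measurable sets
which agree with `E` outside `U` up to `μ`-null sets. Unlike in `SMinimal`, the minimum is allowed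
to be infinite. -/
def IsCutMinimal (μ : Measure X) (ν : Measure (X × X)) (U E : Set X) : Prop :=
  ∀ F, MeasurableSet F → (F \ U : Set X) =ᵐ[μ] (E \ U : Set X) →
    cutMass ν (touchingPairs U) E ≤ cutMass ν (touchingPairs U) F

theorem IsCutMinimal.mono (h : IsCutMinimal μ ν U E) (hν : ν ≪ μ.prod μ) (hVU : V ⊆ U)
    (hV : MeasurableSet V) (hfin : cutMass ν (touchingPairs U) E ≠ ∞) : IsCutMinimal μ ν V E := by
  intro F hF hFE
  have hFE' : (F \ U : Set X) =ᵐ[μ] (E \ U : Set X) := by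
    simpa only [sdiff_sdiff, sup_eq_union, union_eq_self_of_subset_left hVU] using
      hFE.diff (EventuallyEq.refl _ U)
  have hdiff : cutMass ν (touchingPairs U \ touchingPairs V) F =
      cutMass ν (touchingPairs U \ touchingPairs V) E := by
    rw [← cutMass_diff_touchingPairs (E := F), cutMass_congr_ae hν hFE, cutMass_diff_touchingPairs]
  have hle := h F hF hFE'
  have hVm := measurableSet_touchingPairs hV
  rw [← cutMass_add_cutMass_diff hVm (touchingPairs_mono hVU),
    ← cutMass_add_cutMass_diff (E := F) hVm (touchingPairs_mono hVU), hdiff] at hle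
  exact (ENNReal.add_le_add_iff_right
    (ne_top_of_le_ne_top hfin (cutMass_mono sdiff_subset))).1 hle

theorem IsCutMinimal.cutMass_le_add (h : IsCutMinimal μ ν U E) (hU : MeasurableSet U)
    (hE : MeasurableSet E) (hF : MeasurableSet F) :
    cutMass ν (touchingPairs U) E ≤
      cutMass ν (touchingPairs U) F + ν (touchingPairs ((E ∆ F) \ U) ∩ crossingPairs U) :=
  (h _ (hU.ite hF hE) (.of_eq (ite_sdiff_self U F E))).trans cutMass_touchingPairs_ite_le

theorem IsCutMinimal.cutMass_ne_top (h : IsCutMinimal μ ν U E) (hU : MeasurableSet U)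
    (hcross : ν (crossingPairs U) ≠ ∞) (hE : MeasurableSet E) :
    cutMass ν (touchingPairs U) E ≠ ∞ :=
  ne_top_of_le_ne_top hcross <| (h (E \ U) (hE.diff hU) (.of_eq sdiff_idem)).trans <|
    measure_mono touchingPairs_inter_diff_prod_compl_subset

end Minimizers

section LimitsOfMinimizers

variable {ι X : Type*} [PseudoMetricSpace X] [MeasurableSpace X] [OpensMeasurableSpace X]
  {μ : Measure X} [SigmaFinite μ] {ν : Measure (X × X)} {S : Set (X × X)}
  {U E : Set X} {M : ι → Set X} {l : Filter ι}

theorem cutMass_le_liminf [SigmaFinite ν] (hν : ν ≪ μ.prod μ) (hS : MeasurableSet S)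
    (hE : MeasurableSet E) (hconv : VanishesLocally μ l fun i => M i ∆ E) :
    cutMass ν S E ≤ liminf (fun i => cutMass ν S (M i)) l := by
  refine le_of_forall_lt fun c hc => ?_
  obtain ⟨G, -, hGS, hcG, hG⟩ :=
    Measure.exists_subset_measure_lt_top (hS.inter (hE.prod hE.compl)) hc
  have hle (i : ι) : ν G ≤ cutMass ν S (M i) + ν (touchingPairs (M i ∆ E) ∩ G) := calc
    ν G = cutMass ν G E := congrArg ν (inter_eq_left.2 (hGS.trans inter_subset_right)).symm
    _ ≤ cutMass ν G (M i) + ν (touchingPairs (M i ∆ E) ∩ G) := cutMass_le_cutMass_add_measure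
    _ ≤ cutMass ν S (M i) + ν (touchingPairs (M i ∆ E) ∩ G) :=
        add_le_add_left (cutMass_mono (hGS.trans inter_subset_left)) _
  calc c < ν G := hcG
    _ ≤ liminf (fun i => cutMass ν S (M i) + ν (touchingPairs (M i ∆ E) ∩ G)) l :=
        le_liminf_of_le (by isBoundedDefault) (.of_forall hle)
    _ = liminf (fun i => cutMass ν S (M i)) l :=
        ENNReal.liminf_add_of_right_tendsto_zero
          (hconv.tendsto_measure_touchingPairs_inter hν hG.ne) _

theorem limsup_cutMass_le [l.NeBot] (hν : ν ≪ μ.prod μ) (hU : MeasurableSet U)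
    (hcross : ν (crossingPairs U) ≠ ∞) (hM : ∀ i, MeasurableSet (M i))
    (hmin : ∀ i, IsCutMinimal μ ν U (M i)) (hconv : VanishesLocally μ l fun i => M i ∆ E)
    {F : Set X} (hF : MeasurableSet F) (hFE : (F \ U : Set X) =ᵐ[μ] (E \ U : Set X)) :
    limsup (fun i => cutMass ν (touchingPairs U) (M i)) l ≤ cutMass ν (touchingPairs U) F := by
  have hext (i : ι) : ((M i ∆ F) \ U : Set X) ≤ᵐ[μ] (M i ∆ E : Set X) := by
    filter_upwards [hFE.mem_iff] with x hx hxi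
    obtain ⟨hsymm, hxU⟩ := hxi
    rw [Set.mem_sdiff, Set.mem_sdiff, and_iff_left hxU, and_iff_left hxU] at hx
    exact hsymm.imp (fun h => ⟨h.1, mt hx.2 h.2⟩) (fun h => ⟨hx.1 h.1, h.2⟩)
  have herr := (hconv.mono_ae hext).tendsto_measure_touchingPairs_inter hν hcross
  calc limsup (fun i => cutMass ν (touchingPairs U) (M i)) l
      ≤ limsup (fun i => cutMass ν (touchingPairs U) F +
          ν (touchingPairs ((M i ∆ F) \ U) ∩ crossingPairs U)) l :=
        limsup_le_limsup (.of_forall fun i => (hmin i).cutMass_le_add hU (hM i) hF)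
    _ = cutMass ν (touchingPairs U) F :=
        (ENNReal.limsup_add_of_right_tendsto_zero herr _).trans (limsup_const _)

variable [SigmaFinite ν] [l.NeBot]

theorem IsCutMinimal.of_vanishesLocally (hν : ν ≪ μ.prod μ) (hU : MeasurableSet U)
    (hcross : ν (crossingPairs U) ≠ ∞) (hM : ∀ i, MeasurableSet (M i))
    (hmin : ∀ i, IsCutMinimal μ ν U (M i)) (hE : MeasurableSet E)
    (hconv : VanishesLocally μ l fun i => M i ∆ E) : IsCutMinimal μ ν U E := fun _ hF hFE =>
  (cutMass_le_liminf hν (measurableSet_touchingPairs hU) hE hconv).trans <|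
    (liminf_le_limsup (by isBoundedDefault) (by isBoundedDefault)).trans <|
      limsup_cutMass_le hν hU hcross hM hmin hconv hF hFE

theorem tendsto_cutMass (hν : ν ≪ μ.prod μ) (hU : MeasurableSet U)
    (hcross : ν (crossingPairs U) ≠ ∞) (hM : ∀ i, MeasurableSet (M i))
    (hmin : ∀ i, IsCutMinimal μ ν U (M i)) (hE : MeasurableSet E)
    (hconv : VanishesLocally μ l fun i => M i ∆ E) (hS : MeasurableSet S)
    (hSU : S ⊆ touchingPairs U) :
    Tendsto (fun i => cutMass ν S (M i)) l (𝓝 (cutMass ν S E)) := by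
  have hT := measurableSet_touchingPairs hU
  have hfin := (IsCutMinimal.of_vanishesLocally hν hU hcross hM hmin hE hconv).cutMass_ne_top
    hU hcross hE
  have htotal : Tendsto (fun i => cutMass ν (touchingPairs U) (M i)) l
      (𝓝 (cutMass ν (touchingPairs U) E)) :=
    tendsto_of_le_liminf_of_limsup_le (cutMass_le_liminf hν hT hE hconv)
      (limsup_cutMass_le hν hU hcross hM hmin hconv hE (EventuallyEq.refl _ _))
  simp only [← cutMass_add_cutMass_diff hS hSU] at htotal
  exact tendsto_of_tendsto_add_of_le_liminf (ne_top_of_le_ne_top hfin (cutMass_mono hSU))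
    (ne_top_of_le_ne_top hfin (cutMass_mono sdiff_subset)) htotal
    (cutMass_le_liminf hν hS hE hconv) (cutMass_le_liminf hν (hT.diff hS) hE hconv)

end LimitsOfMinimizers

section Neighbourhoods

theorem volume_restrict_Ioo_Ioc_infDist_le {X : Type*} [PseudoMetricSpace X] {K : Set X}
    {δ : ℝ} (hδ : δ ≤ 1) (x y : X) :
    volume.restrict (Ioo 0 δ) (Ioc (infDist x K) (infDist y K)) ≤ min (edist x y) 1 := by
  refine le_min ?_ ?_
  · calc volume.restrict (Ioo 0 δ) (Ioc (infDist x K) (infDist y K))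
        ≤ volume (Ioc (infDist x K) (infDist y K)) := Measure.restrict_apply_le _ _
      _ = ENNReal.ofReal (infDist y K - infDist x K) := Real.volume_Ioc
      _ ≤ ENNReal.ofReal (dist y x) :=
        ENNReal.ofReal_le_ofReal (sub_le_iff_le_add'.2 infDist_le_infDist_add_dist)
      _ = edist x y := by rw [← edist_dist, edist_comm]
  · calc volume.restrict (Ioo 0 δ) (Ioc (infDist x K) (infDist y K))
        ≤ volume.restrict (Ioo 0 δ) univ := measure_mono (subset_univ _)
      _ = ENNReal.ofReal δ := by rw [Measure.restrict_apply_univ, Real.volume_Ioo, sub_zero]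
      _ ≤ 1 := ENNReal.ofReal_le_one.2 hδ

variable {X : Type*} [MeasurableSpace X] {ν : Measure (X × X)} [SFinite ν]

theorem lintegral_measure_sublevel_prod_compl {f : X → ℝ} (hf : Measurable f) (τ : Measure ℝ)
    [SFinite τ] :
    ∫⁻ t, ν ({x | f x < t} ×ˢ {x | f x < t}ᶜ) ∂τ = ∫⁻ p, τ (Ioc (f p.1) (f p.2)) ∂ν := by
  let S : Set ((X × X) × ℝ) := {q | f q.1.1 < q.2} ∩ {q | q.2 ≤ f q.1.2}
  have hS : MeasurableSet S :=
    (measurableSet_lt (hf.comp (measurable_fst.comp measurable_fst)) measurable_snd).inter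
      (measurableSet_le measurable_snd (hf.comp (measurable_snd.comp measurable_fst)))
  have hslice (t : ℝ) : {x | f x < t} ×ˢ {x | f x < t}ᶜ = (fun p : X × X => (p, t)) ⁻¹' S := by
    ext p
    simp only [S, mem_prod, mem_compl_iff, mem_ofPred_eq, not_lt, mem_preimage, mem_inter_iff]
  simp only [hslice]
  rw [← Measure.prod_apply_symm hS, Measure.prod_apply hS]
  rfl

variable [PseudoMetricSpace X] [OpensMeasurableSpace X] {K : Set X} {δ : ℝ}

theorem setLIntegral_measure_thickening_prod_compl_le (hδ : δ ≤ 1) :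
    ∫⁻ t in Ioo 0 δ, ν (thickening t K ×ˢ (thickening t K)ᶜ) ≤
      ∫⁻ p in thickening δ K ×ˢ univ, min (edist p.1 p.2) 1 ∂ν := by
  rcases K.eq_empty_or_nonempty with rfl | hK
  · simp only [thickening_empty, empty_prod, measure_empty, lintegral_zero, zero_le]
  set ρ := ν.restrict (thickening δ K ×ˢ univ)
  have hlevel (t : ℝ) : thickening t K = {x | infDist x K < t} :=
    Set.ext fun x => mem_thickening_iff_infDist_lt hK
  calc ∫⁻ t in Ioo 0 δ, ν (thickening t K ×ˢ (thickening t K)ᶜ)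
      = ∫⁻ t in Ioo 0 δ, ρ (thickening t K ×ˢ (thickening t K)ᶜ) :=
        setLIntegral_congr_fun measurableSet_Ioo fun t ht => (Measure.restrict_eq_self _
          (prod_mono (thickening_mono ht.2.le K) (subset_univ _))).symm
    _ = ∫⁻ p, volume.restrict (Ioo 0 δ) (Ioc (infDist p.1 K) (infDist p.2 K)) ∂ρ := by
        simp only [hlevel]
        exact lintegral_measure_sublevel_prod_compl (continuous_infDist_pt K).measurable _
    _ ≤ ∫⁻ p, min (edist p.1 p.2) 1 ∂ρ :=
        lintegral_mono fun p => volume_restrict_Ioo_Ioc_infDist_le hδ p.1 p.2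

theorem exists_isOpen_measure_prod_compl_ne_top [ProperSpace X]
    (hν : ∀ A, IsBounded A → ∫⁻ p in A ×ˢ univ, min (edist p.1 p.2) 1 ∂ν ≠ ∞)
    (hK : IsCompact K) {Ω : Set X} (hΩ : IsOpen Ω) (hKΩ : K ⊆ Ω) :
    ∃ U, IsOpen U ∧ K ⊆ U ∧ IsCompact (closure U) ∧ closure U ⊆ Ω ∧ ν (U ×ˢ Uᶜ) ≠ ∞ := by
  obtain ⟨r, hr, hrΩ⟩ := hK.exists_cthickening_subset_open hΩ hKΩ
  set δ := min r 1
  have hδ : 0 < δ := lt_min hr one_pos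
  have hint : ∫⁻ t in Ioo 0 δ, ν (thickening t K ×ˢ (thickening t K)ᶜ) ≠ ∞ :=
    ne_top_of_le_ne_top (hν _ hK.isBounded.thickening)
      (setLIntegral_measure_thickening_prod_compl_le (min_le_right r 1))
  obtain ⟨t, ht, hfin⟩ : ∃ t ∈ Ioo 0 δ, ν (thickening t K ×ˢ (thickening t K)ᶜ) ≠ ∞ := by
    by_contra! hall
    refine hint ?_
    rw [setLIntegral_congr_fun measurableSet_Ioo hall, setLIntegral_const, Real.volume_Ioo,
      sub_zero, ENNReal.top_mul (ENNReal.ofReal_pos.2 hδ).ne']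
  have hclosure : closure (thickening t K) ⊆ cthickening r K :=
    (closure_thickening_subset_cthickening t K).trans
      (cthickening_mono (ht.2.le.trans (min_le_left r 1)) K)
  exact ⟨thickening t K, isOpen_thickening, self_subset_thickening ht.1 K,
    hK.cthickening.of_isClosed_subset isClosed_closure hclosure, hclosure.trans hrΩ, hfin⟩

end Neighbourhoods

section RieszMeasure

section Metric

variable {X : Type*} [PseudoMetricSpace X] [MeasurableSpace X] {μ : Measure X} {α : ℝ}

/-- The interaction measure `dist x y ^ (-α) dμ(x) dμ(y)` on pairs. The power is Mathlib's real
power, so the kernel vanishes on the diagonal when `α ≠ 0`. -/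
noncomputable def rieszMeasure (μ : Measure X) (α : ℝ) : Measure (X × X) :=
  (μ.prod μ).withDensity fun p => ENNReal.ofReal (dist p.1 p.2 ^ (-α))

theorem rieszMeasure_absolutelyContinuous : rieszMeasure μ α ≪ μ.prod μ :=
  withDensity_absolutelyContinuous _ _

instance [SigmaFinite μ] : SigmaFinite (rieszMeasure μ α) :=
  SigmaFinite.withDensity_of_ne_top (.of_forall fun _ => ENNReal.ofReal_ne_top)

variable [OpensMeasurableSpace X] [SecondCountableTopology X] [SFinite μ]

theorem rieszMeasure_prod (A B : Set X) :
    rieszMeasure μ α (A ×ˢ B) = ∫⁻ x in A, ∫⁻ y in B, ENNReal.ofReal (dist x y ^ (-α)) ∂μ ∂μ := by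
  rw [rieszMeasure, withDensity_apply', ← Measure.prod_restrict, lintegral_prod]
  fun_prop

theorem rieszMeasure_prod_comm (A B : Set X) :
    rieszMeasure μ α (A ×ˢ B) = rieszMeasure μ α (B ×ˢ A) := by
  have hswap : ∫⁻ x in A, ∫⁻ y in B, ENNReal.ofReal (dist x y ^ (-α)) ∂μ ∂μ =
      ∫⁻ y in B, ∫⁻ x in A, ENNReal.ofReal (dist x y ^ (-α)) ∂μ ∂μ :=
    lintegral_lintegral_swap (μ := μ.restrict A) (ν := μ.restrict B) (by fun_prop)
  rw [rieszMeasure_prod, hswap, rieszMeasure_prod]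
  simp only [dist_comm]

theorem rieszMeasure_crossingPairs_ne_top {U : Set X} (h : rieszMeasure μ α (U ×ˢ Uᶜ) ≠ ∞) :
    rieszMeasure μ α (crossingPairs U) ≠ ∞ :=
  measure_union_ne_top h ((rieszMeasure_prod_comm Uᶜ U).trans_ne h)

end Metric

open Module

variable {V : Type*} [NormedAddCommGroup V] [NormedSpace ℝ V] [FiniteDimensional ℝ V]
  [MeasurableSpace V] [BorelSpace V] {μ : Measure V} [μ.IsAddHaarMeasure] {s : ℝ}

theorem integrable_min_norm_one_mul_rpow [Nontrivial V] (hs : s ∈ Ioo (0 : ℝ) 1) :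
    Integrable (fun z : V => min ‖z‖ 1 * ‖z‖ ^ (-(finrank ℝ V + s))) μ := by
  have hpow {r : ℝ} (hr : 0 < r) :
      r ^ (finrank ℝ V - 1) * r ^ (-(finrank ℝ V + s)) = r ^ (-1 - s) := by
    rw [← Real.rpow_natCast, ← Real.rpow_add hr, Nat.cast_pred finrank_pos]
    ring_nf
  refine (integrable_fun_norm_addHaar μ
    (f := fun r : ℝ => min r 1 * r ^ (-(finrank ℝ V + s)))).2 ?_
  simp only [smul_eq_mul]
  rw [← Ioc_union_Ioi_eq_Ioi zero_le_one]
  refine IntegrableOn.union ?_ ?_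
  · have hnear : IntegrableOn (fun r : ℝ => r ^ (-s)) (Ioc 0 1) :=
      (integrableOn_Ioc_iff_integrableOn_Ioo (by simp)).2 <|
        (intervalIntegral.integrableOn_Ioo_rpow_iff one_pos).2 (by linarith [hs.2])
    refine hnear.congr_fun (fun r hr => ?_) measurableSet_Ioc
    beta_reduce
    rw [mul_left_comm, hpow hr.1, min_eq_left hr.2,
      ← Real.rpow_one_add' hr.1.le (by linarith [hs.1])]
    ring_nf
  · have hfar : IntegrableOn (fun r : ℝ => r ^ (-1 - s)) (Ioi 1) :=
      integrableOn_Ioi_rpow_of_lt (by linarith [hs.1]) one_pos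
    refine hfar.congr_fun (fun r hr => ?_) measurableSet_Ioi
    beta_reduce
    rw [mul_left_comm, hpow (one_pos.trans hr), min_eq_right (le_of_lt hr), one_mul]

theorem lintegral_min_edist_one_rieszMeasure {α : ℝ} (A : Set V) :
    ∫⁻ p in A ×ˢ univ, min (edist p.1 p.2) 1 ∂rieszMeasure μ α =
      (∫⁻ z, ENNReal.ofReal (min ‖z‖ 1 * ‖z‖ ^ (-α)) ∂μ) * μ A := by
  have hinner (x : V) : ∫⁻ y, ENNReal.ofReal (dist x y ^ (-α)) * min (edist x y) 1 ∂μ =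
      ∫⁻ z, ENNReal.ofReal (min ‖z‖ 1 * ‖z‖ ^ (-α)) ∂μ := by
    rw [← lintegral_sub_left_eq_self (fun z : V => ENNReal.ofReal (min ‖z‖ 1 * ‖z‖ ^ (-α))) x]
    refine lintegral_congr fun y => ?_
    rw [edist_dist, ← ENNReal.ofReal_one, ← ENNReal.ofReal_min,
      ← ENNReal.ofReal_mul (by positivity), dist_eq_norm, mul_comm]
  rw [rieszMeasure, restrict_withDensity',
    lintegral_withDensity_eq_lintegral_mul _ (by fun_prop) (by fun_prop),
    ← Measure.prod_restrict, lintegral_prod _ (by fun_prop), Measure.restrict_univ]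
  simp only [Pi.mul_apply, hinner, setLIntegral_const]

theorem exists_isOpen_rieszMeasure_crossingPairs_ne_top [Nontrivial V] (hs : s ∈ Ioo (0 : ℝ) 1)
    {K Ω : Set V} (hK : IsCompact K) (hΩ : IsOpen Ω) (hKΩ : K ⊆ Ω) :
    ∃ U, IsOpen U ∧ K ⊆ U ∧ IsCompact (closure U) ∧ closure U ⊆ Ω ∧
      rieszMeasure μ (finrank ℝ V + s) (crossingPairs U) ≠ ∞ := by
  have : ProperSpace V := FiniteDimensional.proper_real V
  have hfin (A : Set V) (hA : IsBounded A) :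
      ∫⁻ p in A ×ˢ univ, min (edist p.1 p.2) 1 ∂(rieszMeasure μ (finrank ℝ V + s)) ≠ ∞ := by
    rw [lintegral_min_edist_one_rieszMeasure]
    exact ENNReal.mul_ne_top (integrable_min_norm_one_mul_rpow hs).lintegral_lt_top.ne
      hA.measure_lt_top.ne
  obtain ⟨U, hUo, hKU, hUc, hUΩ, hU⟩ := exists_isOpen_measure_prod_compl_ne_top hfin hK hΩ hKΩ
  exact ⟨U, hUo, hKU, hUc, hUΩ, rieszMeasure_crossingPairs_ne_top hU⟩

end RieszMeasure

section FractionalPerimeter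

variable {n : ℕ} {s : ℝ} {E U : Set (EuclideanSpace ℝ (Fin n))}

theorem Ls_eq_rieszMeasure_prod (A B : Set (EuclideanSpace ℝ (Fin n))) :
    Ls n s A B = rieszMeasure volume (n + s) (A ×ˢ B) :=
  (rieszMeasure_prod A B).symm

theorem Ps_eq_cutMass (hE : MeasurableSet E) (hU : MeasurableSet U) :
    Ps n s E U = cutMass (rieszMeasure volume (n + s)) (touchingPairs U) E := by
  have hunion : touchingPairs U ∩ E ×ˢ Eᶜ =
      (E ∩ U) ×ˢ (Eᶜ ∩ U) ∪ (E ∩ U) ×ˢ (Eᶜ \ U) ∪ (E \ U) ×ˢ (Eᶜ ∩ U) := by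
    ext p
    simp only [touchingPairs, mem_inter_iff, mem_union, mem_preimage, mem_prod, mem_compl_iff,
      Set.mem_sdiff]
    tauto
  have hinner : Disjoint ((E ∩ U) ×ˢ (Eᶜ ∩ U)) ((E ∩ U) ×ˢ (Eᶜ \ U)) :=
    disjoint_prod.2 (.inr (disjoint_sdiff_self_right.mono_left inter_subset_right))
  have houter : Disjoint ((E ∩ U) ×ˢ (Eᶜ ∩ U) ∪ (E ∩ U) ×ˢ (Eᶜ \ U))
      ((E \ U) ×ˢ (Eᶜ ∩ U)) := by
    have hfst : Disjoint (E ∩ U) (E \ U) :=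
      disjoint_sdiff_self_right.mono_left inter_subset_right
    exact (disjoint_prod.2 (.inl hfst)).union_left (disjoint_prod.2 (.inl hfst))
  rw [cutMass, hunion, measure_union houter ((hE.diff hU).prod (hE.compl.inter hU)),
    measure_union hinner ((hE.inter hU).prod (hE.compl.diff hU))]
  simp only [Ps, Ls_eq_rieszMeasure_prod]

theorem sMinimal_iff (hE : MeasurableSet E) (hU : MeasurableSet U) :
    SMinimal n s E U ↔ cutMass (rieszMeasure volume (n + s)) (touchingPairs U) E ≠ ∞ ∧
      IsCutMinimal volume (rieszMeasure volume (n + s)) U E := by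
  rw [SMinimal, Ps_eq_cutMass hE hU, lt_top_iff_ne_top]
  refine and_congr_right' (forall₂_congr fun F hF => ?_)
  rw [measure_symmDiff_eq_zero_iff, Ps_eq_cutMass hF hU]

end FractionalPerimeter

/-- Corollary 1.12: compactness of locally `s`-minimal sets in any open set:
a local-in-measure limit of locally `s`-minimal sets is locally `s`-minimal, and the
`s`-perimeters converge in every compactly contained open subset. -/
theorem locSMinimal_compactness
    (n : ℕ) (hn : 1 ≤ n) (s : ℝ) (hs : s ∈ Set.Ioo (0 : ℝ) 1)
    (Ω : Set (EuclideanSpace ℝ (Fin n))) (hΩ : IsOpen Ω)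
    (Eh : ℕ → Set (EuclideanSpace ℝ (Fin n))) (hEh : ∀ h, MeasurableSet (Eh h))
    (hmin : ∀ h, LocSMinimal n s (Eh h) Ω)
    (E : Set (EuclideanSpace ℝ (Fin n))) (hE : MeasurableSet E)
    (hconv : LocConv n Eh E) :
    LocSMinimal n s E Ω ∧
      ∀ Ω' : Set (EuclideanSpace ℝ (Fin n)), IsOpen Ω' → IsCompact (closure Ω') →
        closure Ω' ⊆ Ω →
        Tendsto (fun h => Ps n s (Eh h) Ω') atTop (𝓝 (Ps n s E Ω')) := by
  have : NeZero n := ⟨Nat.one_le_iff_ne_zero.1 hn⟩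
  have hν : rieszMeasure (volume : Measure (EuclideanSpace ℝ (Fin n))) (n + s) ≪
      volume.prod volume :=
    rieszMeasure_absolutelyContinuous
  suffices hlocal : ∀ Ω', IsOpen Ω' → IsCompact (closure Ω') → closure Ω' ⊆ Ω →
      SMinimal n s E Ω' ∧ Tendsto (fun h => Ps n s (Eh h) Ω') atTop (𝓝 (Ps n s E Ω')) from
    ⟨fun Ω' ho hc hsub => (hlocal Ω' ho hc hsub).1, fun Ω' ho hc hsub => (hlocal Ω' ho hc hsub).2⟩
  intro Ω' hΩ' hcpt hsub
  obtain ⟨U, hUo, hcU, hUc, hUΩ, hcross⟩ :=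
    exists_isOpen_rieszMeasure_crossingPairs_ne_top (μ := volume) hs hcpt hΩ hsub
  rw [finrank_euclideanSpace_fin] at hcross
  have hΩ'U : Ω' ⊆ U := subset_closure.trans hcU
  have hminU h := ((sMinimal_iff (hEh h) hUo.measurableSet).1 (hmin h U hUo hUc hUΩ)).2
  have hEU := IsCutMinimal.of_vanishesLocally hν hUo.measurableSet hcross hEh hminU hE hconv
  have hfin := hEU.cutMass_ne_top hUo.measurableSet hcross hE
  simp only [sMinimal_iff hE hΩ'.measurableSet, Ps_eq_cutMass (hEh _) hΩ'.measurableSet,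
    Ps_eq_cutMass hE hΩ'.measurableSet]
  exact ⟨⟨ne_top_of_le_ne_top hfin (cutMass_mono (touchingPairs_mono hΩ'U)),
    hEU.mono hν hΩ'U hΩ'.measurableSet hfin⟩,
    tendsto_cutMass hν hUo.measurableSet hcross hEh hminU hE hconv
      (measurableSet_touchingPairs hΩ'.measurableSet) (touchingPairs_mono hΩ'U)⟩
end
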